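/- arXiv:1407.7422 — 2 statements merged into one kernel-verified Lean document; each statement's English description precedes it below -/
import Mathlib

section
/- Let 1 < q < p. For every open bounded convex set Ω ⊂ ℝ^N and every open ball B ⊂ ℝ^N one has μ_{p,q}(Ω) ≥ (π_p / (|B|^{1/q − 1/p} · diam(B)))^p · (diam(B)/diam(Ω))^{p + Np/q − N}. -/
open MeasureTheory Metric Set Real

noncomputable section

/-- The Rayleigh quotient `(∫_Ω |∇v|^p) / (∫_Ω |v|^q)^(p/q)`, where the gradient is
understood as the (a.e. defined) Fréchet derivative. -/
def rayleighQuot {N : ℕ} (p q : ℝ) (Ω : Set (EuclideanSpace ℝ (Fin N)))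
    (v : EuclideanSpace ℝ (Fin N) → ℝ) : ℝ :=
  (∫ x in Ω, ‖fderiv ℝ v x‖ ^ p) / (∫ x in Ω, |v x| ^ q) ^ (p / q)

/-- The first (generalized) Dirichlet eigenvalue `λ_{p,q}(Ω)`: infimum of the Rayleigh
quotient over nontrivial smooth functions compactly supported in `Ω`. -/
def lambdaPQ {N : ℕ} (p q : ℝ) (Ω : Set (EuclideanSpace ℝ (Fin N))) : ℝ :=
  sInf { R : ℝ | ∃ v : EuclideanSpace ℝ (Fin N) → ℝ,
    ContDiff ℝ (⊤ : ℕ∞) v ∧ HasCompactSupport v ∧ tsupport v ⊆ Ω ∧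
    (∃ x ∈ Ω, v x ≠ 0) ∧ R = rayleighQuot p q Ω v }

/-- The first nontrivial (generalized) Neumann eigenvalue `μ_{p,q}(Ω)`: infimum of the
Rayleigh quotient over nontrivial Lipschitz functions on the closure of `Ω` satisfying
the constraint `∫_Ω |v|^(q-2) v = 0`. -/
def muPQ {N : ℕ} (p q : ℝ) (Ω : Set (EuclideanSpace ℝ (Fin N))) : ℝ :=
  sInf { R : ℝ | ∃ v : EuclideanSpace ℝ (Fin N) → ℝ, ∃ K : NNReal,
    LipschitzOnWith K v (closure Ω) ∧ (∃ x ∈ Ω, v x ≠ 0) ∧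
    (∫ x in Ω, |v x| ^ (q - 2) * v x) = 0 ∧ R = rayleighQuot p q Ω v }

/-- `q` is below the critical Sobolev exponent `p* = Np/(N-p)` (with `p* = ∞` if `p ≥ N`). -/
def ltCritical (N : ℕ) (p q : ℝ) : Prop := p < N → q < N * p / (N - p)

end

/-- The constant `π_p = 2 (p-1)^(1/p) (π/p) / sin(π/p)`. -/
noncomputable def piP (p : ℝ) : ℝ := 2 * (p - 1) ^ (1 / p) * (π / p) / Real.sin (π / p)

/-!
The Prékopa–Leindler inequality supplies both geometric inputs: applied to `Ω` and `-Ω` it yields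
the isodiametric inequality, and it makes the marginals of convex sets log-concave.
By Payne–Weinberger bisection, a failure of the `p`-Poincaré inequality with constant
`(π_p / diam Ω)^p` would persist on convex pieces of `Ω` arbitrarily close to a segment, hence for
a log-concave weight `h` on an interval. There, for a suitable `s`, the tilted weight
`e^(-st) h(t)` increases up to a point and decreases after it, and supersolutions of the Riccati
equation associated with the weight `e^(st)` exist on both sides of that point; they rule the
failure out.
Mollification extends the inequality to Lipschitz functions, Jensen's inequality lowers the exponent
from `p` to `q`, and the isodiametric inequality compares `|Ω|` with `|B|`.
-/

open scoped Pointwise ENNReal NNReal Topology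

lemma volume_add_le_volume_add_of_isCompact {A B : Set ℝ} (hA : IsCompact A) (hB : IsCompact B)
    (hA₀ : A.Nonempty) (hB₀ : B.Nonempty) : volume A + volume B ≤ volume (A + B) := by
  obtain ⟨a, ha, ha_max⟩ := hA.exists_isGreatest hA₀
  obtain ⟨b, hb, hb_min⟩ := hB.exists_isLeast hB₀
  have hinter : volume ((b +ᵥ A) ∩ (a +ᵥ B)) = 0 := by
    refine measure_mono_null (t := {a + b}) ?_ (measure_singleton _)
    rintro _ ⟨⟨x, hx, rfl⟩, y, hy, hxy⟩
    have := ha_max hx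
    have := hb_min hy
    simp only [vadd_eq_add, mem_singleton_iff] at hxy ⊢
    linarith
  calc volume A + volume B = volume (b +ᵥ A) + volume (a +ᵥ B) := by simp only [measure_vadd]
    _ = volume ((b +ᵥ A) ∪ (a +ᵥ B)) := by
      rw [← measure_union_add_inter _ (hB.measurableSet.const_vadd a), hinter, add_zero]
    _ ≤ volume (A + B) := by
      refine measure_mono (union_subset ?_ ?_)
      · rintro _ ⟨x, hx, rfl⟩
        exact ⟨x, hx, b, hb, add_comm _ _⟩
      · rintro _ ⟨y, hy, rfl⟩
        exact ⟨a, ha, y, hy, rfl⟩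

lemma volume_add_le_volume_add {A B : Set ℝ} (hA : MeasurableSet A) (hB : MeasurableSet B)
    (hA₀ : A.Nonempty) (hB₀ : B.Nonempty) : volume A + volume B ≤ volume (A + B) := by
  obtain ⟨a, ha⟩ := hA₀
  obtain ⟨b, hb⟩ := hB₀
  rw [hA.measure_eq_iSup_isCompact, hB.measure_eq_iSup_isCompact]
  simp only [iSup_and']
  refine ENNReal.biSup_add_biSup_le' ⟨∅, empty_subset _, isCompact_empty⟩
    ⟨∅, empty_subset _, isCompact_empty⟩ fun K ⟨hKA, hK⟩ L ⟨hLB, hL⟩ => ?_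
  calc volume K + volume L ≤ volume (insert a K) + volume (insert b L) := by
        gcongr <;> exact subset_insert _ _
    _ ≤ volume (insert a K + insert b L) :=
        volume_add_le_volume_add_of_isCompact (hK.insert a) (hL.insert b) (insert_nonempty _ _)
          (insert_nonempty _ _)
    _ ≤ volume (A + B) :=
        measure_mono (add_subset_add (insert_subset ha hKA) (insert_subset hb hLB))

lemma lintegral_min_eq_mul_lintegral_meas_lt {X : Type*} [MeasurableSpace X] (μ : Measure X)
    {f : X → ℝ≥0∞} (hf : Measurable f) {F : ℝ≥0∞} (hF₀ : F ≠ 0) (hF : F ≠ ∞) :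
    ∫⁻ x, min (f x) F ∂μ = F * ∫⁻ s in Ioo (0 : ℝ) 1, μ {x | F * ENNReal.ofReal s < f x} := by
  set φ : X → ℝ := fun x => (min (f x / F) 1).toReal
  have hφ_top (x) : min (f x / F) 1 ≠ ∞ := ne_top_of_le_ne_top ENNReal.one_ne_top (min_le_right _ _)
  have hφ_meas : Measurable φ := ((hf.div_const F).min measurable_const).ennreal_toReal
  have hlevel {s : ℝ} (hs : s ∈ Ioo (0 : ℝ) 1) :
      {x | s < φ x} = {x | F * ENNReal.ofReal s < f x} := by
    ext x
    rw [mem_ofPred_eq, mem_ofPred_eq, ← ENNReal.ofReal_lt_iff_lt_toReal hs.1.le (hφ_top x),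
      lt_min_iff, ENNReal.lt_div_iff_mul_lt (.inl hF₀) (.inl hF), mul_comm, and_iff_left]
    exact ENNReal.ofReal_lt_one.2 hs.2
  have hempty {s : ℝ} (hs : 1 ≤ s) : μ {x | s < φ x} = 0 := by
    have hφ_one (x) : φ x ≤ 1 := ENNReal.toReal_mono ENNReal.one_ne_top (min_le_right _ _)
    simp [fun x => ((hφ_one x).trans hs).not_gt]
  calc ∫⁻ x, min (f x) F ∂μ = ∫⁻ x, F * ENNReal.ofReal (φ x) ∂μ := by
        refine lintegral_congr fun x => ?_
        rw [ENNReal.ofReal_toReal (hφ_top x), mul_min, mul_one, ENNReal.mul_div_cancel hF₀ hF]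
    _ = F * ∫⁻ s in Ioi 0, μ {x | s < φ x} := by
        rw [lintegral_const_mul _ hφ_meas.ennreal_ofReal, lintegral_eq_lintegral_meas_lt μ
          (.of_forall fun _ => ENNReal.toReal_nonneg) hφ_meas.aemeasurable]
    _ = F * ∫⁻ s in Ioo 0 1, μ {x | s < φ x} := by
        rw [← Ioo_union_Ici_eq_Ioi one_pos, lintegral_union measurableSet_Ici
          (Set.disjoint_left.2 fun _ h h' => h.2.not_ge h'),
          setLIntegral_congr_fun measurableSet_Ici fun s hs => hempty hs, lintegral_zero, add_zero]
    _ = _ := by rw [setLIntegral_congr_fun measurableSet_Ioo fun s hs => by rw [hlevel hs]]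

lemma rpow_mul_rpow_le_ofReal_mul_add {t : ℝ} (ht : t ∈ Ioo (0 : ℝ) 1) (a b : ℝ≥0∞) :
    a ^ (1 - t) * b ^ t ≤ ENNReal.ofReal (1 - t) * a + ENNReal.ofReal t * b := by
  have hs : 0 < 1 - t := sub_pos.2 ht.2
  have hconj : (1 - t)⁻¹.HolderConjugate t⁻¹ :=
    Real.HolderConjugate.inv_inv hs ht.1 (sub_add_cancel 1 t)
  have := ENNReal.young_inequality (a ^ (1 - t)) (b ^ t) hconj
  rwa [ENNReal.rpow_rpow_inv hs.ne', ENNReal.rpow_rpow_inv ht.1.ne', ENNReal.ofReal_inv_of_pos hs,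
    ENNReal.ofReal_inv_of_pos ht.1, div_eq_mul_inv, div_eq_mul_inv, inv_inv, inv_inv,
    mul_comm a, mul_comm b] at this

section PrekopaLeindler

/-- `μ` satisfies the Prékopa–Leindler inequality, the functional form of the multiplicative
Brunn–Minkowski inequality. It is stated as a property of a measure so that it can be
transported along linear maps and tensorised. -/
def PrekopaLeindler {E : Type*} [AddCommGroup E] [Module ℝ E] [MeasurableSpace E]
    (μ : Measure E) : Prop :=
  ∀ ⦃f g h : E → ℝ≥0∞⦄, Measurable f → Measurable g → Measurable h →
    ∀ ⦃t : ℝ⦄, t ∈ Ioo (0 : ℝ) 1 →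
      (∀ x y, f x ^ (1 - t) * g y ^ t ≤ h ((1 - t) • x + t • y)) →
        (∫⁻ x, f x ∂μ) ^ (1 - t) * (∫⁻ x, g x ∂μ) ^ t ≤ ∫⁻ x, h x ∂μ

lemma ofReal_mul_volume_add_le {A B C : Set ℝ} (hA : MeasurableSet A) (hB : MeasurableSet B)
    (hA₀ : A.Nonempty) (hB₀ : B.Nonempty) {t : ℝ} (ht : t ∈ Ioo (0 : ℝ) 1)
    (hC : ∀ x ∈ A, ∀ y ∈ B, (1 - t) • x + t • y ∈ C) :
    ENNReal.ofReal (1 - t) * volume A + ENNReal.ofReal t * volume B ≤ volume C := by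
  have hsmul {s : ℝ} (hs : 0 ≤ s) (D : Set ℝ) :
      ENNReal.ofReal s * volume D = volume (s • D) := by
    simp [Measure.addHaar_smul, abs_of_nonneg hs]
  rw [hsmul (sub_nonneg.2 ht.2.le), hsmul ht.1.le]
  refine (volume_add_le_volume_add (hA.const_smul₀ _) (hB.const_smul₀ _) hA₀.smul_set
    hB₀.smul_set).trans (measure_mono ?_)
  rintro _ ⟨_, ⟨x, hx, rfl⟩, _, ⟨y, hy, rfl⟩, rfl⟩
  exact hC x hx y hy

lemma measurable_meas_mul_ofReal_lt {X : Type*} [MeasurableSpace X] (μ : Measure X)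
    (f : X → ℝ≥0∞) (F : ℝ≥0∞) : Measurable fun s : ℝ => μ {x | F * ENNReal.ofReal s < f x} :=
  Antitone.measurable fun _ _ hab => measure_mono fun _ hx =>
    (mul_le_mul_right (ENNReal.ofReal_le_ofReal hab) F).trans_lt hx

lemma nonempty_iSup_mul_ofReal_lt {X : Type*} {f : X → ℝ≥0∞} (hf₀ : ⨆ x, f x ≠ 0)
    (hf : ⨆ x, f x ≠ ∞) {s : ℝ} (hs : s < 1) :
    {x | (⨆ x, f x) * ENNReal.ofReal s < f x}.Nonempty :=
  lt_iSup_iff.1 <| ENNReal.mul_lt_of_lt_div' <| by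
    rw [ENNReal.div_self hf₀ hf]
    exact ENNReal.ofReal_lt_one.2 hs

lemma ofReal_mul_volume_superlevel_add_le {f g h : ℝ → ℝ≥0∞} (hf : Measurable f)
    (hg : Measurable g) {t : ℝ} (ht : t ∈ Ioo (0 : ℝ) 1)
    (hfgh : ∀ x y, f x ^ (1 - t) * g y ^ t ≤ h ((1 - t) • x + t • y)) {F G a : ℝ≥0∞}
    (hF : {x | F * a < f x}.Nonempty) (hG : {x | G * a < g x}.Nonempty) :
    ENNReal.ofReal (1 - t) * volume {x | F * a < f x} +
      ENNReal.ofReal t * volume {x | G * a < g x} ≤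
        volume {x | F ^ (1 - t) * G ^ t * a < h x} := by
  have hs : 0 < 1 - t := sub_pos.2 ht.2
  refine ofReal_mul_volume_add_le (measurableSet_lt measurable_const hf)
    (measurableSet_lt measurable_const hg) hF hG ht fun x hx y hy => lt_of_lt_of_le ?_ (hfgh x y)
  calc F ^ (1 - t) * G ^ t * a = (F * a) ^ (1 - t) * (G * a) ^ t := by
        rw [ENNReal.mul_rpow_of_nonneg _ _ hs.le, ENNReal.mul_rpow_of_nonneg _ _ ht.1.le,
          mul_mul_mul_comm, ← ENNReal.rpow_add_of_nonneg _ _ hs.le ht.1.le, sub_add_cancel,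
          ENNReal.rpow_one]
    _ < f x ^ (1 - t) * g y ^ t :=
        ENNReal.mul_lt_mul (ENNReal.rpow_lt_rpow hx hs) (ENNReal.rpow_lt_rpow hy ht.1)

/- Heights are measured relative to the suprema, so that the superlevel sets of `f` and `g` at a
common height below `1` are both nonempty and the one-dimensional Brunn–Minkowski inequality
applies to them. -/
lemma lintegral_rpow_mul_lintegral_rpow_le_of_iSup_ne_top {f g h : ℝ → ℝ≥0∞} (hf : Measurable f)
    (hg : Measurable g) (hh : Measurable h) (hF : ⨆ x, f x ≠ ∞) (hG : ⨆ x, g x ≠ ∞) {t : ℝ}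
    (ht : t ∈ Ioo (0 : ℝ) 1) (hfgh : ∀ x y, f x ^ (1 - t) * g y ^ t ≤ h ((1 - t) • x + t • y)) :
    (∫⁻ x, f x) ^ (1 - t) * (∫⁻ x, g x) ^ t ≤ ∫⁻ x, h x := by
  have hs : 0 < 1 - t := sub_pos.2 ht.2
  rcases eq_or_ne (⨆ x, f x) 0 with hF₀ | hF₀
  · simp [ENNReal.iSup_eq_zero.1 hF₀, hs]
  rcases eq_or_ne (⨆ x, g x) 0 with hG₀ | hG₀
  · simp [ENNReal.iSup_eq_zero.1 hG₀, ht.1]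
  have hlayer {k : ℝ → ℝ≥0∞} (hk : Measurable k) (h₀ : ⨆ x, k x ≠ 0) (h₁ : ⨆ x, k x ≠ ∞) :
      ∫⁻ x, k x =
        (⨆ x, k x) * ∫⁻ s in Ioo (0 : ℝ) 1, volume {x | (⨆ x, k x) * ENNReal.ofReal s < k x} := by
    rw [← lintegral_min_eq_mul_lintegral_meas_lt volume hk h₀ h₁]
    exact lintegral_congr fun x => (min_eq_left (le_iSup k x)).symm
  set F := ⨆ x, f x
  set G := ⨆ x, g x
  set c := F ^ (1 - t) * G ^ t
  have hc₀ : c ≠ 0 := by simp [c, ENNReal.rpow_eq_zero_iff, hF₀, hG₀, hF, hG]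
  have hc : c ≠ ∞ := ENNReal.mul_ne_top (ENNReal.rpow_ne_top_of_nonneg hs.le hF)
    (ENNReal.rpow_ne_top_of_nonneg ht.1.le hG)
  calc (∫⁻ x, f x) ^ (1 - t) * (∫⁻ x, g x) ^ t
      = c * ((∫⁻ s in Ioo (0 : ℝ) 1, volume {x | F * ENNReal.ofReal s < f x}) ^ (1 - t) *
          (∫⁻ s in Ioo (0 : ℝ) 1, volume {x | G * ENNReal.ofReal s < g x}) ^ t) := by
        rw [hlayer hf hF₀ hF, hlayer hg hG₀ hG, ENNReal.mul_rpow_of_nonneg _ _ hs.le,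
          ENNReal.mul_rpow_of_nonneg _ _ ht.1.le, mul_mul_mul_comm]
    _ ≤ c * ∫⁻ s in Ioo (0 : ℝ) 1, volume {x | c * ENNReal.ofReal s < h x} := by
        refine mul_le_mul_right ((rpow_mul_rpow_le_ofReal_mul_add ht _ _).trans ?_) c
        have hmeas := measurable_meas_mul_ofReal_lt (volume : Measure ℝ)
        rw [← lintegral_const_mul _ (hmeas f F), ← lintegral_const_mul _ (hmeas g G),
          ← lintegral_add_left ((hmeas f F).const_mul _)]
        exact setLIntegral_mono' measurableSet_Ioo fun s hs' =>
          ofReal_mul_volume_superlevel_add_le hf hg ht hfgh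
            (nonempty_iSup_mul_ofReal_lt hF₀ hF hs'.2) (nonempty_iSup_mul_ofReal_lt hG₀ hG hs'.2)
    _ ≤ ∫⁻ x, h x := by
        rw [← lintegral_min_eq_mul_lintegral_meas_lt volume hh hc₀ hc]
        exact lintegral_mono fun x => min_le_left _ _

theorem prekopaLeindler_volume_real : PrekopaLeindler (volume : Measure ℝ) := by
  intro f g h hf hg hh t ht hfgh
  have hs : 0 < 1 - t := sub_pos.2 ht.2
  rcases eq_or_ne (∫⁻ x, f x) 0 with hf₀ | hf₀
  · simp [hf₀, hs]
  rcases eq_or_ne (∫⁻ x, g x) 0 with hg₀ | hg₀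
  · simp [hg₀, ht.1]
  have htrunc {k : ℝ → ℝ≥0∞} (hk : Measurable k) :
      Filter.Tendsto (fun n : ℕ => ∫⁻ x, min (k x) n) Filter.atTop (𝓝 (∫⁻ x, k x)) :=
    lintegral_tendsto_of_tendsto_of_monotone (fun n => (hk.min measurable_const).aemeasurable)
      (.of_forall fun x n m hnm => min_le_min le_rfl (by exact_mod_cast hnm))
      (.of_forall fun x => by
        simpa using (tendsto_const_nhds (x := k x)).min ENNReal.tendsto_nat_nhds_top)
  have hbdd (k : ℝ → ℝ≥0∞) (n : ℕ) : ⨆ x, min (k x) n ≠ ∞ :=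
    ne_top_of_le_ne_top (ENNReal.natCast_ne_top n) (iSup_le fun _ => min_le_right _ _)
  refine le_of_tendsto (ENNReal.Tendsto.mul
    ((ENNReal.continuous_rpow_const (y := 1 - t)).continuousAt.tendsto.comp (htrunc hf))
    (.inl (by simp [ENNReal.rpow_eq_zero_iff, hf₀, ht.2.le]))
    ((ENNReal.continuous_rpow_const (y := t)).continuousAt.tendsto.comp (htrunc hg))
    (.inl (by simp [ENNReal.rpow_eq_zero_iff, hg₀, ht.1.le]))) (.of_forall fun n => ?_)
  refine lintegral_rpow_mul_lintegral_rpow_le_of_iSup_ne_top (hf.min measurable_const)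
    (hg.min measurable_const) hh (hbdd f n) (hbdd g n) ht fun x y => (hfgh x y).trans' ?_
  gcongr
  · exact min_le_left _ _
  · exact ht.1.le
  · exact min_le_left _ _

variable {E F : Type*} [AddCommGroup E] [Module ℝ E] [MeasurableSpace E]
  [AddCommGroup F] [Module ℝ F] [MeasurableSpace F]

lemma PrekopaLeindler.prod {μ : Measure E} {ν : Measure F} [SFinite ν]
    (hμ : PrekopaLeindler μ) (hν : PrekopaLeindler ν) : PrekopaLeindler (μ.prod ν) := by
  intro f g h hf hg hh t ht hfgh
  rw [lintegral_prod _ hf.aemeasurable, lintegral_prod _ hg.aemeasurable,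
    lintegral_prod _ hh.aemeasurable]
  refine hμ hf.lintegral_prod_right' hg.lintegral_prod_right' hh.lintegral_prod_right' ht
    fun x y => ?_
  exact hν (hf.comp measurable_prodMk_left) (hg.comp measurable_prodMk_left)
    (hh.comp measurable_prodMk_left) ht fun a b => hfgh (x, a) (y, b)

lemma PrekopaLeindler.map {μ : Measure E} (hμ : PrekopaLeindler μ) (L : E →ₗ[ℝ] F)
    (hL : Measurable L) : PrekopaLeindler (μ.map L) := by
  intro f g h hf hg hh t ht hfgh
  rw [lintegral_map hf hL, lintegral_map hg hL, lintegral_map hh hL]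
  refine hμ (hf.comp hL) (hg.comp hL) (hh.comp hL) ht fun x y => ?_
  simpa only [Function.comp_apply, map_add, map_smul] using hfgh (L x) (L y)

lemma PrekopaLeindler.smul {μ : Measure E} (hμ : PrekopaLeindler μ) (c : ℝ≥0) :
    PrekopaLeindler (c • μ) := by
  intro f g h hf hg hh t ht hfgh
  have hs : 0 < 1 - t := sub_pos.2 ht.2
  simp only [lintegral_smul_measure, ENNReal.smul_def, smul_eq_mul]
  calc ((c : ℝ≥0∞) * ∫⁻ x, f x ∂μ) ^ (1 - t) * (c * ∫⁻ x, g x ∂μ) ^ t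
      = c * ((∫⁻ x, f x ∂μ) ^ (1 - t) * (∫⁻ x, g x ∂μ) ^ t) := by
        rw [ENNReal.mul_rpow_of_nonneg _ _ hs.le, ENNReal.mul_rpow_of_nonneg _ _ ht.1.le,
          mul_mul_mul_comm, ← ENNReal.rpow_add_of_nonneg _ _ hs.le ht.1.le, sub_add_cancel,
          ENNReal.rpow_one]
    _ ≤ c * ∫⁻ x, h x ∂μ := mul_le_mul_right (hμ hf hg hh ht hfgh) _

lemma PrekopaLeindler.measure_rpow_mul_le {μ : Measure E} (hμ : PrekopaLeindler μ) {A B C : Set E}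
    (hA : MeasurableSet A) (hB : MeasurableSet B) (hC : MeasurableSet C) {t : ℝ}
    (ht : t ∈ Ioo (0 : ℝ) 1) (hABC : ∀ x ∈ A, ∀ y ∈ B, (1 - t) • x + t • y ∈ C) :
    μ A ^ (1 - t) * μ B ^ t ≤ μ C := by
  simp only [← lintegral_indicator_one hA, ← lintegral_indicator_one hB,
    ← lintegral_indicator_one hC]
  refine hμ (measurable_one.indicator hA) (measurable_one.indicator hB)
    (measurable_one.indicator hC) ht fun x y => ?_
  by_cases hx : x ∈ A
  · by_cases hy : y ∈ B
    · simp [hx, hy, hABC x hx y hy]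
    · simp [hy, ht.1]
  · simp [hx, ht.2]

end PrekopaLeindler

section AddHaar

variable {E : Type*} [NormedAddCommGroup E] [NormedSpace ℝ E] [FiniteDimensional ℝ E]
  [MeasurableSpace E] [BorelSpace E]

lemma PrekopaLeindler.of_continuousLinearEquiv {F : Type*} [NormedAddCommGroup F]
    [NormedSpace ℝ F] [MeasurableSpace F] [BorelSpace F] {ν : Measure F} [ν.IsAddHaarMeasure]
    (hν : PrekopaLeindler ν) (L : F ≃L[ℝ] E) (μ : Measure E) [μ.IsAddHaarMeasure] :
    PrekopaLeindler μ := by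
  rw [Measure.isAddLeftInvariant_eq_smul μ (ν.map L)]
  exact (hν.map L.toLinearMap L.continuous.measurable).smul _

theorem prekopaLeindler_addHaar (μ : Measure E) [μ.IsAddHaarMeasure] : PrekopaLeindler μ := by
  have hpi (n : ℕ) : PrekopaLeindler (volume : Measure (Fin n → ℝ)) := by
    induction n with
    | zero =>
      intro f g h _ _ _ t _ hfgh
      simpa only [volume_pi, Measure.pi_of_empty (x := default), lintegral_dirac] using
        (hfgh default default).trans_eq (congrArg h (Subsingleton.elim _ _))
    | succ n ih =>
      exact (prekopaLeindler_volume_real.prod ih).of_continuousLinearEquiv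
        (.ofFinrankEq (by simp [add_comm])) _
  exact (hpi (Module.finrank ℝ E)).of_continuousLinearEquiv (.ofFinrankEq (by simp)) μ

theorem measure_le_measure_closedBall_half_diam (μ : Measure E) [μ.IsAddHaarMeasure] {s : Set E}
    (hs : Bornology.IsBounded s) : μ s ≤ μ (closedBall 0 (diam s / 2)) := by
  have hcl : MeasurableSet (closure s) := isClosed_closure.measurableSet
  have hmid : ∀ x ∈ closure s, ∀ y ∈ -closure s,
      (1 - 1 / 2 : ℝ) • x + (1 / 2 : ℝ) • y ∈ closedBall (0 : E) (diam s / 2) := by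
    intro x hx y hy
    rw [mem_closedBall_zero_iff,
      show (1 - 1 / 2 : ℝ) • x + (1 / 2 : ℝ) • y = (1 / 2 : ℝ) • (x - -y) by module, norm_smul,
      ← dist_eq_norm]
    have := dist_le_diam_of_mem hs.closure hx hy
    rw [diam_closure] at this
    norm_num
    linarith
  have hBM := (prekopaLeindler_addHaar μ).measure_rpow_mul_le hcl hcl.neg
    measurableSet_closedBall (t := 1 / 2) (by norm_num) hmid
  rw [Measure.measure_neg, ← ENNReal.rpow_add_of_nonneg _ _ (by norm_num) (by norm_num),
    sub_add_cancel, ENNReal.rpow_one] at hBM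
  exact (measure_mono subset_closure).trans hBM

lemma measureReal_le_measureReal_ball_mul_diam_div_pow (μ : Measure E) [μ.IsAddHaarMeasure]
    {s : Set E} (hs : Bornology.IsBounded s) (c : E) {r : ℝ} (hr : 0 < r) :
    μ.real s ≤ μ.real (ball c r) * (diam s / (2 * r)) ^ Module.finrank ℝ E := by
  refine (ENNReal.toReal_mono measure_closedBall_lt_top.ne
    (measure_le_measure_closedBall_half_diam μ hs)).trans_eq ?_
  rw [measureReal_def, Measure.addHaar_closedBall μ _ (by positivity),
    Measure.addHaar_ball_of_pos μ _ hr,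
    ENNReal.toReal_mul, ENNReal.toReal_mul, ENNReal.toReal_ofReal (by positivity),
    ENNReal.toReal_ofReal (by positivity), mul_right_comm, ← mul_pow,
    show r * (diam s / (2 * r)) = diam s / 2 by field_simp]

end AddHaar

section Marginal

/-- A nonnegative function is log-concave if its logarithm is concave; the multiplicative
formulation allows the value `0`. -/
structure LogConcave {E : Type*} [AddCommGroup E] [Module ℝ E] (h : E → ℝ) : Prop where
  nonneg : ∀ x, 0 ≤ h x
  rpow_mul_rpow_le : ∀ x y, ∀ t ∈ Ioo (0 : ℝ) 1,
    h x ^ (1 - t) * h y ^ t ≤ h ((1 - t) • x + t • y)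

variable {E : Type*} [NormedAddCommGroup E] [NormedSpace ℝ E]

lemma exists_continuousLinearEquiv_prod_ker {ℓ : E →L[ℝ] ℝ} (hℓ : ℓ ≠ 0) :
    ∃ L : E ≃L[ℝ] ℝ × ℓ.ker, ∀ x, (L x).1 = ℓ x := by
  obtain ⟨x, hx⟩ := ContinuousLinearMap.exists_ne_zero hℓ
  refine ⟨.equivOfRightInverse ℓ (.toSpanSingleton ℝ ((ℓ x)⁻¹ • x)) fun t => ?_, fun x => rfl⟩
  simp [hx]

variable [MeasurableSpace E] [BorelSpace E]

lemma LogConcave.measureReal_slice [FiniteDimensional ℝ E] {F : Type*} [AddCommGroup F]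
    [Module ℝ F] (ν : Measure E) [ν.IsAddHaarMeasure] {S : F → Set E}
    (hS : ∀ a, MeasurableSet (S a)) (hSfin : ∀ a, ν (S a) ≠ ∞)
    (hconv : ∀ a b, ∀ t ∈ Ioo (0 : ℝ) 1, ∀ x ∈ S a, ∀ y ∈ S b,
      (1 - t) • x + t • y ∈ S ((1 - t) • a + t • b)) : LogConcave fun a => ν.real (S a) where
  nonneg _ := measureReal_nonneg
  rpow_mul_rpow_le a b t ht := by
    have := ENNReal.toReal_mono (hSfin _) <| (prekopaLeindler_addHaar ν).measure_rpow_mul_le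
      (hS a) (hS b) (hS _) ht (hconv a b t ht)
    rwa [ENNReal.toReal_mul, ← ENNReal.toReal_rpow, ← ENNReal.toReal_rpow] at this

lemma LogConcave.const_mul {F : Type*} [AddCommGroup F] [Module ℝ F] {h : F → ℝ}
    (hh : LogConcave h) {c : ℝ} (hc : 0 ≤ c) : LogConcave fun x => c * h x where
  nonneg x := mul_nonneg hc (hh.nonneg x)
  rpow_mul_rpow_le x y t ht := by
    calc (c * h x) ^ (1 - t) * (c * h y) ^ t
        = c ^ ((1 - t) + t) * (h x ^ (1 - t) * h y ^ t) := by
          rw [mul_rpow hc (hh.nonneg x), mul_rpow hc (hh.nonneg y),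
            rpow_add_of_nonneg hc (sub_nonneg.2 ht.2.le) ht.1.le, mul_mul_mul_comm]
      _ ≤ c * h ((1 - t) • x + t • y) := by
          rw [sub_add_cancel, rpow_one]
          exact mul_le_mul_of_nonneg_left (hh.rpow_mul_rpow_le x y t ht) hc

theorem exists_logConcave_map_restrict_eq_withDensity [FiniteDimensional ℝ E] (μ : Measure E)
    [μ.IsAddHaarMeasure] {K : Set E} (hK : MeasurableSet K) (hKb : Bornology.IsBounded K)
    (hKc : Convex ℝ K) {ℓ : E →L[ℝ] ℝ} (hℓ : ℓ ≠ 0) :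
    ∃ h : ℝ → ℝ, Measurable h ∧ LogConcave h ∧ (∀ t ∉ ℓ '' K, h t = 0) ∧
      (μ.restrict K).map ℓ = volume.withDensity fun t => ENNReal.ofReal (h t) := by
  obtain ⟨L, hL⟩ := exists_continuousLinearEquiv_prod_ker hℓ
  set ν : Measure ℓ.ker := Measure.addHaar
  set c : ℝ≥0 := Measure.addHaarScalarFactor μ (((volume : Measure ℝ).prod ν).map L.symm)
  have hLm : Measurable L.symm := L.symm.continuous.measurable
  have hμ : μ = c • ((volume : Measure ℝ).prod ν).map L.symm :=
    Measure.isAddLeftInvariant_eq_smul μ _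
  have hS (t : ℝ) : MeasurableSet {y | L.symm (t, y) ∈ K} :=
    measurable_prodMk_left (hLm hK)
  have hSfin (t : ℝ) : ν {y | L.symm (t, y) ∈ K} ≠ ∞ := by
    refine ((L.lipschitz.isBounded_image hKb).image_snd.subset ?_).measure_lt_top.ne
    exact fun y hy => ⟨(t, y), ⟨_, hy, L.apply_symm_apply _⟩, rfl⟩
  have hslice : LogConcave fun t : ℝ => ν.real {y | L.symm (t, y) ∈ K} :=
    .measureReal_slice ν hS hSfin fun a b t ht x hx y hy => by
      have := hKc hx hy (sub_nonneg.2 ht.2.le) ht.1.le (sub_add_cancel 1 t)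
      rwa [← map_smul, ← map_smul, ← map_add] at this
  refine ⟨fun t => c * ν.real {y | L.symm (t, y) ∈ K},
    ((measurable_measure_prodMk_left (hLm hK)).ennreal_toReal).const_mul _,
    hslice.const_mul c.2, fun t ht => ?_, ?_⟩
  · have : {y | L.symm (t, y) ∈ K} = ∅ := eq_empty_of_forall_notMem fun y hy =>
      ht ⟨_, hy, by rw [← hL, L.apply_symm_apply]⟩
    simp [this]
  ext T hT
  have hℓT : MeasurableSet (ℓ ⁻¹' T ∩ K) := (ℓ.continuous.measurable hT).inter hK
  rw [Measure.map_apply ℓ.continuous.measurable hT,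
    Measure.restrict_apply (ℓ.continuous.measurable hT), withDensity_apply _ hT, hμ,
    Measure.smul_apply, Measure.map_apply hLm hℓT, Measure.prod_apply (hLm hℓT),
    ← lintegral_indicator hT, ENNReal.smul_def, smul_eq_mul,
    ← lintegral_const_mul _ (measurable_measure_prodMk_left (hLm hℓT))]
  congr 1 with t
  have hpre : Prod.mk t ⁻¹' (L.symm ⁻¹' (ℓ ⁻¹' T ∩ K)) = {y | t ∈ T ∧ L.symm (t, y) ∈ K} := by
    ext y
    simp [← hL]
  by_cases ht : t ∈ T
  · rw [hpre]
    simp [ht, ENNReal.ofReal_mul, ofReal_measureReal (hSfin t)]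
  · rw [hpre]
    simp [ht]

end Marginal

section HalfPeriod

variable {p q : ℝ}

lemma lintegral_ofReal_eq_of_integral_pos {X : Type*} [MeasurableSpace X] {μ : Measure X}
    {f : X → ℝ} (hf : 0 ≤ᵐ[μ] f) (hf' : 0 < ∫ x, f x ∂μ) :
    ∫⁻ x, ENNReal.ofReal (f x) ∂μ = ENNReal.ofReal (∫ x, f x ∂μ) :=
  (ofReal_integral_eq_lintegral_ofReal (.of_integral_ne_zero hf'.ne') hf).symm

lemma lintegral_exp_neg_mul {b : ℝ} (hb : 0 < b) :
    ∫⁻ u in Ioi (0 : ℝ), ENNReal.ofReal (exp (-b * u)) = ENNReal.ofReal (1 / b) := by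
  have h : ∫ u in Ioi (0 : ℝ), exp (-b * u) = 1 / b := by
    rw [integral_exp_mul_Ioi (neg_neg_of_pos hb), mul_zero, exp_zero, neg_div_neg_eq]
  rw [lintegral_ofReal_eq_of_integral_pos (ae_of_all _ fun u => (exp_pos _).le)
    (h ▸ one_div_pos.2 hb), h]

lemma lintegral_exp_neg_mul_rpow {a b : ℝ} (ha : 0 < a) (hb : 0 < b) :
    ∫⁻ x in Ioi (0 : ℝ), ENNReal.ofReal (exp (-b * x ^ a)) =
      ENNReal.ofReal (b ^ (-1 / a) * Gamma (1 / a + 1)) := by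
  have h := integral_exp_neg_mul_rpow ha hb
  have := Gamma_pos_of_pos (show 0 < 1 / a + 1 by positivity)
  rw [← h, lintegral_ofReal_eq_of_integral_pos (ae_of_all _ fun x => (exp_pos _).le)]
  rw [h]
  positivity

lemma lintegral_rpow_mul_exp_neg_mul {a l : ℝ} (ha : 0 < a) (hl : 0 < l) :
    ∫⁻ u in Ioi (0 : ℝ), ENNReal.ofReal (u ^ (a - 1) * exp (-(l * u))) =
      ENNReal.ofReal ((1 / l) ^ a * Gamma a) := by
  have h := Real.integral_rpow_mul_exp_neg_mul_Ioi ha hl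
  have := Gamma_pos_of_pos ha
  rw [← h, lintegral_ofReal_eq_of_integral_pos]
  · filter_upwards [ae_restrict_mem measurableSet_Ioi] with u hu
    exact mul_nonneg (rpow_nonneg (le_of_lt hu) _) (exp_pos _).le
  · rw [h]
    positivity

lemma lintegral_one_div_add_mul_rpow {a b l : ℝ} (ha : 1 < a) (hb : 0 < b) (hl : 0 < l) :
    ∫⁻ x in Ioi (0 : ℝ), ENNReal.ofReal (1 / (l + b * x ^ a)) =
      ENNReal.ofReal (b ^ (-1 / a) * (1 / l) ^ (1 - 1 / a) * (π / a / sin (π / a))) := by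
  have ha0 : 0 < a := one_pos.trans ha
  have hinner : ∀ u ∈ Ioi (0 : ℝ),
      ∫⁻ x in Ioi (0 : ℝ), ENNReal.ofReal (exp (-(l + b * x ^ a) * u)) =
        ENNReal.ofReal (b ^ (-1 / a) * Gamma (1 / a + 1)) *
          ENNReal.ofReal (u ^ (1 - 1 / a - 1) * exp (-(l * u))) := fun u (hu : 0 < u) => by
    have hexp (x : ℝ) : ENNReal.ofReal (exp (-(l + b * x ^ a) * u)) =
        ENNReal.ofReal (exp (-(l * u))) * ENNReal.ofReal (exp (-(b * u) * x ^ a)) := by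
      rw [← ENNReal.ofReal_mul (exp_pos _).le, ← exp_add]
      ring_nf
    simp_rw [hexp]
    rw [lintegral_const_mul _ (by fun_prop), lintegral_exp_neg_mul_rpow ha0 (mul_pos hb hu),
      ← ENNReal.ofReal_mul (exp_pos _).le, mul_rpow hb.le hu.le,
      ← ENNReal.ofReal_mul (mul_nonneg (by positivity) (Gamma_pos_of_pos (by positivity)).le),
      show 1 - 1 / a - 1 = -1 / a by ring]
    ring_nf
  have hΓ : Gamma (1 / a + 1) * Gamma (1 - 1 / a) = π / a / sin (π / a) := by
    rw [Gamma_add_one (by positivity), mul_assoc, Gamma_mul_Gamma_one_sub, mul_one_div]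
    ring
  have : 0 ≤ Gamma (1 / a + 1) := (Gamma_pos_of_pos (by positivity)).le
  calc ∫⁻ x in Ioi (0 : ℝ), ENNReal.ofReal (1 / (l + b * x ^ a))
      = ∫⁻ x in Ioi (0 : ℝ), ∫⁻ u in Ioi (0 : ℝ), ENNReal.ofReal (exp (-(l + b * x ^ a) * u)) :=
        setLIntegral_congr_fun measurableSet_Ioi fun x (hx : 0 < x) =>
          (lintegral_exp_neg_mul (by positivity)).symm
    _ = ∫⁻ u in Ioi (0 : ℝ), ∫⁻ x in Ioi (0 : ℝ), ENNReal.ofReal (exp (-(l + b * x ^ a) * u)) :=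
        lintegral_lintegral_swap (by simp only [Function.uncurry_def]; fun_prop)
    _ = _ := by
        rw [setLIntegral_congr_fun measurableSet_Ioi hinner, lintegral_const_mul _ (by fun_prop),
          lintegral_rpow_mul_exp_neg_mul (sub_pos.2 ((div_lt_one ha0).2 ha)) hl,
          ← ENNReal.ofReal_mul (by positivity), ← hΓ]
        ring_nf

lemma sin_pi_div_pos (hp : 1 < p) : 0 < sin (π / p) :=
  sin_pos_of_pos_of_lt_pi (div_pos pi_pos (by linarith)) (div_lt_self pi_pos hp)

lemma piP_pos (hp : 1 < p) : 0 < piP p := by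
  have := sin_pi_div_pos hp
  have := sub_pos.2 hp
  have := pi_pos
  unfold piP
  positivity

lemma lintegral_one_div_rpow_add_mul_rpow (hpq : p.HolderConjugate q) {κ : ℝ} (hκ : 0 < κ) :
    ∫⁻ x in Ioi (0 : ℝ), ENNReal.ofReal (1 / (κ ^ p + (p - 1) * x ^ q)) =
      ENNReal.ofReal (piP p / (2 * κ)) := by
  have hp := hpq.pos
  have hp1 := hpq.sub_one_pos
  have hq : 1 / q = 1 - 1 / p := by simpa using hpq.one_sub_inv.symm
  rw [lintegral_one_div_add_mul_rpow hpq.symm.lt hp1 (rpow_pos_of_pos hκ p)]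
  congr 1
  have h₁ : (1 / κ ^ p) ^ (1 - 1 / q) = 1 / κ := by
    rw [hq, sub_sub_cancel, div_rpow one_pos.le (by positivity), one_rpow, ← rpow_mul hκ.le,
      mul_one_div_cancel hp.ne', rpow_one]
  have h₂ : (p - 1) ^ (-1 / q) = (p - 1) ^ (1 / p) / (p - 1) := by
    rw [neg_div, hq, neg_sub, rpow_sub_one hp1.ne']
  have h₃ : π / q = π - π / p := by rw [div_eq_mul_one_div, hq]; ring
  rw [h₁, h₂, h₃, sin_pi_sub, piP]
  have := (sin_pi_div_pos hpq.lt).ne'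
  field_simp

lemma exists_half_le_integral_one_div (hpq : p.HolderConjugate q) {κ L : ℝ} (hκ : 0 < κ)
    (hL : L < piP p / κ) :
    ∃ R, 0 ≤ R ∧ L / 2 ≤ ∫ x in 0..R, 1 / (κ ^ p + (p - 1) * |x| ^ q) := by
  have hp1 := hpq.sub_one_pos
  have hpos : 0 < piP p / (2 * κ) := div_pos (piP_pos hpq.lt) (by positivity)
  have hnn : 0 ≤ᵐ[volume.restrict (Ioi 0)] fun x : ℝ => 1 / (κ ^ p + (p - 1) * |x| ^ q) :=
    ae_of_all _ fun x => by simp only [Pi.zero_apply]; positivity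
  have hmeas : AEStronglyMeasurable (fun x : ℝ => 1 / (κ ^ p + (p - 1) * |x| ^ q))
      (volume.restrict (Ioi 0)) := Measurable.aestronglyMeasurable (by fun_prop)
  have hint : ∫ x in Ioi (0 : ℝ), 1 / (κ ^ p + (p - 1) * |x| ^ q) = piP p / (2 * κ) := by
    rw [integral_eq_lintegral_of_nonneg_ae hnn hmeas,
      setLIntegral_congr_fun (g := fun x => .ofReal (1 / (κ ^ p + (p - 1) * x ^ q)))
        measurableSet_Ioi fun x (hx : 0 < x) => by simp only [abs_of_pos hx],
      lintegral_one_div_rpow_add_mul_rpow hpq hκ, ENNReal.toReal_ofReal hpos.le]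
  have hlim := intervalIntegral_tendsto_integral_Ioi 0
    (Integrable.of_integral_ne_zero (hint ▸ hpos.ne')) Filter.tendsto_id
  have hlt : L / 2 < piP p / (2 * κ) := by
    rw [mul_comm, ← div_div]
    linarith
  obtain ⟨R, hR, hR0⟩ := ((hlim.eventually (lt_mem_nhds (hint ▸ hlt))).and
    (Filter.eventually_ge_atTop 0)).exists
  exact ⟨R, hR0, hR.le⟩

end HalfPeriod

section Riccati

variable {p q κ s : ℝ}

lemma exists_hasDerivAt_of_pos {F : ℝ → ℝ} (hF : Continuous F) (hF₀ : ∀ x, 0 < F x) {R : ℝ}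
    (hR : 0 ≤ R) :
    ∃ ψ : ℝ → ℝ, ∀ t ∈ Icc 0 (∫ x in 0..R, 1 / F x), ψ t ∈ Icc 0 R ∧
      HasDerivAt ψ (F (ψ t)) t := by
  have hF' : Continuous fun x => 1 / F x := continuous_const.div hF fun x => (hF₀ x).ne'
  set G : ℝ → ℝ := fun y => ∫ x in 0..y, 1 / F x with hG
  have hG' (y : ℝ) : HasStrictDerivAt G (1 / F y) y :=
    intervalIntegral.integral_hasStrictDerivAt_right (hF'.intervalIntegrable _ _)
      (hF'.stronglyMeasurableAtFilter _ _) hF'.continuousAt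
  have hGc : Continuous G := continuous_iff_continuousAt.2 fun y => (hG' y).hasDerivAt.continuousAt
  have hGm : StrictMono G := strictMono_of_deriv_pos fun y => by
    rw [(hG' y).hasDerivAt.deriv]
    exact one_div_pos.2 (hF₀ y)
  let e := (Topology.IsOpenEmbedding.of_continuous_injective_isOpenMap hGc hGm.injective
    (isOpenMap_of_hasStrictDerivAt hG' fun y =>
      (one_div_pos.2 (hF₀ y)).ne')).toOpenPartialHomeomorph G
  refine ⟨e.symm, fun t ht => ?_⟩
  obtain ⟨y, hy, rfl⟩ := intermediate_value_Icc hR hGc.continuousOn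
    (show t ∈ Icc (G 0) (G R) by simpa [hG] using ht)
  have hey : e.symm (G y) = y := e.left_inv (mem_univ y)
  have hd := e.hasDerivAt_symm (e.map_source (mem_univ y)) (one_div_pos.2 (hF₀ y)).ne'
    (by rw [e.left_inv (mem_univ y)]; exact (hG' y).hasDerivAt)
  rw [hey]
  rw [one_div, inv_inv] at hd
  exact ⟨hy, hd⟩

/-- The substitution `ψ = -|w'|^(p-2) w' / (|w|^(p-2) w)` turns the weighted eigenvalue equation
`(e^(st) |w'|^(p-2) w')' + κ^p e^(st) |w|^(p-2) w = 0` into a first-order Riccati equation. This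
predicate asserts that the latter has a nonnegative supersolution on an interval of length `ℓ`; the
exponent `q` is meant to be conjugate to `p`. -/
def HasRiccatiSupersolution (p q κ s ℓ : ℝ) : Prop :=
  ∃ ψ : ℝ → ℝ, ∀ t ∈ Icc 0 ℓ, 0 ≤ ψ t ∧ DifferentiableAt ℝ ψ t ∧
    κ ^ p ≤ s * ψ t + deriv ψ t - (p - 1) * ψ t ^ q

lemma HasRiccatiSupersolution.mono {ℓ₁ ℓ₂ : ℝ} (hℓ : ℓ₁ ≤ ℓ₂)
    (h : HasRiccatiSupersolution p q κ s ℓ₂) : HasRiccatiSupersolution p q κ s ℓ₁ :=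
  h.imp fun _ hψ t ht => hψ t (Icc_subset_Icc_right hℓ ht)

lemma hasRiccatiSupersolution_mul (hpq : p.HolderConjugate q) (hκ : 0 < κ) (ℓ : ℝ) :
    HasRiccatiSupersolution p q κ (p * κ) ℓ := by
  refine ⟨fun _ => κ ^ (p - 1), fun t _ => ⟨by positivity, differentiableAt_const _, le_of_eq ?_⟩⟩
  have h₁ : κ * κ ^ (p - 1) = κ ^ p := by
    rw [mul_comm, ← rpow_add_one hκ.ne', sub_add_cancel]
  rw [← rpow_mul hκ.le, hpq.sub_one_mul_conj, mul_assoc, h₁, deriv_const]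
  ring

/-- The right-hand side of the Riccati equation `ψ' = κ^p + (p-1)|ψ|^q - sψ`. -/
noncomputable def riccatiField (p q κ s x : ℝ) : ℝ := κ ^ p + (p - 1) * |x| ^ q - s * x

lemma continuous_riccatiField (hq : 0 ≤ q) :
    Continuous fun z : ℝ × ℝ => riccatiField p q κ z.1 z.2 := by
  have : Continuous fun z : ℝ × ℝ => |z.2| ^ q := continuous_snd.abs.rpow_const fun _ => .inr hq
  unfold riccatiField
  fun_prop

lemma riccatiField_nonneg (hpq : p.HolderConjugate q) (hκ : 0 ≤ κ) (hs : |s| ≤ p * κ) (x : ℝ) :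
    0 ≤ riccatiField p q κ s x := by
  have hyoung : p * κ * |x| ≤ κ ^ p + (p - 1) * |x| ^ q := by
    have := mul_le_mul_of_nonneg_left (young_inequality_of_nonneg hκ (abs_nonneg x) hpq) hpq.nonneg
    rwa [mul_add, mul_div_cancel₀ _ hpq.ne_zero, mul_div_left_comm, hpq.div_conj_eq_sub_one,
      mul_comm (|x| ^ q), ← mul_assoc] at this
  have hsx : s * x ≤ p * κ * |x| :=
    (le_abs_self _).trans <| (abs_mul s x).trans_le <| mul_le_mul_of_nonneg_right hs (abs_nonneg x)
  unfold riccatiField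
  linarith

variable {κ' : ℝ}

lemma riccatiField_pos (hpq : p.HolderConjugate q) (hκ : 0 ≤ κ) (hκκ' : κ < κ')
    (hs : |s| ≤ p * κ) (x : ℝ) : 0 < riccatiField p q κ' s x := by
  have h₁ := riccatiField_nonneg hpq hκ hs x
  have h₂ := rpow_lt_rpow hκ hκκ' hpq.pos
  unfold riccatiField at h₁ ⊢
  linarith

lemma continuous_one_div_riccatiField (hpq : p.HolderConjugate q) (hκ : 0 ≤ κ) (hκκ' : κ < κ')
    (hs : |s| ≤ p * κ) : Continuous fun x => 1 / riccatiField p q κ' s x :=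
  continuous_const.div ((continuous_riccatiField hpq.symm.nonneg).comp (.prodMk_right s))
    fun x => (riccatiField_pos hpq hκ hκκ' hs x).ne'

/-- The time the solution of `ψ' = κ^p + (p-1)|ψ|^q - sψ`, `ψ 0 = 0`, needs to reach `R`. -/
noncomputable def riccatiTime (p q κ R s : ℝ) : ℝ := ∫ x in 0..R, 1 / riccatiField p q κ s x

variable {R : ℝ}

lemma hasRiccatiSupersolution_riccatiTime (hpq : p.HolderConjugate q) (hκ : 0 ≤ κ) (hκκ' : κ < κ')
    (hs : |s| ≤ p * κ) (hR : 0 ≤ R) :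
    HasRiccatiSupersolution p q κ s (riccatiTime p q κ' R s) := by
  have hF : Continuous (riccatiField p q κ' s) :=
    (continuous_riccatiField hpq.symm.nonneg).comp (.prodMk_right s)
  obtain ⟨ψ, hψ⟩ := exists_hasDerivAt_of_pos hF (riccatiField_pos hpq hκ hκκ' hs) hR
  refine ⟨ψ, fun t ht => ⟨(hψ t ht).1.1, (hψ t ht).2.differentiableAt, ?_⟩⟩
  simp only [(hψ t ht).2.deriv, riccatiField, abs_of_nonneg (hψ t ht).1.1]
  linarith [rpow_le_rpow hκ hκκ'.le hpq.nonneg]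

lemma continuousOn_riccatiTime (hpq : p.HolderConjugate q) (hκ : 0 ≤ κ) (hκκ' : κ < κ') :
    ContinuousOn (riccatiTime p q κ' R) (Icc (-(p * κ)) (p * κ)) := by
  have hle : -(p * κ) ≤ p * κ := neg_le_self (mul_nonneg hpq.nonneg hκ)
  have hcont : Continuous fun s => riccatiTime p q κ' R (projIcc _ _ hle s) := by
    have hpair : Continuous fun z : ℝ × ℝ => ((projIcc _ _ hle z.1 : ℝ), z.2) := by fun_prop
    exact intervalIntegral.continuous_parametric_intervalIntegral_of_continuous'
      (continuous_const.div ((continuous_riccatiField hpq.symm.nonneg).comp hpair) fun z =>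
        (riccatiField_pos hpq hκ hκκ' (abs_le.2 (projIcc _ _ hle z.1).2) z.2).ne') 0 R
  exact hcont.continuousOn.congr fun s hs => by simp only [projIcc_of_mem hle hs]

lemma two_mul_riccatiTime_zero_le (hpq : p.HolderConjugate q) (hκ : 0 ≤ κ) (hκκ' : κ < κ')
    (hs : |s| ≤ p * κ) (hR : 0 ≤ R) :
    2 * riccatiTime p q κ' R 0 ≤ riccatiTime p q κ' R s + riccatiTime p q κ' R (-s) := by
  have h₀ : |(0 : ℝ)| ≤ p * κ := abs_zero.trans_le (mul_nonneg hpq.nonneg hκ)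
  have hneg : |-s| ≤ p * κ := by rwa [abs_neg]
  have hcont {σ : ℝ} (hσ : |σ| ≤ p * κ) := continuous_one_div_riccatiField hpq hκ hκκ' hσ
  unfold riccatiTime
  rw [← intervalIntegral.integral_add ((hcont hs).intervalIntegrable _ _)
    ((hcont hneg).intervalIntegrable _ _), ← intervalIntegral.integral_const_mul]
  refine intervalIntegral.integral_mono_on hR ((continuous_const.mul (hcont h₀)).intervalIntegrable
    _ _) (((hcont hs).add (hcont hneg)).intervalIntegrable _ _) fun x _ => ?_
  have h₁ := riccatiField_pos hpq hκ hκκ' hs x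
  have h₂ := riccatiField_pos hpq hκ hκκ' hneg x
  have h₃ := riccatiField_pos hpq hκ hκκ' h₀ x
  have hsum : riccatiField p q κ' s x + riccatiField p q κ' (-s) x =
      2 * riccatiField p q κ' 0 x := by
    unfold riccatiField
    ring
  rw [div_add_div _ _ h₁.ne' h₂.ne', mul_one_div, div_le_div_iff₀ h₃ (mul_pos h₁ h₂)]
  nlinarith [sq_nonneg (riccatiField p q κ' s x - riccatiField p q κ' (-s) x)]

end Riccati

section RiccatiInequality

variable {p q κ s : ℝ} {w : ℝ → ℝ} {a m b : ℝ}

lemma neg_mul_le_abs_rpow_add (hpq : p.HolderConjugate q) (x y : ℝ) {z : ℝ} (hz : 0 ≤ z) :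
    -(z * (p * |y| ^ (p - 2) * y * x)) ≤ |x| ^ p + (p - 1) * z ^ q * |y| ^ p := by
  have hy : |y| ^ (p - 2) * |y| = |y| ^ (p - 1) := by
    rcases eq_or_ne y 0 with rfl | hy
    · simp [zero_rpow hpq.sub_one_ne_zero]
    · rw [← rpow_add_one (abs_ne_zero.2 hy)]
      ring_nf
  have hconj : (z * |y| ^ (p - 1)) ^ q = z ^ q * |y| ^ p := by
    rw [mul_rpow hz (by positivity), ← rpow_mul (abs_nonneg y), hpq.sub_one_mul_conj]
  calc -(z * (p * |y| ^ (p - 2) * y * x))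
      ≤ |-(z * (p * |y| ^ (p - 2) * y * x))| := le_abs_self _
    _ = p * (|x| * (z * |y| ^ (p - 1))) := by
        rw [abs_neg, abs_mul, abs_mul, abs_mul, abs_mul, abs_of_nonneg hz,
          abs_of_nonneg hpq.nonneg, abs_of_nonneg (rpow_nonneg (abs_nonneg y) _), ← hy]
        ring
    _ ≤ p * (|x| ^ p / p + (z * |y| ^ (p - 1)) ^ q / q) :=
        mul_le_mul_of_nonneg_left
          (young_inequality_of_nonneg (abs_nonneg x) (by positivity) hpq) hpq.nonneg
    _ = |x| ^ p + (p - 1) * z ^ q * |y| ^ p := by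
        rw [mul_add, mul_div_cancel₀ _ hpq.ne_zero, mul_div_left_comm, hpq.div_conj_eq_sub_one,
          hconj]
        ring

lemma continuous_abs_deriv_rpow_sub (hp : 0 ≤ p) (hw : ContDiff ℝ 1 w) (c : ℝ) :
    Continuous fun t => |deriv w t| ^ p - c * |w t| ^ p :=
  ((hw.continuous_deriv le_rfl).abs.rpow_const fun _ => .inr hp).sub
    (continuous_const.mul (hw.continuous.abs.rpow_const fun _ => .inr hp))

lemma hasDerivAt_exp_mul_mul_abs_rpow {ψ : ℝ → ℝ} {t : ℝ} (hp : 1 < p)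
    (hψ : DifferentiableAt ℝ ψ (t - a)) (hw : DifferentiableAt ℝ w t) :
    HasDerivAt (fun t => exp (s * t) * (ψ (t - a) * |w t| ^ p))
      (exp (s * t) * ((s * ψ (t - a) + deriv ψ (t - a)) * |w t| ^ p +
        ψ (t - a) * (p * |w t| ^ (p - 2) * w t * deriv w t))) t := by
  have h₁ : HasDerivAt (fun t => exp (s * t)) (exp (s * t) * s) t := by
    simpa using ((hasDerivAt_id t).const_mul s).exp
  have h₂ : HasDerivAt (fun t => ψ (t - a)) (deriv ψ (t - a)) t :=
    hψ.hasDerivAt.comp_sub_const t a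
  have h₃ := (hasDerivAt_abs_rpow (w t) hp).comp t hw.hasDerivAt
  exact (h₁.mul (h₂.mul h₃)).congr_deriv (by simp only [Pi.mul_apply, Function.comp_apply]; ring)

lemma integral_exp_mul_sub_nonneg_left (hpq : p.HolderConjugate q)
    (h : HasRiccatiSupersolution p q κ s (m - a)) (hw : ContDiff ℝ 1 w) (hwm : w m = 0)
    (ham : a ≤ m) :
    0 ≤ ∫ t in a..m, exp (s * t) * (|deriv w t| ^ p - κ ^ p * |w t| ^ p) := by
  obtain ⟨ψ, hψ⟩ := h
  have hmem {t : ℝ} (ht : t ∈ Icc a m) : t - a ∈ Icc 0 (m - a) :=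
    ⟨sub_nonneg.2 ht.1, sub_le_sub_right ht.2 a⟩
  have hderiv {t : ℝ} (ht : t ∈ Icc a m) := hasDerivAt_exp_mul_mul_abs_rpow (s := s) hpq.lt
    (hψ _ (hmem ht)).2.1 (hw.differentiable one_ne_zero t)
  have hcont : Continuous fun t => exp (s * t) * (|deriv w t| ^ p - κ ^ p * |w t| ^ p) :=
    (by fun_prop : Continuous fun t => exp (s * t)).mul
      (continuous_abs_deriv_rpow_sub hpq.nonneg hw _)
  have hle := intervalIntegral.sub_le_integral_of_hasDeriv_right_of_le ham
    (fun t ht => (hderiv ht).neg.continuousAt.continuousWithinAt)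
    (fun t ht => (hderiv (Ioo_subset_Icc_self ht)).neg.hasDerivWithinAt)
    (hcont.continuousOn.integrableOn_compact isCompact_Icc) fun t ht => by
      obtain ⟨h₁, -, h₂⟩ := hψ _ (hmem (Ioo_subset_Icc_self ht))
      rw [← mul_neg]
      refine mul_le_mul_of_nonneg_left ?_ (exp_pos _).le
      have hyoung := neg_mul_le_abs_rpow_add hpq (deriv w t) (w t) h₁
      have := mul_le_mul_of_nonneg_right h₂ (rpow_nonneg (abs_nonneg (w t)) p)
      linarith
  refine le_trans ?_ hle
  have := (hψ _ (hmem (left_mem_Icc.2 ham))).1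
  simp only [Pi.neg_apply, hwm, abs_zero, zero_rpow hpq.ne_zero, mul_zero, neg_zero, zero_sub,
    neg_neg]
  positivity

lemma integral_exp_mul_sub_nonneg_right (hpq : p.HolderConjugate q)
    (h : HasRiccatiSupersolution p q κ (-s) (b - m)) (hw : ContDiff ℝ 1 w) (hwm : w m = 0)
    (hmb : m ≤ b) :
    0 ≤ ∫ t in m..b, exp (s * t) * (|deriv w t| ^ p - κ ^ p * |w t| ^ p) := by
  have hreflect := integral_exp_mul_sub_nonneg_left (w := fun t => w (-t)) (a := -b) (m := -m) hpq
    (by rwa [neg_sub_neg]) (hw.comp contDiff_neg) (by rwa [neg_neg]) (neg_le_neg hmb)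
  rw [← intervalIntegral.integral_comp_neg] at hreflect
  simpa only [neg_mul_neg, deriv_comp_neg, neg_neg, abs_neg] using hreflect

lemma integral_exp_mul_sub_nonneg (hpq : p.HolderConjugate q)
    (h₁ : HasRiccatiSupersolution p q κ s (m - a)) (h₂ : HasRiccatiSupersolution p q κ (-s) (b - m))
    (hw : ContDiff ℝ 1 w) (hwm : w m = 0) (ham : a ≤ m) (hmb : m ≤ b) :
    0 ≤ ∫ t in a..b, exp (s * t) * (|deriv w t| ^ p - κ ^ p * |w t| ^ p) := by
  have hcont : Continuous fun t => exp (s * t) * (|deriv w t| ^ p - κ ^ p * |w t| ^ p) :=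
    (by fun_prop : Continuous fun t => exp (s * t)).mul
      (continuous_abs_deriv_rpow_sub hpq.nonneg hw _)
  rw [← intervalIntegral.integral_add_adjacent_intervals (b := m)
    (hcont.intervalIntegrable _ _) (hcont.intervalIntegrable _ _)]
  exact add_nonneg (integral_exp_mul_sub_nonneg_left hpq h₁ hw hwm ham)
    (integral_exp_mul_sub_nonneg_right hpq h₂ hw hwm hmb)

end RiccatiInequality

section Mode

/-- `m` is a mode of `k` if `k` is nondecreasing before `m` and nonincreasing after `m`; the
value `k m` is unconstrained, which makes modes stable under limits. -/
def IsMode (k : ℝ → ℝ) (m : ℝ) : Prop :=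
  MonotoneOn k (Iio m) ∧ AntitoneOn k (Ioi m)

variable {k : ℝ → ℝ} {m α β : ℝ}

lemma isClosed_setOf_isMode {X : Type*} [TopologicalSpace X] {k : X → ℝ → ℝ}
    (hk : ∀ t, Continuous fun x => k x t) : IsClosed {z : X × ℝ | IsMode (k z.1) z.2} := by
  have hset : {z : X × ℝ | IsMode (k z.1) z.2} = ⋂ (t : ℝ) (u : ℝ) (_ : t ≤ u),
      ({z | z.2 ≤ u} ∪ {z | k z.1 t ≤ k z.1 u}) ∩ ({z | t ≤ z.2} ∪ {z | k z.1 u ≤ k z.1 t}) := by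
    ext z
    simp only [mem_iInter, mem_inter_iff, mem_union, mem_ofPred_eq]
    refine ⟨fun hz t u htu => ⟨?_, ?_⟩,
      fun hz => ⟨fun t _ u hu htu => ?_, fun t ht u _ htu => ?_⟩⟩
    · exact (le_or_gt z.2 u).imp_right fun hu => hz.1 (htu.trans_lt hu) hu htu
    · exact (le_or_gt t z.2).imp_right fun ht => hz.2 ht (ht.trans_le htu) htu
    · exact (hz t u htu).1.resolve_left (not_le.2 hu)
    · exact (hz t u htu).2.resolve_left (not_le.2 ht)
  have hcont (t : ℝ) : Continuous fun z : X × ℝ => k z.1 t := (hk t).comp continuous_fst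
  rw [hset]
  exact isClosed_iInter fun t => isClosed_iInter fun u => isClosed_iInter fun _ =>
    ((isClosed_le continuous_snd continuous_const).union (isClosed_le (hcont t) (hcont u))).inter
      ((isClosed_le continuous_const continuous_snd).union (isClosed_le (hcont u) (hcont t)))

lemma ordConnected_setOf_isMode (k : ℝ → ℝ) : OrdConnected {m | IsMode k m} :=
  ⟨fun _ h₁ _ h₂ _ hm => ⟨h₂.1.mono (Iio_subset_Iio hm.2), h₁.2.mono (Ioi_subset_Ioi hm.1)⟩⟩

lemma exists_isMode_of_quasiconcaveOn (hαβ : α ≤ β) (hk : QuasiconcaveOn ℝ univ k)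
    (hk₀ : ∀ t, 0 ≤ k t) (hsupp : ∀ t ∉ Icc α β, k t = 0) : ∃ m ∈ Icc α β, IsMode k m := by
  have hmin {x y z : ℝ} (hxy : x ≤ y) (hyz : y ≤ z) : min (k x) (k z) ≤ k y :=
    ((hk (min (k x) (k z))).ordConnected.out ⟨mem_univ x, min_le_left _ _⟩
      ⟨mem_univ z, min_le_right _ _⟩ ⟨hxy, hyz⟩).2
  set S := {y ∈ Icc α β | MonotoneOn k (Iio y)}
  have hαS : α ∈ S := ⟨left_mem_Icc.2 hαβ, fun x (hx : x < α) y _ _ => by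
    rw [hsupp x fun h => hx.not_ge h.1]
    exact hk₀ y⟩
  have hSb : BddAbove S := ⟨β, fun y hy => hy.1.2⟩
  refine ⟨sSup S, ⟨le_csSup hSb hαS, csSup_le ⟨α, hαS⟩ fun y hy => hy.1.2⟩, ?_, ?_⟩
  · intro x _ y hy hxy
    obtain ⟨z, hz, hyz⟩ := exists_lt_of_lt_csSup ⟨α, hαS⟩ hy
    exact hz.2 (hxy.trans_lt hyz) hyz hxy
  · intro x hx y _ hxy
    by_contra! hlt
    have hyβ : y ≤ β := by
      by_contra hy
      exact ((hk₀ x).trans_lt hlt).ne' (hsupp y fun h => hy h.2)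
    have hxS : x ∈ S := by
      refine ⟨⟨(le_csSup hSb hαS).trans (le_of_lt hx), hxy.trans hyβ⟩, fun a _ b hb hab => ?_⟩
      have hbx : k b ≤ k x := by
        rcases min_le_iff.1 (hmin (le_of_lt hb) hxy) with h | h
        · exact h
        · linarith
      rcases min_le_iff.1 (hmin hab ((le_of_lt hb).trans hxy)) with h | h
      · exact h
      · linarith
    exact (le_csSup hSb hxS).not_gt hx

lemma LogConcave.quasiconcaveOn {E : Type*} [AddCommGroup E] [Module ℝ E] {h : E → ℝ}
    (hh : LogConcave h) : QuasiconcaveOn ℝ univ h := by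
  refine quasiconcaveOn_iff_min_le.2 ⟨convex_univ, fun x _ y _ a b ha hb hab => ?_⟩
  rcases hb.eq_or_lt with rfl | hb
  · simp [show a = 1 by linarith]
  rcases ha.eq_or_lt with rfl | ha
  · simp [show b = 1 by linarith]
  obtain rfl : a = 1 - b := by linarith
  have hmin : 0 ≤ min (h x) (h y) := le_min (hh.nonneg x) (hh.nonneg y)
  calc min (h x) (h y) = min (h x) (h y) ^ (1 - b) * min (h x) (h y) ^ b := by
        rw [← rpow_add_of_nonneg hmin ha.le hb.le, sub_add_cancel, rpow_one]
    _ ≤ h x ^ (1 - b) * h y ^ b :=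
        mul_le_mul (rpow_le_rpow hmin (min_le_left _ _) ha.le)
          (rpow_le_rpow hmin (min_le_right _ _) hb.le) (by positivity)
          (rpow_nonneg (hh.nonneg x) _)
    _ ≤ h ((1 - b) • x + b • y) := hh.rpow_mul_rpow_le x y b ⟨hb, by linarith⟩

lemma LogConcave.exp_mul {h : ℝ → ℝ} (hh : LogConcave h) (c : ℝ) :
    LogConcave fun t => exp (c * t) * h t where
  nonneg t := mul_nonneg (exp_pos _).le (hh.nonneg t)
  rpow_mul_rpow_le x y t ht := by
    calc (exp (c * x) * h x) ^ (1 - t) * (exp (c * y) * h y) ^ t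
        = exp (c * x * (1 - t) + c * y * t) * (h x ^ (1 - t) * h y ^ t) := by
          rw [mul_rpow (exp_pos _).le (hh.nonneg x), mul_rpow (exp_pos _).le (hh.nonneg y),
            ← Real.exp_mul, ← Real.exp_mul, exp_add, mul_mul_mul_comm]
      _ ≤ exp (c * ((1 - t) • x + t • y)) * h ((1 - t) • x + t • y) := by
          rw [show c * x * (1 - t) + c * y * t = c * ((1 - t) • x + t • y) by
            simp only [smul_eq_mul]; ring]
          exact mul_le_mul_of_nonneg_left (hh.rpow_mul_rpow_le x y t ht) (exp_pos _).le

lemma IsMode.ordConnected_insert (hm : IsMode k m) (u : ℝ) :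
    OrdConnected (insert m {t | u < k t}) := by
  refine ⟨fun x hx y hy z hz => ?_⟩
  rcases lt_trichotomy z m with hzm | rfl | hmz
  · have hxm : x < m := hz.1.trans_lt hzm
    exact .inr ((hx.resolve_left hxm.ne).trans_le (hm.1 hxm hzm hz.1))
  · exact mem_insert z _
  · have hmy : m < y := hmz.trans_le hz.2
    exact .inr ((hy.resolve_left hmy.ne').trans_le (hm.2 hmz hmy hz.2))

lemma IsMode.exists_superlevel_ae_eq_Ioc (hm : IsMode k m) (hmαβ : m ∈ Icc α β)
    (hsupp : ∀ t ∉ Icc α β, k t = 0) {u : ℝ} (hu : 0 ≤ u) :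
    ∃ a ∈ Icc α m, ∃ b ∈ Icc m β, {t | u < k t} =ᵐ[volume] Ioc a b := by
  set S : Set ℝ := insert m {t | u < k t}
  have hS : S ⊆ Icc α β := insert_subset hmαβ fun t (ht : u < k t) => by
    by_contra h
    exact (hu.trans_lt ht).ne' (hsupp t h)
  have hSne : S.Nonempty := insert_nonempty _ _
  have hSb : BddBelow S := bddBelow_Icc.mono hS
  have hSa : BddAbove S := bddAbove_Icc.mono hS
  have hmS : m ∈ S := mem_insert _ _
  have hSc : IsConnected S := ⟨hSne, (hm.ordConnected_insert u).isPreconnected⟩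
  have hSI : S =ᵐ[volume] Ioc (sInf S) (sSup S) :=
    ((subset_Icc_csInf_csSup hSb hSa).eventuallyLE.trans Ioc_ae_eq_Icc.symm.le).antisymm
      (Ioo_ae_eq_Ioc.symm.le.trans (hSc.Ioo_csInf_csSup_subset hSb hSa).eventuallyLE)
  exact ⟨sInf S, ⟨le_csInf hSne fun t ht => (hS ht).1, csInf_le hSb hmS⟩, sSup S,
    ⟨le_csSup hSa hmS, csSup_le hSne fun t ht => (hS ht).2⟩, (insert_ae_eq_self _ _).symm.trans hSI⟩

lemma integral_nonneg_iff_lintegral_ofReal_neg_le {X : Type*} [MeasurableSpace X] {μ : Measure X}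
    {f : X → ℝ} (hf : Integrable f μ) :
    0 ≤ ∫ x, f x ∂μ ↔ ∫⁻ x, .ofReal (-f x) ∂μ ≤ ∫⁻ x, .ofReal (f x) ∂μ := by
  have hneg : ∫⁻ x, .ofReal (-f x) ∂μ < ∞ := hf.neg.lintegral_lt_top
  rw [integral_eq_lintegral_pos_part_sub_lintegral_neg_part hf, sub_nonneg,
    ENNReal.toReal_le_toReal hneg.ne hf.lintegral_lt_top.ne]

lemma lintegral_ofReal_mul_eq_lintegral_superlevel {g : ℝ → ℝ} (hk : Measurable k)
    (hk₀ : ∀ t, 0 ≤ k t) (hg : Measurable g) :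
    ∫⁻ t, .ofReal (k t * g t) = ∫⁻ u in Ioi 0, ∫⁻ t in {t | u < k t}, .ofReal (g t) := by
  calc ∫⁻ t, .ofReal (k t * g t)
      = ∫⁻ t, .ofReal (k t) ∂volume.withDensity fun t => .ofReal (g t) := by
        rw [lintegral_withDensity_eq_lintegral_mul _ hg.ennreal_ofReal hk.ennreal_ofReal]
        exact lintegral_congr fun t => by
          rw [ENNReal.ofReal_mul (hk₀ t), mul_comm, Pi.mul_apply]
    _ = ∫⁻ u in Ioi 0, ∫⁻ t in {t | u < k t}, .ofReal (g t) := by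
        rw [lintegral_eq_lintegral_meas_lt _ (.of_forall hk₀) hk.aemeasurable]
        exact lintegral_congr fun u => withDensity_apply _ (measurableSet_lt measurable_const hk)

lemma IsMode.integral_mul_nonneg {D : ℝ → ℝ} (hm : IsMode k m) (hmαβ : m ∈ Icc α β)
    (hk : Measurable k) (hk₀ : ∀ t, 0 ≤ k t) (hsupp : ∀ t ∉ Icc α β, k t = 0)
    (hD : Continuous D) (hint : ∀ a ∈ Icc α m, ∀ b ∈ Icc m β, 0 ≤ ∫ t in a..b, D t) :
    0 ≤ ∫ t, k t * D t := by
  by_cases hkD : Integrable fun t => k t * D t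
  · simp only [integral_nonneg_iff_lintegral_ofReal_neg_le hkD, ← mul_neg]
    rw [lintegral_ofReal_mul_eq_lintegral_superlevel (g := fun t => -D t) hk hk₀ hD.neg.measurable,
      lintegral_ofReal_mul_eq_lintegral_superlevel hk hk₀ hD.measurable]
    refine setLIntegral_mono' measurableSet_Ioi fun u (hu : 0 < u) => ?_
    obtain ⟨a, ha, b, hb, hab⟩ := hm.exists_superlevel_ae_eq_Ioc hmαβ hsupp hu.le
    have hD' : IntegrableOn D (Ioc a b) :=
      (hD.continuousOn.integrableOn_compact isCompact_Icc).mono_set Ioc_subset_Icc_self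
    rw [setLIntegral_congr hab, setLIntegral_congr hab,
      ← integral_nonneg_iff_lintegral_ofReal_neg_le hD',
      ← intervalIntegral.integral_of_le (ha.2.trans hb.1)]
    exact hint a ha b hb
  · rw [integral_undef hkD]

end Mode

section Selection

lemma exists_mem_Icc_of_isCompact_of_ordConnected {X : Type*} [TopologicalSpace X] [T2Space X]
    [PreconnectedSpace X] {Γ : Set (X × ℝ)} (hΓ : IsCompact Γ)
    (hconn : ∀ s, OrdConnected {m | (s, m) ∈ Γ}) (hne : ∀ s, ∃ m, (s, m) ∈ Γ) {f g : X → ℝ}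
    (hf : Continuous f) (hg : Continuous g) (hgf : ∀ s, g s ≤ f s)
    (hle : ∃ s m, (s, m) ∈ Γ ∧ m ≤ f s) (hge : ∃ s m, (s, m) ∈ Γ ∧ g s ≤ m) :
    ∃ s m, (s, m) ∈ Γ ∧ m ∈ Icc (g s) (f s) := by
  have hA : IsClosed (Prod.fst '' (Γ ∩ {z | z.2 ≤ f z.1})) :=
    ((hΓ.inter_right (isClosed_le continuous_snd (hf.comp continuous_fst))).image
      continuous_fst).isClosed
  have hB : IsClosed (Prod.fst '' (Γ ∩ {z | g z.1 ≤ z.2})) :=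
    ((hΓ.inter_right (isClosed_le (hg.comp continuous_fst) continuous_snd)).image
      continuous_fst).isClosed
  obtain ⟨s₀, m₀, h₀, hm₀⟩ := hle
  obtain ⟨s₁, m₁, h₁, hm₁⟩ := hge
  obtain ⟨_, -, ⟨⟨_, m⟩, ⟨hm, hmf⟩, rfl⟩, ⟨⟨s, m'⟩, ⟨hm', hgm'⟩, rfl⟩⟩ :=
    isPreconnected_closed_iff.1 isPreconnected_univ _ _ hA hB
      (fun s _ => by
        obtain ⟨m, hm⟩ := hne s
        exact (le_total m (f s)).imp (fun h => ⟨(s, m), ⟨hm, h⟩, rfl⟩)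
          fun h => ⟨(s, m), ⟨hm, (hgf s).trans h⟩, rfl⟩)
      ⟨s₀, mem_univ _, (s₀, m₀), ⟨h₀, hm₀⟩, rfl⟩ ⟨s₁, mem_univ _, (s₁, m₁), ⟨h₁, hm₁⟩, rfl⟩
  rcases le_total m' (f s) with h | h
  · exact ⟨s, m', hm', hgm', h⟩
  · exact ⟨s, f s, (hconn s).out hm hm' ⟨hmf, h⟩, hgf s, le_rfl⟩

variable {p q κ α β : ℝ} {h : ℝ → ℝ}

lemma exists_isMode_mem_Icc {X : Type*} [TopologicalSpace X] [T2Space X] [CompactSpace X]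
    [PreconnectedSpace X] {k : X → ℝ → ℝ} (hk : ∀ t, Continuous fun s => k s t)
    (hmode : ∀ s, ∃ m ∈ Icc α β, IsMode (k s) m) {f g : X → ℝ} (hf : Continuous f)
    (hg : Continuous g) (hgf : ∀ s, g s ≤ f s) (hle : ∃ s, ∃ m ∈ Icc α β, IsMode (k s) m ∧ m ≤ f s)
    (hge : ∃ s, ∃ m ∈ Icc α β, IsMode (k s) m ∧ g s ≤ m) :
    ∃ s, ∃ m ∈ Icc α β, IsMode (k s) m ∧ m ∈ Icc (g s) (f s) := by
  have hΓ : IsCompact (univ ×ˢ Icc α β ∩ {z : X × ℝ | IsMode (k z.1) z.2}) :=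
    (isCompact_univ.prod isCompact_Icc).inter_right (isClosed_setOf_isMode hk)
  simpa only [mem_inter_iff, mem_prod, mem_univ, true_and, mem_ofPred_eq, and_assoc] using
    exists_mem_Icc_of_isCompact_of_ordConnected hΓ
      (fun s => by
        convert (ordConnected_Icc (a := α) (b := β)).inter
          (ordConnected_setOf_isMode (k s)) using 1
        ext m
        simp)
      (fun s => by simpa using hmode s) hf hg hgf (by simpa [and_assoc] using hle)
      (by simpa [and_assoc] using hge)

lemma exists_forall_le_riccatiTime_add (hpq : p.HolderConjugate q) (hκ : 0 < κ) {L : ℝ}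
    (hL : κ * L < piP p) :
    ∃ κ' > κ, ∃ R, 0 ≤ R ∧ ∀ s, |s| ≤ p * κ →
      L ≤ riccatiTime p q κ' R s + riccatiTime p q κ' R (-s) := by
  have hκ' : ∀ᶠ κ' in 𝓝[>] κ, κ' * L < piP p :=
    ((continuous_mul_const L).continuousAt.eventually_lt continuousAt_const hL).filter_mono
      nhdsWithin_le_nhds
  obtain ⟨κ', hL', hκκ'⟩ := (hκ'.and self_mem_nhdsWithin).exists
  obtain ⟨R, hR, hLR⟩ := exists_half_le_integral_one_div hpq (hκ.trans hκκ')
    ((lt_div_iff₀' (hκ.trans hκκ')).2 hL')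
  refine ⟨κ', hκκ', R, hR, fun s hs => ?_⟩
  have := two_mul_riccatiTime_zero_le hpq hκ.le hκκ' hs hR
  simp only [riccatiTime, riccatiField, zero_mul, sub_zero] at this ⊢
  linarith

/- Tilting `h` by `exp (-s * t)` moves the mode to the left as `s` increases from `-(p * κ)` to
`p * κ`; at either end the constant supersolution serves one of the two sides. -/
lemma exists_isMode_hasRiccatiSupersolution (hpq : p.HolderConjugate q) (hκ : 0 < κ)
    (hαβ : α ≤ β) (hL : κ * (β - α) < piP p) (hh : LogConcave h)
    (hsupp : ∀ t ∉ Icc α β, h t = 0) :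
    ∃ s, ∃ m ∈ Icc α β, IsMode (fun t => exp (-s * t) * h t) m ∧
      HasRiccatiSupersolution p q κ s (m - α) ∧ HasRiccatiSupersolution p q κ (-s) (β - m) := by
  obtain ⟨κ', hκκ', R, hR, hLR⟩ := exists_forall_le_riccatiTime_add hpq hκ hL
  set T := riccatiTime p q κ' R
  have hT {s : ℝ} (hs : |s| ≤ p * κ) : HasRiccatiSupersolution p q κ s (T s) :=
    hasRiccatiSupersolution_riccatiTime hpq hκ.le hκκ' hs hR
  have hpκ : 0 ≤ p * κ := mul_nonneg hpq.nonneg hκ.le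
  have hmode (s : ℝ) : ∃ m ∈ Icc α β, IsMode (fun t => exp (-s * t) * h t) m :=
    exists_isMode_of_quasiconcaveOn hαβ (hh.exp_mul (-s)).quasiconcaveOn (hh.exp_mul (-s)).nonneg
      fun t ht => by rw [hsupp t ht, mul_zero]
  by_contra! hcon
  let S := Icc (-(p * κ)) (p * κ)
  have hS (s : S) : |(s : ℝ)| ≤ p * κ := abs_le.2 s.2
  have hS' (s : S) : |-(s : ℝ)| ≤ p * κ := (abs_neg _).trans_le (hS s)
  have hTc : Continuous fun s : S => T s := (continuousOn_riccatiTime hpq hκ.le hκκ').domRestrict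
  have hTc' : Continuous fun s : S => T (-s) :=
    hTc.comp (continuous_subtype_val.neg.subtype_mk fun s => abs_le.1 (hS' s))
  have hgf (s : S) : β - T (-s) ≤ α + T s := by linarith [hLR s (hS s)]
  have : PreconnectedSpace S := Subtype.preconnectedSpace isPreconnected_Icc
  obtain ⟨s, m, hm, hkm, hgm, hmf⟩ := exists_isMode_mem_Icc
    (k := fun (s : S) t => exp (-s * t) * h t) (f := fun s => α + T s) (g := fun s => β - T (-s))
    (fun t => by fun_prop) (fun s => hmode s) (hTc.const_add α) (continuous_const.sub hTc') hgf
    (by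
      let s : S := ⟨p * κ, neg_le_self hpκ, le_rfl⟩
      obtain ⟨m, hm, hkm⟩ := hmode s
      refine ⟨s, m, hm, hkm, not_lt.1 fun hlt => hcon s m hm hkm ?_ ?_⟩
      · exact hasRiccatiSupersolution_mul hpq hκ _
      · exact (hT (hS' s)).mono (by linarith [hgf s]))
    (by
      let s : S := ⟨-(p * κ), le_rfl, neg_le_self hpκ⟩
      obtain ⟨m, hm, hkm⟩ := hmode s
      refine ⟨s, m, hm, hkm, not_lt.1 fun hlt => hcon s m hm hkm ?_ ?_⟩
      · exact (hT (hS s)).mono (by linarith [hgf s])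
      · rw [neg_neg]
        exact hasRiccatiSupersolution_mul hpq hκ _)
  exact hcon s m hm hkm ((hT (hS s)).mono (by linarith)) ((hT (hS' s)).mono (by linarith))

theorem exists_integral_mul_abs_deriv_rpow_sub_nonneg (hpq : p.HolderConjugate q) (hκ : 0 < κ)
    (hαβ : α ≤ β) (hL : κ * (β - α) < piP p) (hh : LogConcave h) (hhm : Measurable h)
    (hsupp : ∀ t ∉ Icc α β, h t = 0) {w : ℝ → ℝ} (hw : ContDiff ℝ 1 w) :
    ∃ m ∈ Icc α β, 0 ≤ ∫ t, h t * (|deriv w t| ^ p - κ ^ p * |w t - w m| ^ p) := by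
  obtain ⟨s, m, hm, hkm, h₁, h₂⟩ :=
    exists_isMode_hasRiccatiSupersolution hpq hκ hαβ hL hh hsupp
  refine ⟨m, hm, ?_⟩
  have hw' : ContDiff ℝ 1 fun t => w t - w m := hw.sub contDiff_const
  have hk := hh.exp_mul (-s)
  have hD : Continuous fun t =>
      exp (s * t) * (|deriv (fun t => w t - w m) t| ^ p - κ ^ p * |w t - w m| ^ p) :=
    (by fun_prop : Continuous fun t => exp (s * t)).mul
      (continuous_abs_deriv_rpow_sub hpq.nonneg hw' _)
  have hnonneg := hkm.integral_mul_nonneg hm (by fun_prop) hk.nonneg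
    (fun t ht => by rw [hsupp t ht, mul_zero]) hD fun a ha b hb =>
      integral_exp_mul_sub_nonneg hpq (h₁.mono (by linarith [ha.1])) (h₂.mono (by linarith [hb.2]))
        hw' (sub_self _) ha.2 hb.1
  refine hnonneg.trans_eq (integral_congr_ae (.of_forall fun t => ?_))
  have hexp : exp (-s * t) * exp (s * t) = 1 := by rw [← exp_add, neg_mul, neg_add_cancel, exp_zero]
  simp only [deriv_sub_const]
  linear_combination h t * (|deriv w t| ^ p - κ ^ p * |w t - w m| ^ p) * hexp

end Selection

section Bisection

variable {E : Type*} [NormedAddCommGroup E] [NormedSpace ℝ E]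

lemma isOpen_setOf_pos_apply_sub (ℓ : E →L[ℝ] ℝ) (a : E) : IsOpen {x | 0 < ℓ (x - a)} :=
  isOpen_lt continuous_const (by fun_prop)

lemma convex_setOf_pos_apply_sub (ℓ : E →L[ℝ] ℝ) (a : E) : Convex ℝ {x | 0 < ℓ (x - a)} := by
  simpa only [map_sub, sub_pos] using! convex_halfSpace_gt ℓ.toLinearMap.isLinear (ℓ a)

variable [MeasurableSpace E] {μ : Measure E} {f F : E → ℝ} {K : Set E}

/-- The class of domains on which the Payne–Weinberger bisection operates: open convex sets over
which `f` has integral zero while `F` has negative integral. -/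
structure IsBisectable (μ : Measure E) (f F : E → ℝ) (K : Set E) : Prop where
  isOpen : IsOpen K
  convex : Convex ℝ K
  integral_eq_zero : ∫ x in K, f x ∂μ = 0
  integral_neg : ∫ x in K, F x ∂μ < 0

lemma IsBisectable.nonempty (hK : IsBisectable μ f F K) : K.Nonempty :=
  nonempty_iff_ne_empty.2 fun h => by simpa [h] using hK.integral_neg

variable [FiniteDimensional ℝ E] [BorelSpace E] [μ.IsAddHaarMeasure]

lemma ae_apply_sub_ne_zero {ℓ : E →L[ℝ] ℝ} (hℓ : ℓ ≠ 0) (a : E) : ∀ᵐ x ∂μ, ℓ (x - a) ≠ 0 := by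
  refine (eventually_sub_right_iff (p := fun x => ℓ x ≠ 0) μ a).2 ?_
  simpa [ae_iff] using! Measure.addHaar_submodule μ (LinearMap.ker ℓ.toLinearMap) fun h =>
    hℓ (ContinuousLinearMap.coe_injective (LinearMap.ker_eq_top.1 h))

lemma setIntegral_pos_apply_sub_add_neg {ℓ : E →L[ℝ] ℝ} (hℓ : ℓ ≠ 0) (a : E)
    (hf : IntegrableOn f K μ) :
    ∫ x in K ∩ {x | 0 < ℓ (x - a)}, f x ∂μ + ∫ x in K ∩ {x | 0 < (-ℓ) (x - a)}, f x ∂μ =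
      ∫ x in K, f x ∂μ := by
  rw [← integral_inter_add_sdiff (isOpen_setOf_pos_apply_sub ℓ a).measurableSet hf]
  congr 1
  refine setIntegral_congr_set ?_
  filter_upwards [ae_apply_sub_ne_zero (μ := μ) hℓ a] with x hx
  refine propext (and_congr_right fun _ => ?_)
  change 0 < -ℓ (x - a) ↔ ¬ 0 < ℓ (x - a)
  rw [neg_pos, not_lt, hx.le_iff_lt]

lemma continuous_setIntegral_pos_apply_sub {X : Type*} [TopologicalSpace X]
    [FirstCountableTopology X] {ℓ : X → E →L[ℝ] ℝ} (hℓ : Continuous ℓ) (hℓ₀ : ∀ s, ℓ s ≠ 0) (a : E)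
    (hf : IntegrableOn f K μ) :
    Continuous fun s => ∫ x in K ∩ {x | 0 < ℓ s (x - a)}, f x ∂μ := by
  have hmeas s := (isOpen_setOf_pos_apply_sub (ℓ s) a).measurableSet
  simp_rw [← setIntegral_indicator (hmeas _)]
  refine continuous_iff_continuousAt.2 fun s₀ => continuousAt_of_dominated (bound := fun x => ‖f x‖)
    (.of_forall fun s => hf.aestronglyMeasurable.indicator (hmeas s))
    (.of_forall fun s => .of_forall fun x => norm_indicator_le_norm_self _ _) hf.norm ?_
  filter_upwards [ae_restrict_of_ae (ae_apply_sub_ne_zero (hℓ₀ s₀) a)] with x hx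
  have hcont : Continuous fun s => ℓ s (x - a) := by fun_prop
  rcases hx.lt_or_gt with hneg | hpos
  · refine continuousAt_const.congr (f := fun _ => 0) ?_
    filter_upwards [hcont.continuousAt.eventually_lt continuousAt_const hneg] with s hs
    exact (indicator_of_notMem (s := {x | 0 < ℓ s (x - a)}) (not_lt.2 hs.le) f).symm
  · refine continuousAt_const.congr (f := fun _ => f x) ?_
    filter_upwards [continuousAt_const.eventually_lt hcont.continuousAt hpos] with s hs
    exact (indicator_of_mem (s := {x | 0 < ℓ s (x - a)}) hs f).symm

lemma exists_setIntegral_pos_apply_sub_eq_zero {u v : E →L[ℝ] ℝ}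
    (huv : LinearIndependent ℝ ![u, v]) (a : E) (hf : IntegrableOn f K μ)
    (hf₀ : ∫ x in K, f x ∂μ = 0) :
    ∃ ℓ ∈ Submodule.span ℝ {u, v}, ℓ ≠ 0 ∧ ∫ x in K ∩ {x | 0 < ℓ (x - a)}, f x ∂μ = 0 := by
  set ℓ : ℝ → E →L[ℝ] ℝ := fun θ => cos θ • u + sin θ • v
  have hℓ₀ θ : ℓ θ ≠ 0 := fun h => by
    have := LinearIndependent.pair_iff.1 huv _ _ h
    simpa [this] using cos_sq_add_sin_sq θ
  have hcont := continuous_setIntegral_pos_apply_sub (ℓ := ℓ) (by fun_prop) hℓ₀ a hf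
  have hsum := setIntegral_pos_apply_sub_add_neg (hℓ₀ 0) a hf
  rw [hf₀, show -ℓ 0 = ℓ π by ext; simp [ℓ]] at hsum
  obtain ⟨θ, hθ⟩ : ∃ θ, ∫ x in K ∩ {x | 0 < ℓ θ (x - a)}, f x ∂μ = 0 := by
    rcases le_total (∫ x in K ∩ {x | 0 < ℓ 0 (x - a)}, f x ∂μ) 0 with h | h
    · exact mem_range_of_exists_le_of_exists_ge hcont ⟨0, h⟩ ⟨π, by linarith⟩
    · exact mem_range_of_exists_le_of_exists_ge hcont ⟨π, by linarith⟩ ⟨0, h⟩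
  exact ⟨ℓ θ, Submodule.mem_span_pair.2 ⟨_, _, rfl⟩, hℓ₀ θ, hθ⟩

lemma IsBisectable.exists_inter_halfSpace (hK : IsBisectable μ f F K) (hf : IntegrableOn f K μ)
    (hF : IntegrableOn F K μ) {u v : E →L[ℝ] ℝ} (huv : LinearIndependent ℝ ![u, v]) (a : E) :
    ∃ ℓ ∈ Submodule.span ℝ {u, v}, ℓ ≠ 0 ∧ IsBisectable μ f F (K ∩ {x | 0 < ℓ (x - a)}) := by
  obtain ⟨ℓ, hℓ, hℓ₀, hzero⟩ :=
    exists_setIntegral_pos_apply_sub_eq_zero huv a hf hK.integral_eq_zero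
  have hinter (m : E →L[ℝ] ℝ) := hK.isOpen.inter (isOpen_setOf_pos_apply_sub m a)
  have hconv (m : E →L[ℝ] ℝ) := hK.convex.inter (convex_setOf_pos_apply_sub m a)
  have hsumf := setIntegral_pos_apply_sub_add_neg hℓ₀ a hf
  have hsumF := setIntegral_pos_apply_sub_add_neg hℓ₀ a hF
  rw [hzero, hK.integral_eq_zero, zero_add] at hsumf
  rcases lt_or_ge (∫ x in K ∩ {x | 0 < ℓ (x - a)}, F x ∂μ) 0 with hneg | hnonneg
  · exact ⟨ℓ, hℓ, hℓ₀, hinter ℓ, hconv ℓ, hzero, hneg⟩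
  · exact ⟨-ℓ, neg_mem hℓ, neg_ne_zero.2 hℓ₀, hinter _, hconv _, hsumf,
      by linarith [hK.integral_neg]⟩

end Bisection

section Collinear

variable {E : Type*} [NormedAddCommGroup E] [NormedSpace ℝ E]

lemma exists_linearIndependent_sub_of_not_collinear {C : Set E} (hC : ¬ Collinear ℝ C) :
    ∃ x ∈ C, ∃ y ∈ C, ∃ z ∈ C, LinearIndependent ℝ ![y - x, z - x] := by
  obtain ⟨x, hx⟩ : C.Nonempty := nonempty_iff_ne_empty.2 fun h => hC (h ▸ collinear_empty ℝ E)
  rw [collinear_iff_of_mem hx] at hC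
  push Not at hC
  obtain ⟨y, hy, hyx⟩ := hC 0
  obtain ⟨z, hz, hzx⟩ := hC (y - x)
  have hyx : y ≠ x := by simpa using hyx 0
  refine ⟨x, hx, y, hy, z, hz, (LinearIndependent.pair_iff' (sub_ne_zero.2 hyx)).2 fun c hc => ?_⟩
  exact hzx c (by rw [hc, vadd_eq_add, sub_add_cancel])

/-- The signed area spanned in `ℝ²` by the images of `x` and `y` under `(u, v)`. -/
def signedArea (u v : E →L[ℝ] ℝ) (x y : E) : ℝ :=
  u x * v y - u y * v x

lemma eq_zero_and_eq_zero_of_signedArea_pos {u v : E →L[ℝ] ℝ} {x y : E}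
    (h : 0 < signedArea u v x y) {c s : ℝ} (hx : (c • u + s • v) x = 0)
    (hy : (c • u + s • v) y = 0) : c = 0 ∧ s = 0 := by
  simp only [add_apply, smul_apply, smul_eq_mul] at hx hy
  have hc : c * signedArea u v x y = 0 := by
    unfold signedArea; linear_combination v y * hx - v x * hy
  have hs : s * signedArea u v x y = 0 := by
    unfold signedArea; linear_combination u x * hy - u y * hx
  exact ⟨(mul_eq_zero.1 hc).resolve_right h.ne', (mul_eq_zero.1 hs).resolve_right h.ne'⟩

lemma linearIndependent_of_signedArea_pos {u v : E →L[ℝ] ℝ} {x y : E}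
    (h : 0 < signedArea u v x y) : LinearIndependent ℝ ![u, v] :=
  LinearIndependent.pair_iff.2 fun _ _ hcs =>
    eq_zero_and_eq_zero_of_signedArea_pos h (by rw [hcs]; rfl) (by rw [hcs]; rfl)

lemma eq_zero_of_mem_span_pair_of_signedArea_pos {u v ℓ : E →L[ℝ] ℝ}
    (hℓ : ℓ ∈ Submodule.span ℝ {u, v}) {x y z : E} (hyz : 0 < signedArea u v y z)
    (hzx : 0 < signedArea u v z x) (hxy : 0 < signedArea u v x y) (hx : 0 ≤ ℓ x) (hy : 0 ≤ ℓ y)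
    (hz : 0 ≤ ℓ z) : ℓ = 0 := by
  obtain ⟨c, s, rfl⟩ := Submodule.mem_span_pair.1 hℓ
  have hrel : signedArea u v y z * (c • u + s • v) x + signedArea u v z x * (c • u + s • v) y +
      signedArea u v x y * (c • u + s • v) z = 0 := by
    simp only [add_apply, smul_apply, smul_eq_mul, signedArea]
    ring
  have hx₀ : (c • u + s • v) x = 0 := by nlinarith [mul_nonneg hzx.le hy, mul_nonneg hxy.le hz]
  have hy₀ : (c • u + s • v) y = 0 := by nlinarith [mul_nonneg hyz.le hx, mul_nonneg hxy.le hz]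
  obtain ⟨rfl, rfl⟩ := eq_zero_and_eq_zero_of_signedArea_pos hxy hx₀ hy₀
  simp

variable [FiniteDimensional ℝ E]

lemma exists_signedArea_pos {x y : E} (h : LinearIndependent ℝ ![x, y]) :
    ∃ u v : E →L[ℝ] ℝ, 0 < signedArea u v x y := by
  have hx : x ∉ Submodule.span ℝ {y} := fun hx => by
    obtain ⟨c, rfl⟩ := Submodule.mem_span_singleton.1 hx
    simpa using LinearIndependent.pair_iff.1 h 1 (-c) (by simp)
  have hy : y ∉ Submodule.span ℝ {x} := fun hy => by
    obtain ⟨c, rfl⟩ := Submodule.mem_span_singleton.1 hy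
    simpa using LinearIndependent.pair_iff.1 h (-c) 1 (by simp)
  obtain ⟨u, hux, huy⟩ := Submodule.exists_le_ker_of_notMem hx
  obtain ⟨v, hvy, hvx⟩ := Submodule.exists_le_ker_of_notMem hy
  have huy : u y = 0 := huy (Submodule.mem_span_singleton_self y)
  have hvx : v x = 0 := hvx (Submodule.mem_span_singleton_self x)
  refine ⟨(u x * v y) • u.toContinuousLinearMap, v.toContinuousLinearMap, ?_⟩
  simpa [signedArea, huy, hvx, mul_assoc] using
    mul_self_pos.2 (mul_ne_zero hux hvy)

lemma collinear_of_dense_of_forall_exists {D : Set ((E →L[ℝ] ℝ) × (E →L[ℝ] ℝ) × E)} (hD : Dense D)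
    {C : Set E} (hC : ∀ w ∈ D, LinearIndependent ℝ ![w.1, w.2.1] →
      ∃ ℓ ∈ Submodule.span ℝ {w.1, w.2.1}, ℓ ≠ 0 ∧ ∀ x ∈ C, 0 ≤ ℓ (x - w.2.2)) :
    Collinear ℝ C := by
  by_contra hcol
  obtain ⟨x, hx, y, hy, z, hz, hxyz⟩ := exists_linearIndependent_sub_of_not_collinear hcol
  obtain ⟨u₀, v₀, huv₀⟩ := exists_signedArea_pos hxyz
  set T := fun (w : (E →L[ℝ] ℝ) × (E →L[ℝ] ℝ) × E) x y =>
    signedArea w.1 w.2.1 (x - w.2.2) (y - w.2.2)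
  have hT x y : Continuous fun w => T w x y := by
    simp only [T, signedArea]; fun_prop
  have hopen : IsOpen {w | 0 < T w y z ∧ 0 < T w z x ∧ 0 < T w x y} :=
    (isOpen_lt continuous_const (hT y z)).inter
      ((isOpen_lt continuous_const (hT z x)).inter (isOpen_lt continuous_const (hT x y)))
  have hcentroid : (u₀, v₀, x + (3⁻¹ : ℝ) • ((y - x) + (z - x))) ∈
      {w | 0 < T w y z ∧ 0 < T w z x ∧ 0 < T w x y} := by
    simp only [signedArea, map_sub, map_add, map_smul, smul_eq_mul, mem_ofPred_eq, T] at huv₀ ⊢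
    constructor <;> [skip; constructor] <;> linarith
  obtain ⟨w, ⟨hyz, hzx, hxy⟩, hw⟩ := hD.inter_open_nonempty _ hopen ⟨_, hcentroid⟩
  obtain ⟨ℓ, hℓ, hℓ₀, hpos⟩ := hC w hw (linearIndependent_of_signedArea_pos hxy)
  exact hℓ₀ (eq_zero_of_mem_span_pair_of_signedArea_pos hℓ hyz hzx hxy (hpos x hx) (hpos y hy)
    (hpos z hz))

end Collinear

section Needle

variable {E : Type*} [NormedAddCommGroup E]

lemma exists_collinear_forall_exists_isBisectable [NormedSpace ℝ E] [FiniteDimensional ℝ E]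
    [MeasurableSpace E] [BorelSpace E] {μ : Measure E} [μ.IsAddHaarMeasure] {f F : E → ℝ}
    {Ω : Set E} (hΩ : IsBisectable μ f F Ω) (hΩb : Bornology.IsBounded Ω)
    (hf : IntegrableOn f Ω μ) (hF : IntegrableOn F Ω μ) :
    ∃ C : Set E, C.Nonempty ∧ Collinear ℝ C ∧
      ∀ U, IsOpen U → C ⊆ U → ∃ K ⊆ Ω ∩ U, IsBisectable μ f F K := by
  have hstep (K : {K // K ⊆ Ω ∧ IsBisectable μ f F K})
      (w : (E →L[ℝ] ℝ) × (E →L[ℝ] ℝ) × E) :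
      ∃ K' : {K // K ⊆ Ω ∧ IsBisectable μ f F K}, K'.1 ⊆ K.1 ∧
        (LinearIndependent ℝ ![w.1, w.2.1] →
          ∃ ℓ ∈ Submodule.span ℝ {w.1, w.2.1}, ℓ ≠ 0 ∧ ∀ x ∈ K'.1, 0 < ℓ (x - w.2.2)) := by
    by_cases hw : LinearIndependent ℝ ![w.1, w.2.1]
    · obtain ⟨ℓ, hℓ, hℓ₀, hK'⟩ := K.2.2.exists_inter_halfSpace (hf.mono_set K.2.1)
        (hF.mono_set K.2.1) hw w.2.2
      exact ⟨⟨_, inter_subset_left.trans K.2.1, hK'⟩, inter_subset_left,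
        fun _ => ⟨ℓ, hℓ, hℓ₀, fun x hx => hx.2⟩⟩
    · exact ⟨K, subset_rfl, fun h => absurd h hw⟩
  choose next hnext hside using hstep
  set d := TopologicalSpace.denseSeq ((E →L[ℝ] ℝ) × (E →L[ℝ] ℝ) × E)
  let K : ℕ → {K // K ⊆ Ω ∧ IsBisectable μ f F K} :=
    fun n => Nat.rec ⟨Ω, subset_rfl, hΩ⟩ (fun n K => next K (d n)) n
  have hanti : Antitone fun n => (K n).1 := antitone_nat_of_succ_le fun n => hnext (K n) (d n)
  have hcompact n : IsCompact (closure (K n).1) := (hΩb.subset (K n).2.1).isCompact_closure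
  refine ⟨⋂ n, closure (K n).1, ?_, ?_, fun U hU hCU => ?_⟩
  · exact IsCompact.nonempty_iInter_of_sequence_nonempty_isCompact_isClosed _
      (fun n => closure_mono (hanti n.le_succ)) (fun n => (K n).2.2.nonempty.closure) (hcompact 0)
      fun n => isClosed_closure
  · refine collinear_of_dense_of_forall_exists (TopologicalSpace.denseRange_denseSeq _) ?_
    rintro _ ⟨n, rfl⟩ hn
    obtain ⟨ℓ, hℓ, hℓ₀, hpos⟩ := hside (K n) (d n) hn
    have hclosed : IsClosed {x | 0 ≤ ℓ (x - (d n).2.2)} :=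
      isClosed_le continuous_const (by fun_prop)
    exact ⟨ℓ, hℓ, hℓ₀, fun x hx =>
      closure_minimal (fun x hx => (hpos x hx).le) hclosed (mem_iInter.1 hx (n + 1))⟩
  · obtain ⟨n, hn⟩ := exists_subset_nhds_of_isCompact
      (directed_of_isDirected_le fun m n h => closure_mono (hanti h)) hcompact
      fun x hx => hU.mem_nhds (hCU hx)
    exact ⟨(K n).1, subset_inter (K n).2.1 (subset_closure.trans hn), (K n).2.2⟩

lemma exists_norm_eq_one_forall_add_inner_smul_eq [InnerProductSpace ℝ E] [Nontrivial E] {C : Set E}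
    (hC : Collinear ℝ C) (a : E) (ha : a ∈ C) :
    ∃ e : E, ‖e‖ = 1 ∧ ∀ x ∈ C, a + inner ℝ e (x - a) • e = x := by
  obtain ⟨v, hv⟩ := (collinear_iff_of_mem ha).1 hC
  obtain ⟨e, he, c, rfl⟩ : ∃ e : E, ‖e‖ = 1 ∧ ∃ c : ℝ, v = c • e := by
    rcases eq_or_ne v 0 with rfl | hv₀
    · obtain ⟨e, he⟩ := exists_norm_eq E zero_le_one
      exact ⟨e, he, 0, (zero_smul ℝ e).symm⟩
    · exact ⟨‖v‖⁻¹ • v, norm_smul_inv_norm hv₀, ‖v‖, by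
        rw [smul_inv_smul₀ (norm_ne_zero_iff.2 hv₀)]⟩
  refine ⟨e, he, fun x hx => ?_⟩
  obtain ⟨r, rfl⟩ := hv x hx
  simp [inner_smul_right, he, add_comm, smul_smul]

lemma exists_forall_exists_isBisectable_norm_lt [InnerProductSpace ℝ E] [FiniteDimensional ℝ E]
    [Nontrivial E] [MeasurableSpace E] [BorelSpace E] {μ : Measure E} [μ.IsAddHaarMeasure]
    {f F : E → ℝ} {Ω : Set E} (hΩ : IsBisectable μ f F Ω) (hΩb : Bornology.IsBounded Ω)
    (hf : IntegrableOn f Ω μ) (hF : IntegrableOn F Ω μ) :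
    ∃ a e : E, ‖e‖ = 1 ∧ ∀ δ > 0, ∃ K ⊆ Ω, IsBisectable μ f F K ∧
      ∀ x ∈ K, ‖x - (a + inner ℝ e (x - a) • e)‖ < δ := by
  obtain ⟨C, ⟨a, ha⟩, hcol, hC⟩ := exists_collinear_forall_exists_isBisectable hΩ hΩb hf hF
  obtain ⟨e, he, hline⟩ := exists_norm_eq_one_forall_add_inner_smul_eq hcol a ha
  refine ⟨a, e, he, fun δ hδ => ?_⟩
  obtain ⟨K, hK, hKbis⟩ := hC {x | ‖x - (a + inner ℝ e (x - a) • e)‖ < δ}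
    (isOpen_lt (by fun_prop) continuous_const) fun x hx => by simpa [hline x hx] using hδ
  exact ⟨K, hK.trans inter_subset_left, hKbis, fun x hx => (hK hx).2⟩

end Needle

section Poincare

lemma integrableOn_of_continuous_of_isBounded {E : Type*} [MetricSpace E] [ProperSpace E]
    [MeasurableSpace E] [OpensMeasurableSpace E] {μ : Measure E} [IsFiniteMeasureOnCompacts μ]
    {s : Set E} (hs : Bornology.IsBounded s) {g : E → ℝ} (hg : Continuous g) :
    IntegrableOn g s μ :=
  (hg.continuousOn.integrableOn_compact hs.isCompact_closure).mono_set subset_closure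

variable {p : ℝ}

lemma continuous_abs_rpow_sub_two_mul (hp : 1 < p) : Continuous fun x : ℝ => |x| ^ (p - 2) * x := by
  have hderiv : Continuous (deriv fun x : ℝ => |x| ^ p) :=
    (contDiff_norm_rpow (E := ℝ) hp).continuous_deriv le_rfl
  refine (hderiv.const_smul p⁻¹).congr fun x => ?_
  rw [Pi.smul_apply, (hasDerivAt_abs_rpow x hp).deriv, smul_eq_mul, mul_assoc,
    inv_mul_cancel_left₀ (by positivity)]

lemma abs_rpow_sub_le_abs_sub_rpow (hp : 1 < p) (a c : ℝ) :
    |a| ^ p - p * c * (|a| ^ (p - 2) * a) ≤ |a - c| ^ p := by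
  have h := neg_mul_le_abs_rpow_add (.conjExponent hp) (c - a) a zero_le_one
  have ha : |a| ^ p = |a| ^ (p - 2) * a * a := by
    rcases eq_or_ne a 0 with rfl | ha
    · simp [(by positivity : p ≠ 0)]
    · rw [mul_assoc, ← sq, ← sq_abs, ← rpow_two, ← rpow_add (abs_pos.2 ha), sub_add_cancel]
  rw [abs_sub_comm c a, one_rpow] at h
  linear_combination h + p * ha

lemma integral_abs_rpow_le_integral_abs_sub_rpow {X : Type*} [MeasurableSpace X] {μ : Measure X}
    {f : X → ℝ} (hp : 1 < p) (c : ℝ) (hf : Integrable (fun x => |f x| ^ p) μ)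
    (hfc : Integrable (fun x => |f x - c| ^ p) μ)
    (hf' : Integrable (fun x => |f x| ^ (p - 2) * f x) μ)
    (hf₀ : ∫ x, |f x| ^ (p - 2) * f x ∂μ = 0) :
    ∫ x, |f x| ^ p ∂μ ≤ ∫ x, |f x - c| ^ p ∂μ := by
  have := integral_mono (hf.sub (hf'.const_mul (p * c))) hfc fun x =>
    abs_rpow_sub_le_abs_sub_rpow hp (f x) c
  rwa [integral_sub' hf (hf'.const_mul _), integral_const_mul, hf₀, mul_zero, sub_zero] at this

lemma setIntegral_comp_eq_integral_mul {E : Type*} [NormedAddCommGroup E] [NormedSpace ℝ E]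
    [MeasurableSpace E] [BorelSpace E] {μ : Measure E} {K : Set E} {ℓ : E →L[ℝ] ℝ} {h g : ℝ → ℝ}
    (hh : Measurable h) (hh₀ : ∀ t, 0 ≤ h t)
    (hmap : (μ.restrict K).map ℓ = volume.withDensity fun t => ENNReal.ofReal (h t))
    (hg : Continuous g) : ∫ x in K, g (ℓ x) ∂μ = ∫ t, h t * g t := by
  rw [← integral_map ℓ.continuous.aemeasurable hg.aestronglyMeasurable, hmap,
    integral_withDensity_eq_integral_toReal_smul hh.ennreal_ofReal (by simp)]
  simp_rw [ENNReal.toReal_ofReal (hh₀ _), smul_eq_mul]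

variable {E : Type*} [NormedAddCommGroup E]

lemma image_innerSL_subset_Icc [InnerProductSpace ℝ E] {e a : E} (he : ‖e‖ = 1) {R : ℝ} {K : Set E}
    (hK : K ⊆ closedBall a R) :
    innerSL ℝ e '' K ⊆ Icc (inner ℝ e a - R) (inner ℝ e a + R) := by
  rintro _ ⟨x, hx, rfl⟩
  have := (abs_real_inner_le_norm e (x - a)).trans_eq (by rw [he, one_mul])
  rw [inner_sub_right] at this
  rw [innerSL_apply_apply, ← Real.closedBall_eq_Icc, mem_closedBall, Real.dist_eq]
  exact this.trans (mem_closedBall_iff_norm.1 (hK hx))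

lemma diam_image_innerSL_le [InnerProductSpace ℝ E] {e : E} (he : ‖e‖ = 1) {K : Set E}
    (hK : Bornology.IsBounded K) : diam (innerSL ℝ e '' K) ≤ diam K := by
  have := (innerSL ℝ e).lipschitz.diam_image_le K hK
  rwa [coe_nnnorm, innerSL_apply_norm, he, one_mul] at this

lemma exists_pos_forall_dist_lt_lt_add [NormedSpace ℝ E] [FiniteDimensional ℝ E]
    {v : E → ℝ} (hv : ContDiff ℝ 1 v) (hp : 0 < p) (C : ℝ) (a : E) (R : ℝ) {η : ℝ} (hη : 0 < η) :
    ∃ δ > 0, ∀ x ∈ closedBall a R, ∀ y ∈ closedBall a R, ∀ z ∈ closedBall a R, dist y x < δ →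
      ‖fderiv ℝ v y‖ ^ p - C * |v y - v z| ^ p <
        ‖fderiv ℝ v x‖ ^ p - C * |v x - v z| ^ p + η := by
  have hcont : Continuous fun w : E × E => ‖fderiv ℝ v w.1‖ ^ p - C * |v w.1 - v w.2| ^ p := by
    have := hv.continuous_fderiv one_ne_zero
    have := hv.continuous
    fun_prop (disch := positivity)
  have hcompact := (isCompact_closedBall a R).prod (isCompact_closedBall a R)
  obtain ⟨δ, hδ, h⟩ := Metric.uniformContinuousOn_iff.1
    (hcompact.uniformContinuousOn_of_continuous hcont.continuousOn) η hη
  refine ⟨δ, hδ, fun x hx y hy z hz hxy => ?_⟩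
  have := (abs_lt.1 (h (y, z) ⟨hy, hz⟩ (x, z) ⟨hx, hz⟩ (by simp [Prod.dist_eq, hxy]))).2
  linarith

variable [MeasurableSpace E] [BorelSpace E] {μ : Measure E} {κ : ℝ} {Ω : Set E}

lemma exists_setIntegral_abs_deriv_rpow_sub_nonneg [NormedSpace ℝ E] [FiniteDimensional ℝ E]
    [μ.IsAddHaarMeasure] {K : Set E} (hK : MeasurableSet K) (hKb : Bornology.IsBounded K)
    (hKc : Convex ℝ K) {ℓ : E →L[ℝ] ℝ} (hℓ : ℓ ≠ 0) (hp : 1 < p) (hκ : 0 < κ)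
    (hL : κ * diam (ℓ '' K) < piP p) {w : ℝ → ℝ} (hw : ContDiff ℝ 1 w) :
    ∃ m ∈ Icc (sInf (ℓ '' K)) (sSup (ℓ '' K)),
      0 ≤ ∫ x in K, (|deriv w (ℓ x)| ^ p - κ ^ p * |w (ℓ x) - w m| ^ p) ∂μ := by
  obtain ⟨h, hhm, hh, hsupp, hmap⟩ :=
    exists_logConcave_map_restrict_eq_withDensity μ hK hKb hKc hℓ
  have hIb : Bornology.IsBounded (ℓ '' K) := ℓ.lipschitz.isBounded_image hKb
  have hI := hIb.subset_Icc_sInf_sSup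
  rw [Real.diam_eq hIb] at hL
  obtain ⟨m, hm, hnonneg⟩ := exists_integral_mul_abs_deriv_rpow_sub_nonneg (.conjExponent hp) hκ
    (Real.sInf_le_sSup _ hIb.bddBelow hIb.bddAbove) hL hh hhm
    (fun t ht => hsupp t fun h => ht (hI h)) hw
  have hcont : Continuous fun t => |deriv w t| ^ p - κ ^ p * |w t - w m| ^ p := by
    have := hw.continuous_deriv le_rfl
    have := hw.continuous
    fun_prop (disch := positivity)
  exact ⟨m, hm, hnonneg.trans_eq
    (setIntegral_comp_eq_integral_mul hhm hh.nonneg hmap hcont).symm⟩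

variable [InnerProductSpace ℝ E] [FiniteDimensional ℝ E] [μ.IsAddHaarMeasure] {K : Set E}

lemma exists_setIntegral_comp_axis_nonneg (hK : MeasurableSet K) (hKc : Convex ℝ K)
    (hK₀ : K.Nonempty) {a e : E} (he : ‖e‖ = 1) {R : ℝ} (hKR : K ⊆ closedBall a R) (hp : 1 < p)
    (hκ : 0 < κ) (hL : κ * diam K < piP p) {v : E → ℝ} (hv : ContDiff ℝ 1 v) :
    ∃ z ∈ closedBall a R, 0 ≤ ∫ x in K, (‖fderiv ℝ v (a + inner ℝ e (x - a) • e)‖ ^ p -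
      κ ^ p * |v (a + inner ℝ e (x - a) • e) - v z| ^ p) ∂μ := by
  have hKb : Bornology.IsBounded K := isBounded_closedBall.subset hKR
  have hℓ : innerSL ℝ e ≠ 0 := fun h => by simpa [he] using congrArg norm h
  have hLℓ : κ * diam (innerSL ℝ e '' K) < piP p :=
    (mul_le_mul_of_nonneg_left (diam_image_innerSL_le he hKb) hκ.le).trans_lt hL
  set γ : ℝ → E := fun t => a + (t - inner ℝ e a) • e with hγ
  have hγ_contDiff : ContDiff ℝ 1 γ := by fun_prop
  have hγ_inner (x : E) : a + inner ℝ e (x - a) • e = γ (innerSL ℝ e x) := by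
    rw [hγ, innerSL_apply_apply, inner_sub_right]
  have hderiv (t : ℝ) : |deriv (v ∘ γ) t| ≤ ‖fderiv ℝ v (γ t)‖ := by
    have hγ' : HasDerivAt γ ((1 : ℝ) • e) t :=
      (((hasDerivAt_id t).sub_const _).smul_const e).const_add a
    rw [((hv.differentiable one_ne_zero _).hasFDerivAt.comp_hasDerivAt t hγ').deriv, one_smul]
    simpa [he] using (fderiv ℝ v (γ t)).le_opNorm e
  obtain ⟨m, hm, hnonneg⟩ := exists_setIntegral_abs_deriv_rpow_sub_nonneg (μ := μ) hK hKb hKc hℓ hp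
    hκ hLℓ (hv.comp hγ_contDiff)
  refine ⟨γ m, ?_, ?_⟩
  · have hsub := image_innerSL_subset_Icc he hKR
    have h₁ := le_csInf (hK₀.image _) fun t ht => (hsub ht).1
    have h₂ := csSup_le (hK₀.image _) fun t ht => (hsub ht).2
    rw [mem_closedBall_iff_norm, hγ, add_sub_cancel_left, norm_smul, he, mul_one, norm_eq_abs,
      abs_sub_le_iff]
    constructor <;> linarith [hm.1, hm.2]
  · have hvc := hv.continuous
    have := hv.continuous_fderiv one_ne_zero
    have : Continuous (deriv (v ∘ γ)) := (hv.comp hγ_contDiff).continuous_deriv le_rfl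
    refine hnonneg.trans ?_
    simp_rw [hγ_inner]
    refine setIntegral_mono_on ?_ ?_ hK fun x _ =>
      sub_le_sub_right (rpow_le_rpow (abs_nonneg _) (hderiv _) (by positivity)) _ <;>
    exact integrableOn_of_continuous_of_isBounded hKb (by fun_prop (disch := positivity))

lemma setIntegral_nonneg_of_needle (hK : MeasurableSet K) (hKc : Convex ℝ K) {a e : E}
    (he : ‖e‖ = 1) {R : ℝ} (hKR : K ⊆ closedBall a R) (hp : 1 < p) (hκ : 0 < κ)
    (hL : κ * diam K < piP p) {v : E → ℝ} (hv : ContDiff ℝ 1 v) {η : ℝ}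
    (hη : ∀ x ∈ K, ∀ z ∈ closedBall a R,
      ‖fderiv ℝ v (a + inner ℝ e (x - a) • e)‖ ^ p -
        κ ^ p * |v (a + inner ℝ e (x - a) • e) - v z| ^ p ≤
      ‖fderiv ℝ v x‖ ^ p - κ ^ p * |v x - v z| ^ p + η)
    (hv₀ : ∫ x in K, |v x| ^ (p - 2) * v x ∂μ = 0) :
    0 ≤ ∫ x in K, (‖fderiv ℝ v x‖ ^ p - κ ^ p * |v x| ^ p + η) ∂μ := by
  rcases K.eq_empty_or_nonempty with rfl | hK₀
  · simp
  obtain ⟨z, hz, hnonneg⟩ :=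
    exists_setIntegral_comp_axis_nonneg (μ := μ) hK hKc hK₀ he hKR hp hκ hL hv
  have hvc := hv.continuous
  have := hv.continuous_fderiv one_ne_zero
  have hint {g : E → ℝ} (hg : Continuous g) : IntegrableOn g K μ :=
    integrableOn_of_continuous_of_isBounded (isBounded_closedBall.subset hKR) hg
  have hsplit (c : ℝ) : ∫ x in K, (‖fderiv ℝ v x‖ ^ p - κ ^ p * |v x - c| ^ p + η) ∂μ =
      ∫ x in K, ‖fderiv ℝ v x‖ ^ p ∂μ - κ ^ p * ∫ x in K, |v x - c| ^ p ∂μ +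
        ∫ _ in K, η ∂μ := by
    rw [integral_add (hint (by fun_prop (disch := positivity))) (hint continuous_const),
      integral_sub (hint (by fun_prop (disch := positivity)))
        (hint (by fun_prop (disch := positivity))), integral_const_mul]
  have hcenter : ∫ x in K, |v x| ^ p ∂μ ≤ ∫ x in K, |v x - v z| ^ p ∂μ :=
    integral_abs_rpow_le_integral_abs_sub_rpow hp _
      (hint (by fun_prop (disch := positivity))) (hint (by fun_prop (disch := positivity)))
      (hint ((continuous_abs_rpow_sub_two_mul hp).comp hvc)) hv₀
  calc 0 ≤ ∫ x in K, (‖fderiv ℝ v x‖ ^ p - κ ^ p * |v x - v z| ^ p + η) ∂μ :=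
        hnonneg.trans <| setIntegral_mono_on (hint (by fun_prop (disch := positivity)))
          (hint (by fun_prop (disch := positivity))) hK fun x hx => hη x hx z hz
    _ ≤ ∫ x in K, (‖fderiv ℝ v x‖ ^ p - κ ^ p * |v x| ^ p + η) ∂μ := by
      have hsplit₀ := hsplit 0
      simp only [sub_zero] at hsplit₀
      rw [hsplit, hsplit₀]
      gcongr

lemma setIntegral_sub_add_nonneg [Nontrivial E] (hΩo : IsOpen Ω) (hΩb : Bornology.IsBounded Ω)
    (hΩc : Convex ℝ Ω) (hp : 1 < p) (hκ : 0 < κ) (hL : κ * diam Ω < piP p) {v : E → ℝ}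
    (hv : ContDiff ℝ 1 v) (hv₀ : ∫ x in Ω, |v x| ^ (p - 2) * v x ∂μ = 0) {η : ℝ} (hη : 0 < η) :
    0 ≤ ∫ x in Ω, (‖fderiv ℝ v x‖ ^ p - κ ^ p * |v x| ^ p + η) ∂μ := by
  by_contra! hneg
  have hvc := hv.continuous
  have := hv.continuous_fderiv one_ne_zero
  obtain ⟨a, e, he, hneedle⟩ := exists_forall_exists_isBisectable_norm_lt
    ⟨hΩo, hΩc, hv₀, hneg⟩ hΩb
    (integrableOn_of_continuous_of_isBounded hΩb ((continuous_abs_rpow_sub_two_mul hp).comp hvc))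
    (integrableOn_of_continuous_of_isBounded hΩb (by fun_prop (disch := positivity)))
  obtain ⟨R, hR⟩ := hΩb.subset_closedBall a
  obtain ⟨δ, hδ, hclose⟩ := exists_pos_forall_dist_lt_lt_add hv (one_pos.trans hp) (κ ^ p) a R hη
  obtain ⟨K, hKΩ, hK, hKδ⟩ := hneedle δ hδ
  have hKR := hKΩ.trans hR
  have haxis {x : E} (hx : x ∈ K) : a + inner ℝ e (x - a) • e ∈ closedBall a R := by
    rw [mem_closedBall_iff_norm, add_sub_cancel_left, norm_smul, he, mul_one]
    refine (norm_inner_le_norm _ _).trans ?_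
    rw [he, one_mul]
    exact mem_closedBall_iff_norm.1 (hKR hx)
  refine hK.integral_neg.not_ge (setIntegral_nonneg_of_needle hK.isOpen.measurableSet hK.convex he
    hKR hp hκ ((mul_le_mul_of_nonneg_left (diam_mono hKΩ hΩb) hκ.le).trans_lt hL) hv
    (fun x hx z hz => (hclose x (hKR hx) _ (haxis hx) z hz ?_).le) hK.integral_eq_zero)
  rw [dist_eq_norm']
  exact hKδ x hx

theorem setIntegral_abs_rpow_le_of_contDiff [Nontrivial E] (hΩo : IsOpen Ω)
    (hΩb : Bornology.IsBounded Ω) (hΩc : Convex ℝ Ω) (hp : 1 < p) {v : E → ℝ}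
    (hv : ContDiff ℝ 1 v) (hv₀ : ∫ x in Ω, |v x| ^ (p - 2) * v x ∂μ = 0) :
    (piP p / diam Ω) ^ p * ∫ x in Ω, |v x| ^ p ∂μ ≤ ∫ x in Ω, ‖fderiv ℝ v x‖ ^ p ∂μ := by
  have hp₀ : 0 < p := one_pos.trans hp
  rcases (diam_nonneg (s := Ω)).eq_or_lt' with hd | hd
  · rw [hd, div_zero, zero_rpow hp₀.ne', zero_mul]
    positivity
  have hvc := hv.continuous
  have := hv.continuous_fderiv one_ne_zero
  have hint {g : E → ℝ} (hg : Continuous g) : IntegrableOn g Ω μ :=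
    integrableOn_of_continuous_of_isBounded hΩb hg
  have hle_add {κ η : ℝ} (hκ : 0 < κ) (hκL : κ < piP p / diam Ω) (hη : 0 < η) :
      κ ^ p * ∫ x in Ω, |v x| ^ p ∂μ ≤ ∫ x in Ω, ‖fderiv ℝ v x‖ ^ p ∂μ + η * μ.real Ω := by
    have h := setIntegral_sub_add_nonneg hΩo hΩb hΩc hp hκ ((lt_div_iff₀ hd).1 hκL) hv hv₀ hη
    rw [integral_add (hint (by fun_prop (disch := positivity))) (hint continuous_const),
      integral_sub (hint (by fun_prop (disch := positivity)))
        (hint (by fun_prop (disch := positivity))), integral_const_mul, setIntegral_const,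
      smul_eq_mul] at h
    linarith
  have hle {κ : ℝ} (hκ : 0 < κ) (hκL : κ < piP p / diam Ω) :
      κ ^ p * ∫ x in Ω, |v x| ^ p ∂μ ≤ ∫ x in Ω, ‖fderiv ℝ v x‖ ^ p ∂μ := by
    have hlim : Filter.Tendsto (fun η : ℝ => ∫ x in Ω, ‖fderiv ℝ v x‖ ^ p ∂μ + η * μ.real Ω)
        (𝓝[>] 0) (𝓝 (∫ x in Ω, ‖fderiv ℝ v x‖ ^ p ∂μ)) :=
      (Continuous.tendsto' (by fun_prop) _ _ (by simp)).mono_left nhdsWithin_le_nhds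
    exact ge_of_tendsto hlim (eventually_mem_nhdsWithin.mono fun η hη => hle_add hκ hκL hη)
  have hlim : Filter.Tendsto (fun κ : ℝ => κ ^ p * ∫ x in Ω, |v x| ^ p ∂μ) (𝓝[<] (piP p / diam Ω))
      (𝓝 ((piP p / diam Ω) ^ p * ∫ x in Ω, |v x| ^ p ∂μ)) :=
    (((continuous_rpow_const hp₀.le).mul_const _).tendsto _).mono_left nhdsWithin_le_nhds
  refine le_of_tendsto hlim ?_
  filter_upwards [Ioo_mem_nhdsLT (div_pos (piP_pos hp) hd)] with κ hκ using hle hκ.1 hκ.2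

end Poincare

section Mollification

open scoped Convolution

variable {E : Type*} [NormedAddCommGroup E] [NormedSpace ℝ E] [FiniteDimensional ℝ E]
  [MeasurableSpace E] [BorelSpace E] (μ : Measure E) [μ.IsAddHaarMeasure]

lemma norm_normed_convolution_le {F : Type*} [NormedAddCommGroup F] [NormedSpace ℝ F] {f : E → F}
    {C : ℝ} (hf : ∀ x, ‖f x‖ ≤ C) (φ : ContDiffBump (0 : E)) (x : E) :
    ‖(φ.normed μ ⋆[ContinuousLinearMap.lsmul ℝ ℝ, μ] f) x‖ ≤ C :=
  calc ‖(φ.normed μ ⋆[ContinuousLinearMap.lsmul ℝ ℝ, μ] f) x‖ ≤ ∫ t, φ.normed μ t * C ∂μ := by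
        refine norm_integral_le_of_norm_le (φ.integrable_normed.mul_const _)
          (ae_of_all _ fun t => ?_)
        rw [ContinuousLinearMap.lsmul_apply, norm_smul, norm_of_nonneg (φ.nonneg_normed t)]
        exact mul_le_mul_of_nonneg_left (hf _) (φ.nonneg_normed t)
    _ = C := by rw [integral_mul_const, φ.integral_normed, one_mul]

variable {g : E → ℝ} {C : ℝ≥0}

lemma hasFDerivAt_normed_convolution (hg : LipschitzWith C g) (φ : ContDiffBump (0 : E)) (x : E) :
    HasFDerivAt (φ.normed μ ⋆[ContinuousLinearMap.lsmul ℝ ℝ, μ] g)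
      ((φ.normed μ ⋆[ContinuousLinearMap.lsmul ℝ ℝ, μ] fderiv ℝ g) x) x := by
  have hgc := hg.continuous
  have hφc : Continuous (φ.normed μ) := φ.continuous_normed
  refine (hasFDerivAt_integral_of_dominated_loc_of_lip (μ := μ) (𝕜 := ℝ) (x₀ := x) (s := univ)
    (F := fun x t => φ.normed μ t * g (x - t)) (F' := fun t => φ.normed μ t • fderiv ℝ g (x - t))
    (bound := fun t => φ.normed μ t * C) Filter.univ_mem
    (.of_forall fun y => Continuous.aestronglyMeasurable (by fun_prop)) ?_ ?_ (ae_of_all _ ?_)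
    (φ.integrable_normed.mul_const _) ?_).2
  · exact Continuous.integrable_of_hasCompactSupport (by fun_prop)
      φ.hasCompactSupport_normed.mul_right
  · exact (hφc.measurable.smul ((measurable_fderiv ℝ g).comp (by fun_prop))).aestronglyMeasurable
  · intro t
    refine (LipschitzWith.of_dist_le_mul fun y z => ?_).lipschitzOnWith
    rw [Real.dist_eq, ← mul_sub, abs_mul, coe_nnabs, abs_mul, abs_of_nonneg C.coe_nonneg, mul_assoc]
    refine mul_le_mul_of_nonneg_left ?_ (abs_nonneg _)
    simpa [Real.dist_eq] using hg.dist_le_mul (y - t) (z - t)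
  · filter_upwards [(quasiMeasurePreserving_sub_left μ x).ae hg.ae_differentiableAt] with t ht
    exact (ht.hasFDerivAt.comp x ((hasFDerivAt_id x).sub_const t)).const_mul (φ.normed μ t)

theorem exists_contDiff_tendsto_of_lipschitzWith (hg : LipschitzWith C g) :
    ∃ v : ℕ → E → ℝ, (∀ k, ContDiff ℝ 1 (v k)) ∧ (∀ k x, dist (v k x) (g x) ≤ C) ∧
      (∀ k x, ‖fderiv ℝ (v k) x‖ ≤ C) ∧
      (∀ x, Filter.Tendsto (fun k => v k x) Filter.atTop (𝓝 (g x))) ∧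
      ∀ᵐ x ∂μ, Filter.Tendsto (fun k => fderiv ℝ (v k) x) Filter.atTop (𝓝 (fderiv ℝ g x)) := by
  have hr (k : ℕ) : 0 < 1 / ((k : ℝ) + 1) := Nat.one_div_pos_of_nat
  let φ (k : ℕ) : ContDiffBump (0 : E) :=
    ⟨1 / ((k : ℝ) + 1) / 2, 1 / ((k : ℝ) + 1), half_pos (hr k), half_lt_self (hr k)⟩
  have hφ : Filter.Tendsto (fun k => (φ k).rOut) Filter.atTop (𝓝 0) :=
    tendsto_one_div_add_atTop_nhds_zero_nat
  have hderiv (x : E) : ‖fderiv ℝ g x‖ ≤ C := norm_fderiv_le_of_lipschitz ℝ hg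
  have hfd (k : ℕ) (x : E) := (hasFDerivAt_normed_convolution μ hg (φ k) x).fderiv
  refine ⟨fun k => (φ k).normed μ ⋆[ContinuousLinearMap.lsmul ℝ ℝ, μ] g, fun k => ?_,
    fun k x => ?_, fun k x => ?_, fun x => ?_, ?_⟩
  · exact (φ k).hasCompactSupport_normed.contDiff_convolution_left _ (φ k).contDiff_normed
      hg.continuous.locallyIntegrable
  · refine (φ k).dist_normed_convolution_le hg.continuous.aestronglyMeasurable fun y hy => ?_
    have hyx : dist y x ≤ 1 := (mem_ball.1 hy).le.trans <|
      div_le_one_of_le₀ (le_add_of_nonneg_left k.cast_nonneg) (by positivity)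
    exact (hg.dist_le_mul y x).trans (mul_le_of_le_one_right C.coe_nonneg hyx)
  · rw [hfd]
    exact norm_normed_convolution_le μ hderiv (φ k) x
  · exact ContDiffBump.convolution_tendsto_right_of_continuous hφ hg.continuous x
  · have hloc : LocallyIntegrable (fderiv ℝ g) μ :=
      (locallyIntegrable_const (C : ℝ)).mono (measurable_fderiv ℝ g).aestronglyMeasurable
        (ae_of_all _ fun x => by simpa using hderiv x)
    have hφ₂ (k : ℕ) : (φ k).rOut ≤ 2 * (φ k).rIn := (mul_div_cancel₀ _ two_ne_zero).ge
    filter_upwards [ContDiffBump.ae_convolution_tendsto_right_of_locallyIntegrable hφ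
      (.of_forall hφ₂) hloc] with x hx
    simpa only [hfd] using hx

end Mollification

section Lipschitz

variable {p q : ℝ}

lemma exists_integral_abs_sub_rpow_mul_eq_zero {X : Type*} [MeasurableSpace X] {μ : Measure X}
    [IsFiniteMeasure μ] (hp : 1 < p) {u : X → ℝ} (hu : AEStronglyMeasurable u μ) {M : ℝ}
    (hM₀ : 0 ≤ M) (hM : ∀ᵐ x ∂μ, |u x| ≤ M) :
    ∃ c ∈ Icc (-M) M, ∫ x, |u x - c| ^ (p - 2) * (u x - c) ∂μ = 0 := by
  have hpow := continuous_abs_rpow_sub_two_mul hp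
  obtain ⟨B, hB⟩ := (isCompact_Icc (a := -(2 * M)) (b := 2 * M)).exists_bound_of_continuousOn
    hpow.continuousOn
  have hcont : ContinuousOn (fun c => ∫ x, |u x - c| ^ (p - 2) * (u x - c) ∂μ) (Icc (-M) M) := by
    refine continuousOn_of_dominated (bound := fun _ => B) (fun c _ =>
      hpow.comp_aestronglyMeasurable (hu.sub aestronglyMeasurable_const)) (fun c hc => ?_)
      (integrable_const B) (ae_of_all _ fun x => Continuous.continuousOn ?_)
    · filter_upwards [hM] with x hx
      have := abs_le.1 hx
      exact hB _ ⟨by linarith [hc.2], by linarith [hc.1]⟩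
    · exact hpow.comp (continuous_const.sub continuous_id)
  have hzero : (0 : ℝ) ∈ Icc (∫ x, |u x - M| ^ (p - 2) * (u x - M) ∂μ)
      (∫ x, |u x - (-M)| ^ (p - 2) * (u x - (-M)) ∂μ) := by
    refine ⟨integral_nonpos_of_ae ?_, integral_nonneg_of_ae ?_⟩ <;> filter_upwards [hM] with x hx
    · exact mul_nonpos_of_nonneg_of_nonpos (by positivity) (by linarith [(abs_le.1 hx).2])
    · exact mul_nonneg (by positivity) (by linarith [(abs_le.1 hx).1])
  exact intermediate_value_Icc' (neg_le_self hM₀) hcont hzero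

lemma integral_abs_rpow_rpow_div_le {X : Type*} [MeasurableSpace X] {μ : Measure X}
    [IsFiniteMeasure μ] {f : X → ℝ} (hq : 0 < q) (hqp : q ≤ p)
    (hfq : Integrable (fun x => |f x| ^ q) μ) (hfp : Integrable (fun x => |f x| ^ p) μ) :
    (∫ x, |f x| ^ q ∂μ) ^ (p / q) ≤ μ.real univ ^ (p / q - 1) * ∫ x, |f x| ^ p ∂μ := by
  have hr : 1 ≤ p / q := (one_le_div hq).2 hqp
  have hr₀ : 0 < p / q := one_pos.trans_le hr
  rcases eq_zero_or_neZero μ with rfl | hμ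
  · simp [hr₀.ne']
  have hV : 0 < μ.real univ := measureReal_univ_pos
  have hpow (x : X) : (|f x| ^ q) ^ (p / q) = |f x| ^ p := by
    rw [← rpow_mul (abs_nonneg _), mul_div_cancel₀ _ hq.ne']
  have hjensen := (convexOn_rpow hr).map_average_le (continuous_rpow_const hr₀.le).continuousOn
    isClosed_Ici (ae_of_all _ fun x => rpow_nonneg (abs_nonneg (f x)) q) hfq
    (by simpa only [Function.comp_def, hpow] using hfp)
  simp only [average_eq, smul_eq_mul, inv_mul_eq_div, hpow] at hjensen
  rw [div_rpow (by positivity) hV.le, div_le_div_iff₀ (by positivity) hV,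
    mul_comm (∫ x, |f x| ^ p ∂μ)] at hjensen
  rwa [rpow_sub_one hV.ne', div_mul_eq_mul_div, le_div_iff₀ hV]

variable {E : Type*} [NormedAddCommGroup E] [InnerProductSpace ℝ E] [FiniteDimensional ℝ E]
  [Nontrivial E] [MeasurableSpace E] [BorelSpace E] {μ : Measure E} [μ.IsAddHaarMeasure]
  {Ω : Set E} {C : ℝ≥0} {g : E → ℝ}

theorem exists_setIntegral_abs_sub_rpow_le_of_lipschitzWith (hΩo : IsOpen Ω)
    (hΩb : Bornology.IsBounded Ω) (hΩc : Convex ℝ Ω) (hp : 1 < p) (hg : LipschitzWith C g) :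
    ∃ c, (piP p / diam Ω) ^ p * ∫ x in Ω, |g x - c| ^ p ∂μ ≤ ∫ x in Ω, ‖fderiv ℝ g x‖ ^ p ∂μ := by
  have hp₀ : 0 ≤ p := by positivity
  have hfin : IsFiniteMeasure (μ.restrict Ω) := isFiniteMeasure_restrict.2 hΩb.measure_lt_top.ne
  obtain ⟨v, hv, hvg, hv', hlim, hlim'⟩ := exists_contDiff_tendsto_of_lipschitzWith μ hg
  obtain ⟨B, hB₀, hB⟩ : ∃ B ≥ 0, ∀ x ∈ Ω, |g x| ≤ B := by
    obtain ⟨B, hB⟩ := hΩb.isCompact_closure.exists_bound_of_continuousOn hg.continuous.continuousOn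
    exact ⟨|B|, abs_nonneg B, fun x hx => (hB x (subset_closure hx)).trans (le_abs_self B)⟩
  have hvB (k : ℕ) : ∀ x ∈ Ω, |v k x| ≤ B + C := fun x hx => by
    linarith [abs_sub_abs_le_abs_sub (v k x) (g x), hB x hx, hvg k x, Real.dist_eq (v k x) (g x)]
  have hae {P : E → Prop} (h : ∀ x ∈ Ω, P x) : ∀ᵐ x ∂μ.restrict Ω, P x :=
    (ae_restrict_mem hΩo.measurableSet).mono h
  choose c hc hc₀ using fun k => exists_integral_abs_sub_rpow_mul_eq_zero hp
    (hv k).continuous.aestronglyMeasurable (by positivity) (hae (hvB k))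
  have hle (k : ℕ) : (piP p / diam Ω) ^ p * ∫ x in Ω, |v k x - c k| ^ p ∂μ ≤
      ∫ x in Ω, ‖fderiv ℝ (v k) x‖ ^ p ∂μ := by
    simpa only [fderiv_sub_const] using
      setIntegral_abs_rpow_le_of_contDiff hΩo hΩb hΩc hp ((hv k).sub contDiff_const) (hc₀ k)
  obtain ⟨c', -, s, hs, hcs⟩ := isCompact_Icc.tendsto_subseq hc
  refine ⟨c', le_of_tendsto_of_tendsto' (b := Filter.atTop) (.const_mul _ ?_) ?_
    fun k => hle (s k)⟩
  · refine tendsto_integral_of_dominated_convergence (fun _ => (2 * (B + C)) ^ p) (fun k => ?_)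
      (integrable_const _) (fun k => hae fun x hx => ?_) (ae_of_all _ fun x => ?_)
    · have := (hv (s k)).continuous
      exact Continuous.aestronglyMeasurable (by fun_prop (disch := assumption))
    · rw [norm_of_nonneg (by positivity)]
      have h₁ := abs_le.1 (hvB (s k) x hx)
      have h₂ := hc (s k)
      exact rpow_le_rpow (abs_nonneg _)
        (abs_le.2 ⟨by linarith [h₂.2], by linarith [h₂.1]⟩) hp₀
    · exact ((((hlim x).comp hs.tendsto_atTop).sub hcs).abs).rpow_const (.inr hp₀)
  · refine tendsto_integral_of_dominated_convergence (fun _ => (C : ℝ) ^ p) (fun k => ?_)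
      (integrable_const _) (fun k => ae_of_all _ fun x => ?_) ?_
    · have := (hv (s k)).continuous_fderiv one_ne_zero
      exact Continuous.aestronglyMeasurable (by fun_prop (disch := assumption))
    · rw [norm_of_nonneg (by positivity)]
      exact rpow_le_rpow (norm_nonneg _) (hv' _ x) hp₀
    · filter_upwards [ae_restrict_of_ae hlim'] with x hx
      exact (hx.comp hs.tendsto_atTop).norm.rpow_const (.inr hp₀)

theorem setIntegral_abs_rpow_rpow_div_le_of_lipschitzWith (hΩo : IsOpen Ω)
    (hΩb : Bornology.IsBounded Ω) (hΩc : Convex ℝ Ω) (hq : 1 < q) (hqp : q ≤ p)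
    (hg : LipschitzWith C g) (hg₀ : ∫ x in Ω, |g x| ^ (q - 2) * g x ∂μ = 0) :
    (piP p / diam Ω) ^ p * (∫ x in Ω, |g x| ^ q ∂μ) ^ (p / q) ≤
      μ.real Ω ^ (p / q - 1) * ∫ x in Ω, ‖fderiv ℝ g x‖ ^ p ∂μ := by
  have hp : 1 < p := hq.trans_le hqp
  obtain ⟨c, hc⟩ := exists_setIntegral_abs_sub_rpow_le_of_lipschitzWith (μ := μ) hΩo hΩb hΩc hp hg
  have hfin : IsFiniteMeasure (μ.restrict Ω) := isFiniteMeasure_restrict.2 hΩb.measure_lt_top.ne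
  have hgc := hg.continuous
  have hint {f : E → ℝ} (hf : Continuous f) : IntegrableOn f Ω μ :=
    integrableOn_of_continuous_of_isBounded hΩb hf
  have hintq (c : ℝ) : IntegrableOn (fun x => |g x - c| ^ q) Ω μ :=
    hint (by fun_prop (disch := positivity))
  have hcenter : ∫ x in Ω, |g x| ^ q ∂μ ≤ ∫ x in Ω, |g x - c| ^ q ∂μ :=
    integral_abs_rpow_le_integral_abs_sub_rpow hq c (hint (by fun_prop (disch := positivity)))
      (hintq c) (hint ((continuous_abs_rpow_sub_two_mul hq).comp hgc)) hg₀
  have hjensen : (∫ x in Ω, |g x - c| ^ q ∂μ) ^ (p / q) ≤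
      μ.real Ω ^ (p / q - 1) * ∫ x in Ω, |g x - c| ^ p ∂μ := by
    simpa using integral_abs_rpow_rpow_div_le (one_pos.trans hq) hqp (hintq c)
      (hint (by fun_prop (disch := positivity)))
  have hpiP : 0 ≤ piP p / diam Ω := div_nonneg (piP_pos hp).le diam_nonneg
  calc (piP p / diam Ω) ^ p * (∫ x in Ω, |g x| ^ q ∂μ) ^ (p / q)
      ≤ (piP p / diam Ω) ^ p * (∫ x in Ω, |g x - c| ^ q ∂μ) ^ (p / q) := by gcongr
    _ ≤ (piP p / diam Ω) ^ p * (μ.real Ω ^ (p / q - 1) * ∫ x in Ω, |g x - c| ^ p ∂μ) := by gcongr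
    _ = μ.real Ω ^ (p / q - 1) * ((piP p / diam Ω) ^ p * ∫ x in Ω, |g x - c| ^ p ∂μ) :=
        mul_left_comm _ _ _
    _ ≤ μ.real Ω ^ (p / q - 1) * ∫ x in Ω, ‖fderiv ℝ g x‖ ^ p ∂μ := by gcongr

theorem setIntegral_abs_rpow_rpow_div_le_of_lipschitzOnWith (hΩo : IsOpen Ω)
    (hΩb : Bornology.IsBounded Ω) (hΩc : Convex ℝ Ω) (hq : 1 < q) (hqp : q ≤ p)
    (hg : LipschitzOnWith C g Ω) (hg₀ : ∫ x in Ω, |g x| ^ (q - 2) * g x ∂μ = 0) :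
    (piP p / diam Ω) ^ p * (∫ x in Ω, |g x| ^ q ∂μ) ^ (p / q) ≤
      μ.real Ω ^ (p / q - 1) * ∫ x in Ω, ‖fderiv ℝ g x‖ ^ p ∂μ := by
  obtain ⟨f, hf, hgf⟩ := hg.extend_real
  have hcongr {F : ℝ → ℝ} : ∫ x in Ω, F (g x) ∂μ = ∫ x in Ω, F (f x) ∂μ :=
    setIntegral_congr_fun hΩo.measurableSet fun x hx => congrArg F (hgf hx)
  have hfderiv : ∫ x in Ω, ‖fderiv ℝ g x‖ ^ p ∂μ = ∫ x in Ω, ‖fderiv ℝ f x‖ ^ p ∂μ :=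
    setIntegral_congr_fun hΩo.measurableSet fun x hx => by
      simp only [(hgf.eventuallyEq_of_mem (hΩo.mem_nhds hx)).fderiv_eq]
  rw [hcongr (F := fun t => |t| ^ (q - 2) * t)] at hg₀
  rw [hcongr (F := fun t => |t| ^ q), hfderiv]
  exact setIntegral_abs_rpow_rpow_div_le_of_lipschitzWith hΩo hΩb hΩc hq hqp hf hg₀

end Lipschitz

section Rayleigh

variable {p q : ℝ}

lemma nontrivial_of_isOpen {X : Type*} [TopologicalSpace X] [T1Space X]
    [∀ x : X, (𝓝[≠] x).NeBot] {s : Set X} (hs : IsOpen s) (hne : s.Nonempty) : s.Nontrivial :=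
  have ⟨x, hx⟩ := hne
  (infinite_of_mem_nhds x (hs.mem_nhds hx)).nontrivial

lemma measureReal_pos_of_isOpen {X : Type*} [PseudoMetricSpace X] [ProperSpace X]
    [MeasurableSpace X] {μ : Measure X} [μ.IsOpenPosMeasure] [IsFiniteMeasureOnCompacts μ]
    {s : Set X} (hs : IsOpen s) (hb : Bornology.IsBounded s) (hne : s.Nonempty) : 0 < μ.real s :=
  ENNReal.toReal_pos (hs.measure_pos μ hne).ne' hb.measure_lt_top.ne

lemma setIntegral_abs_rpow_pos {X : Type*} [TopologicalSpace X] [MeasurableSpace X]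
    {μ : Measure X} [μ.IsOpenPosMeasure] {s : Set X} {f : X → ℝ} (hs : IsOpen s)
    (hf : ContinuousOn f s) (hne : ∃ x ∈ s, f x ≠ 0)
    (hint : IntegrableOn (fun x => |f x| ^ q) s μ) : 0 < ∫ x in s, |f x| ^ q ∂μ := by
  obtain ⟨x, hx, hfx⟩ := hne
  rw [setIntegral_pos_iff_support_of_nonneg_ae (ae_of_all _ fun x => by positivity) hint]
  have ho : IsOpen (s ∩ f ⁻¹' {0}ᶜ) := hf.isOpen_inter_preimage hs isOpen_compl_singleton
  refine (ho.measure_pos μ ⟨x, hx, hfx⟩).trans_le (measure_mono fun y hy => ⟨?_, hy.1⟩)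
  exact (rpow_pos_of_pos (abs_pos.2 hy.2) q).ne'

variable {E : Type*} [NormedAddCommGroup E] [InnerProductSpace ℝ E]
  [FiniteDimensional ℝ E] [Nontrivial E] [MeasurableSpace E] [BorelSpace E] {μ : Measure E}
  [μ.IsAddHaarMeasure] {Ω : Set E}

lemma exists_lipschitzWith_setIntegral_abs_rpow_mul_eq_zero (hΩo : IsOpen Ω)
    (hΩb : Bornology.IsBounded Ω) (hΩne : Ω.Nonempty) (hq : 1 < q) :
    ∃ (v : E → ℝ) (K : ℝ≥0), LipschitzWith K v ∧ (∃ x ∈ Ω, v x ≠ 0) ∧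
      ∫ x in Ω, |v x| ^ (q - 2) * v x ∂μ = 0 := by
  obtain ⟨ℓ, hℓ⟩ := exists_ne (0 : E →L[ℝ] ℝ)
  obtain ⟨M, hM⟩ := hΩb.isCompact_closure.exists_bound_of_continuousOn ℓ.continuous.continuousOn
  have hfin : IsFiniteMeasure (μ.restrict Ω) := isFiniteMeasure_restrict.2 hΩb.measure_lt_top.ne
  have hM₀ : 0 ≤ M := hΩne.elim fun x hx => (norm_nonneg _).trans (hM x (subset_closure hx))
  obtain ⟨c, -, hc⟩ := exists_integral_abs_sub_rpow_mul_eq_zero (μ := μ.restrict Ω) hq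
    ℓ.continuous.aestronglyMeasurable hM₀
    ((ae_restrict_mem hΩo.measurableSet).mono fun x hx => hM x (subset_closure hx))
  have himage : (ℓ '' Ω).Nontrivial :=
    nontrivial_of_isOpen (ℓ.isOpenMap_of_ne_zero hℓ _ hΩo) (hΩne.image ℓ)
  obtain ⟨-, ⟨x, hx, rfl⟩, hxc⟩ := himage.exists_ne c
  exact ⟨fun x => ℓ x - c, ‖ℓ‖₊, by simpa only [add_zero] using ℓ.lipschitz.sub (.const c),
    ⟨x, hx, sub_ne_zero.2 hxc⟩, hc⟩

theorem rpow_mul_rpow_le_setIntegral_div_of_lipschitzOnWith (hΩo : IsOpen Ω)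
    (hΩb : Bornology.IsBounded Ω) (hΩc : Convex ℝ Ω) (hq : 1 < q) (hqp : q ≤ p) {g : E → ℝ}
    {C : ℝ≥0} (hg : LipschitzOnWith C g (closure Ω)) (hne : ∃ x ∈ Ω, g x ≠ 0)
    (hg₀ : ∫ x in Ω, |g x| ^ (q - 2) * g x ∂μ = 0) :
    μ.real Ω ^ (1 - p / q) * (piP p / diam Ω) ^ p ≤
      (∫ x in Ω, ‖fderiv ℝ g x‖ ^ p ∂μ) / (∫ x in Ω, |g x| ^ q ∂μ) ^ (p / q) := by
  have hgq : ContinuousOn (fun x => |g x| ^ q) (closure Ω) :=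
    hg.continuousOn.abs.rpow_const fun _ _ => .inr (by positivity)
  have hpos : 0 < ∫ x in Ω, |g x| ^ q ∂μ :=
    setIntegral_abs_rpow_pos hΩo (hg.continuousOn.mono subset_closure) hne
      ((hgq.integrableOn_compact hΩb.isCompact_closure).mono_set subset_closure)
  have hV : 0 < μ.real Ω := measureReal_pos_of_isOpen hΩo hΩb (hne.imp fun _ h => h.1)
  rw [le_div_iff₀ (rpow_pos_of_pos hpos _), ← neg_sub, rpow_neg hV.le, mul_assoc,
    inv_mul_le_iff₀ (rpow_pos_of_pos hV _)]
  exact setIntegral_abs_rpow_rpow_div_le_of_lipschitzOnWith hΩo hΩb hΩc hq hqp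
    (hg.mono subset_closure) hg₀

end Rayleigh

theorem le_muPQ {N : ℕ} (hN : 1 ≤ N) {p q : ℝ} (hq : 1 < q) (hqp : q ≤ p)
    {Ω : Set (EuclideanSpace ℝ (Fin N))} (hΩo : IsOpen Ω)
    (hΩb : Bornology.IsBounded Ω) (hΩc : Convex ℝ Ω) (hΩne : Ω.Nonempty) :
    volume.real Ω ^ (1 - p / q) * (piP p / diam Ω) ^ p ≤ muPQ p q Ω := by
  have : Nonempty (Fin N) := Fin.pos_iff_nonempty.1 hN
  refine le_csInf ?_ ?_
  · obtain ⟨v, K, hv, hne, hv₀⟩ :=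
      exists_lipschitzWith_setIntegral_abs_rpow_mul_eq_zero (μ := volume) hΩo hΩb hΩne hq
    exact ⟨_, v, K, hv.lipschitzOnWith, hne, hv₀, rfl⟩
  · rintro _ ⟨v, K, hv, hne, hv₀, rfl⟩
    exact rpow_mul_rpow_le_setIntegral_div_of_lipschitzOnWith hΩo hΩb hΩc hq hqp hv hne hv₀

lemma div_rpow_mul_mul_div_rpow {P d D b p q n : ℝ} (hP : 0 ≤ P) (hd : 0 < d) (hD : 0 < D)
    (hb : 0 < b) (hp : p ≠ 0) (hq : q ≠ 0) :
    (P / (b ^ (1 / q - 1 / p) * D)) ^ p * (D / d) ^ (p + n * p / q - n) =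
      (b * (d / D) ^ n) ^ (1 - p / q) * (P / d) ^ p := by
  have hbp : (b ^ (1 / q - 1 / p)) ^ p = (b ^ (1 - p / q))⁻¹ := by
    rw [← rpow_mul hb.le, ← rpow_neg hb.le]
    congr 1
    field_simp
    ring
  have hdD : (D / d) ^ (p + n * p / q - n) = (D / d) ^ p * ((d / D) ^ n) ^ (1 - p / q) := by
    rw [← inv_div D d, inv_rpow (by positivity), inv_rpow (by positivity),
      ← rpow_mul (by positivity), ← rpow_neg (by positivity), ← rpow_add (by positivity)]
    congr 1
    ring
  rw [hdD, mul_rpow hb.le (by positivity), div_rpow hP (by positivity), div_rpow hP hd.le,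
    div_rpow hD.le hd.le, mul_rpow (by positivity) hD.le, hbp]
  field_simp

theorem muPQ_ge_piP_ball_diam_general {N : ℕ} (hN : 1 ≤ N) {p q : ℝ} (hq : 1 < q) (hqp : q ≤ p)
    {Ω : Set (EuclideanSpace ℝ (Fin N))} (hΩo : IsOpen Ω) (hΩb : Bornology.IsBounded Ω)
    (hΩc : Convex ℝ Ω) (hΩne : Ω.Nonempty) (c : EuclideanSpace ℝ (Fin N)) {r : ℝ} (hr : 0 < r) :
    muPQ p q Ω ≥
      (piP p / ((volume (ball c r)).toReal ^ (1 / q - 1 / p) * diam (ball c r))) ^ p *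
        (diam (ball c r) / diam Ω) ^ (p + N * p / q - N) := by
  have : Nonempty (Fin N) := Fin.pos_iff_nonempty.1 hN
  have hq₀ : 0 < q := by positivity
  have hpiP : 0 < piP p := piP_pos (hq.trans_le hqp)
  have hb : 0 < volume.real (ball c r) :=
    measureReal_pos_of_isOpen isOpen_ball isBounded_ball (nonempty_ball.2 hr)
  have hV : 0 < volume.real Ω := measureReal_pos_of_isOpen hΩo hΩb hΩne
  have hdiam : 0 < diam Ω := diam_pos (nontrivial_of_isOpen hΩo hΩne) hΩb
  have hvol : volume.real Ω ≤ volume.real (ball c r) * (diam Ω / (2 * r)) ^ (N : ℝ) := by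
    simpa using measureReal_le_measureReal_ball_mul_diam_div_pow volume hΩb c hr
  rw [← measureReal_def, diam_ball_eq c hr.le, div_rpow_mul_mul_div_rpow hpiP.le hdiam
    (by positivity) hb (hq₀.trans_le hqp).ne' hq₀.ne']
  calc (volume.real (ball c r) * (diam Ω / (2 * r)) ^ (N : ℝ)) ^ (1 - p / q) * (piP p / diam Ω) ^ p
      ≤ volume.real Ω ^ (1 - p / q) * (piP p / diam Ω) ^ p := by
        gcongr ?_ * _
        exact rpow_le_rpow_of_nonpos hV hvol (sub_nonpos.2 ((one_le_div hq₀).2 hqp))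
    _ ≤ muPQ p q Ω := le_muPQ hN hq hqp hΩo hΩb hΩc hΩne

/-- Proposition 4.6, estimate (4.4). Let `1 < q < p`. For every open
bounded convex set `Ω ⊂ ℝ^N` and every open ball `B ⊂ ℝ^N`,
`μ_{p,q}(Ω) ≥ (π_p / (|B|^(1/q - 1/p) diam B))^p · (diam B / diam Ω)^(p + Np/q - N)`. -/
theorem muPQ_ge_piP_ball_diam {N : ℕ} (hN : 2 ≤ N) (p q : ℝ) (hq : 1 < q) (hqp : q < p)
    (Ω : Set (EuclideanSpace ℝ (Fin N))) (hΩo : IsOpen Ω)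
    (hΩb : Bornology.IsBounded Ω) (hΩc : Convex ℝ Ω) (hΩne : Ω.Nonempty)
    (c : EuclideanSpace ℝ (Fin N)) (r : ℝ) (hr : 0 < r) :
    muPQ p q Ω ≥
      (piP p / ((volume (ball c r)).toReal ^ (1 / q - 1 / p) * diam (ball c r))) ^ p *
        (diam (ball c r) / diam Ω) ^ (p + N * p / q - N) :=
  muPQ_ge_piP_ball_diam_general (by omega) hq hqp.le hΩo hΩb hΩc hΩne c hr
end

section
/- Let 1 < q < p. For every c > 0, the supremum of μ_{p,q}(Ω) over all open bounded convex sets Ω ⊂ ℝ^N with diam(Ω) ≥ c equals +∞; in particular, for every M > 0 there exists an open bounded convex Ω with diam(Ω) = c and μ_{p,q}(Ω) > M, so no upper bound for μ_{p,q} in terms of the diameter alone is possible when q < p. -/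
open MeasureTheory Metric Set Real

/-! A Lipschitz function whose `q`-mean `∫ |v| ^ (q - 2) v` vanishes has the smallest `L^q` norm
among its translates `v - t`. Averaging over the values `t = v x` bounds `∫ |v| ^ q` by the mean of
`|v x - v y| ^ q` over pairs of points, and integrating the gradient along segments, which stay in
a convex set, gives a Poincaré inequality whose constant depends on the set only through its
diameter. When `q < p`, Hölder's inequality improves that constant by the factor
`|Ω| ^ (1 / q - 1 / p)`. It remains to flatten a ball around a subspace: the diameter is preserved
and the volume tends to `0`. -/

open Module AffineMap Filter
open scoped ENNReal NNReal Topology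

section Real

lemma abs_rpow_sub_two_mul_mul_self {q : ℝ} (hq : q ≠ 0) (a : ℝ) :
    |a| ^ (q - 2) * a * a = |a| ^ q := by
  rcases eq_or_ne a 0 with rfl | ha
  · simp [hq]
  · rw [mul_assoc, ← abs_mul_abs_self, ← sq, ← rpow_natCast, ← rpow_add (abs_pos.2 ha)]
    norm_num

lemma abs_abs_rpow_sub_two_mul_self_le (q a : ℝ) :
    |(|a| ^ (q - 2) * a)| ≤ |a| ^ (q - 1) := by
  rcases eq_or_ne a 0 with rfl | ha
  · simp only [abs_zero, mul_zero]
    positivity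
  · rw [abs_mul, abs_of_nonneg (by positivity), ← rpow_add_one (abs_ne_zero.2 ha)]
    exact (congrArg _ (by ring)).le

lemma abs_rpow_sub_two_mul_self_mul_le {q : ℝ} (hq : 1 ≤ q) (a b : ℝ) :
    |a| ^ (q - 2) * a * b ≤ (1 - q⁻¹) * |a| ^ q + q⁻¹ * |b| ^ q := by
  have hq₀ : q ≠ 0 := by positivity
  calc |a| ^ (q - 2) * a * b ≤ |a| ^ (q - 1) * |b| := by
        grw [le_abs_self (|a| ^ (q - 2) * a * b), abs_mul, abs_abs_rpow_sub_two_mul_self_le]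
    _ = (|a| ^ q) ^ (1 - q⁻¹) * (|b| ^ q) ^ q⁻¹ := by
        rw [rpow_rpow_inv (abs_nonneg b) hq₀, ← rpow_mul (abs_nonneg a)]
        congr 2
        field_simp
    _ ≤ (1 - q⁻¹) * |a| ^ q + q⁻¹ * |b| ^ q :=
        geom_mean_le_arith_mean2_weighted (sub_nonneg.2 (inv_le_one_of_one_le₀ hq))
          (by positivity) (by positivity) (by positivity) (by ring)

lemma abs_rpow_add_mul_le_abs_rpow {q : ℝ} (hq : 1 ≤ q) (a b : ℝ) :
    |a| ^ q + q * (|a| ^ (q - 2) * a) * (b - a) ≤ |b| ^ q := by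
  have hq₀ : 0 < q := by positivity
  have hself := abs_rpow_sub_two_mul_mul_self hq₀.ne' a
  have hyoung := mul_le_mul_of_nonneg_left (abs_rpow_sub_two_mul_self_mul_le hq a b) hq₀.le
  have hexpand : q * ((1 - q⁻¹) * |a| ^ q + q⁻¹ * |b| ^ q) = (q - 1) * |a| ^ q + |b| ^ q := by
    field_simp
  linear_combination hyoung + hexpand - q * hself

lemma tendsto_inv_mul_rpow_rpow_nhdsGT_zero {A s p : ℝ} (hA : 0 < A) (hs : 0 < s) (hp : 0 < p) :
    Tendsto (fun V : ℝ ↦ (A * V ^ s)⁻¹ ^ p) (𝓝[>] 0) atTop := by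
  have h : Tendsto (fun V : ℝ ↦ A⁻¹ * V ^ (-s)) (𝓝[>] 0) atTop :=
    (tendsto_rpow_neg_nhdsGT_zero (neg_lt_zero.2 hs)).const_mul_atTop (inv_pos.2 hA)
  refine ((tendsto_rpow_atTop hp).comp h).congr' ?_
  filter_upwards [self_mem_nhdsWithin] with V hV
  simp only [Function.comp_apply, mul_inv, rpow_neg (le_of_lt hV)]

end Real

section Measure

variable {α : Type*} [MeasurableSpace α] {μ : Measure α}

lemma rpow_lintegral_le_lintegral_rpow [IsProbabilityMeasure μ] {q : ℝ} (hq : 1 ≤ q)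
    {f : α → ℝ≥0∞} (hf : AEMeasurable f μ) :
    (∫⁻ a, f a ∂μ) ^ q ≤ ∫⁻ a, f a ^ q ∂μ := by
  have hq₀ : 0 < q := by positivity
  have h := eLpNorm'_le_eLpNorm'_of_exponent_le one_pos hq μ hf.aestronglyMeasurable
  simpa [eLpNorm'_eq_lintegral_enorm, ENNReal.rpow_inv_rpow hq₀.ne'] using
    ENNReal.rpow_le_rpow h hq₀.le

lemma integral_norm_rpow_eq_toReal_eLpNorm'_rpow {F : Type*} [NormedAddCommGroup F] {f : α → F}
    (hf : AEStronglyMeasurable f μ) {q : ℝ} (hq : 0 < q) :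
    ∫ a, ‖f a‖ ^ q ∂μ = (eLpNorm' f q μ).toReal ^ q := by
  rw [ENNReal.toReal_rpow, ← lintegral_rpow_enorm_eq_rpow_eLpNorm' hq,
    ← integral_toReal (hf.enorm.pow_const q)
      (.of_forall fun a ↦ ENNReal.rpow_lt_top_of_nonneg hq.le enorm_ne_top)]
  simp [← ENNReal.toReal_rpow]

/- The constraint is the Euler-Lagrange equation at `t = 0` of the convex function
`t ↦ ∫ |v - t| ^ q`. -/
lemma eLpNorm'_le_eLpNorm'_sub_const [IsFiniteMeasure μ] {q : ℝ} (hq : 1 ≤ q) {v : α → ℝ}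
    (hv : MemLp v (.ofReal q) μ) (h₀ : ∫ a, |v a| ^ (q - 2) * v a ∂μ = 0) (t : ℝ) :
    eLpNorm' v q μ ≤ eLpNorm' (fun a ↦ v a - t) q μ := by
  have hq₀ : 0 < q := by positivity
  have integrable_rpow {w : α → ℝ} {r : ℝ} (hw : MemLp w (.ofReal r) μ) (hr : 0 ≤ r) :
      Integrable (fun a ↦ |w a| ^ r) μ := by
    simpa [ENNReal.toReal_ofReal hr] using hw.integrable_norm_rpow'
  have hvt : MemLp (fun a ↦ v a - t) (.ofReal q) μ := hv.sub (memLp_const t)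
  have hv_int := integrable_rpow hv hq₀.le
  have hvt_int := integrable_rpow hvt hq₀.le
  have hdual_int : Integrable (fun a ↦ |v a| ^ (q - 2) * v a) μ :=
    (integrable_rpow (hv.mono_exponent (ENNReal.ofReal_le_ofReal (sub_le_self q zero_le_one)))
      (sub_nonneg.2 hq)).mono' (by have := hv.aestronglyMeasurable.aemeasurable; fun_prop)
      (.of_forall fun a ↦ abs_abs_rpow_sub_two_mul_self_le q (v a))
  have hle : ∫ a, |v a| ^ q ∂μ ≤ ∫ a, |v a - t| ^ q ∂μ := by
    calc ∫ a, |v a| ^ q ∂μ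
        = ∫ a, (|v a| ^ q + -(q * t) * (|v a| ^ (q - 2) * v a)) ∂μ := by
          rw [integral_add hv_int (hdual_int.const_mul _), integral_const_mul, h₀, mul_zero,
            add_zero]
      _ ≤ ∫ a, |v a - t| ^ q ∂μ := by
          refine integral_mono (hv_int.add (hdual_int.const_mul _)) hvt_int fun a ↦ ?_
          linear_combination abs_rpow_add_mul_le_abs_rpow hq (v a) (v a - t)
  simp only [← norm_eq_abs, integral_norm_rpow_eq_toReal_eLpNorm'_rpow hv.aestronglyMeasurable hq₀,
    integral_norm_rpow_eq_toReal_eLpNorm'_rpow hvt.aestronglyMeasurable hq₀] at hle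
  rw [rpow_le_rpow_iff ENNReal.toReal_nonneg ENNReal.toReal_nonneg hq₀] at hle
  have ne_top {w : α → ℝ} (hw : MemLp w (.ofReal q) μ) : eLpNorm' w q μ ≠ ∞ := by
    have h := hw.eLpNorm_ne_top
    rwa [eLpNorm_eq_eLpNorm' (by simpa using hq₀) ENNReal.ofReal_ne_top,
      ENNReal.toReal_ofReal hq₀.le] at h
  exact (ENNReal.toReal_le_toReal (ne_top hv) (ne_top hvt)).1 hle

lemma memLp_restrict_of_lipschitzOnWith {X : Type*} [PseudoMetricSpace X]
    [MeasurableSpace X] [OpensMeasurableSpace X] {μ : Measure X}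
    {s : Set X} (hs : MeasurableSet s) (hsb : Bornology.IsBounded s) (hμ : μ s ≠ ∞) {v : X → ℝ}
    {K : ℝ≥0} (hv : LipschitzOnWith K v s) (r : ℝ≥0∞) : MemLp v r (μ.restrict s) := by
  have : IsFiniteMeasure (μ.restrict s) := ⟨by simpa using hμ.lt_top⟩
  obtain ⟨w, hw, hvw⟩ := hv.extend_real
  obtain ⟨C, hC⟩ := (hw.isBounded_image hsb).exists_norm_le
  refine MemLp.of_bound (hv.continuousOn.aestronglyMeasurable hs) C ?_
  filter_upwards [ae_restrict_mem hs] with x hx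
  exact hvw hx ▸ hC _ (mem_image_of_mem w hx)

lemma eLpNorm'_ne_zero_of_continuousOn {X F : Type*} [TopologicalSpace X] [MeasurableSpace X]
    [OpensMeasurableSpace X] [NormedAddCommGroup F] [SecondCountableTopologyEither X F]
    {μ : Measure X} [μ.IsOpenPosMeasure] {s : Set X} (hs : IsOpen s) {v : X → F}
    (hv : ContinuousOn v s) {x : X} (hx : x ∈ s) (hvx : v x ≠ 0) {q : ℝ} (hq : 0 ≤ q) :
    eLpNorm' v q (μ.restrict s) ≠ 0 := fun h ↦
  hvx <| Measure.eqOn_open_of_ae_eq (ae_eq_zero_of_eLpNorm'_eq_zero hq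
    (hv.aestronglyMeasurable hs.measurableSet) h) hs hv continuousOn_const hx

lemma eLpNorm'_fderiv_ne_top_of_lipschitzOnWith {E : Type*} [NormedAddCommGroup E]
    [NormedSpace ℝ E] [MeasurableSpace E] [OpensMeasurableSpace E] {μ : Measure E} {s : Set E}
    (hs : IsOpen s) (hμ : μ s ≠ ∞) {v : E → ℝ} {K : ℝ≥0} (hv : LipschitzOnWith K v s) {p : ℝ}
    (hp : 0 < p) : eLpNorm' (fderiv ℝ v) p (μ.restrict s) ≠ ∞ := by
  rw [eLpNorm'_eq_lintegral_enorm]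
  refine ENNReal.rpow_ne_top_of_nonneg (by positivity) (ne_top_of_le_ne_top ?_ <|
    setLIntegral_mono' (g := fun _ ↦ (K : ℝ≥0∞) ^ p) hs.measurableSet fun x hx ↦ ?_)
  · rw [setLIntegral_const]
    exact ENNReal.mul_ne_top (by finiteness) hμ
  · gcongr
    exact enorm_le_coe.2 (norm_fderiv_le_of_lipschitzOn ℝ (hs.mem_nhds hx) hv)

lemma setIntegral_eq_zero_of_odd {G F : Type*} [AddGroup G] [MeasurableSpace G] [MeasurableNeg G]
    [NormedAddCommGroup F] [NormedSpace ℝ F] {μ : Measure G} [μ.IsNegInvariant] {f : G → F}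
    {s : Set G} (hf : f.Odd) (hs : -s = s) :
    ∫ x in s, f x ∂μ = 0 := by
  have h : ∫ x in -s, f (-x) ∂μ = ∫ x in s, f x ∂μ :=
    (Measure.measurePreserving_neg μ).setIntegral_preimage_emb
      (MeasurableEquiv.neg G).measurableEmbedding f s
  simp only [hf _, integral_neg, hs] at h
  have : IsAddTorsionFree F := .of_isTorsionFree ℝ F
  exact self_eq_neg.1 h.symm

end Measure

section Segment

variable {E : Type*} [NormedAddCommGroup E] [NormedSpace ℝ E]

/-- `g` is an upper gradient of `v` along the segments of `s`: it controls the increment of `v`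
between any two points of `s` through the mean of `g` over the segment joining them. This is the
only way in which the gradient enters the Poincaré inequality. -/
def IsUpperGradientOn {F : Type*} [PseudoEMetricSpace F] (g : E → ℝ≥0∞) (v : E → F) (s : Set E) :
    Prop :=
  ∀ x ∈ s, ∀ y ∈ s, edist (v x) (v y) ≤ edist x y * ∫⁻ t in Ioo (0 : ℝ) 1, g (lineMap x y t)

open Classical in
/-- The norm of the derivative of a `K`-Lipschitz function `v`, replaced by `K` wherever `fderiv`
takes its junk value. Unlike the norm of `fderiv`, it is an upper gradient along segments that
meet the null set where `v` is not differentiable. -/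
noncomputable def lipschitzGradient (v : E → ℝ) (K : ℝ≥0) (z : E) : ℝ≥0∞ :=
  if DifferentiableAt ℝ v z then ‖fderiv ℝ v z‖ₑ else K

lemma enorm_deriv_comp_lineMap_le {v : E → ℝ} {K : ℝ≥0} {x y : E}
    (hv : LipschitzOnWith (K * nndist x y) (fun t : ℝ ↦ v (lineMap x y t)) (Icc 0 1))
    {t : ℝ} (ht : t ∈ Ioo (0 : ℝ) 1) :
    ‖deriv (fun t : ℝ ↦ v (lineMap x y t)) t‖ₑ
      ≤ edist x y * lipschitzGradient v K (lineMap x y t) := by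
  unfold lipschitzGradient
  split_ifs with hd
  · have hcomp : deriv (fun t : ℝ ↦ v (lineMap x y t)) t = fderiv ℝ v (lineMap x y t) (y - x) :=
      (hd.hasFDerivAt.comp_hasDerivAt t hasDerivAt_lineMap).deriv
    rw [hcomp, edist_comm, edist_eq_enorm_sub, mul_comm]
    exact (fderiv ℝ v (lineMap x y t)).le_opENorm (y - x)
  · have h := norm_deriv_le_of_lipschitzOn (Icc_mem_nhds ht.1 ht.2) hv
    rw [edist_nndist, mul_comm, ← ENNReal.coe_mul]
    exact enorm_le_coe.2 h

lemma isUpperGradientOn_lipschitzGradient {v : E → ℝ} {K : ℝ≥0} {s : Set E}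
    (hv : LipschitzOnWith K v s) (hs : Convex ℝ s) :
    IsUpperGradientOn (lipschitzGradient v K) v s := by
  intro x hx y hy
  have hlip : LipschitzOnWith (K * nndist x y) (fun t : ℝ ↦ v (lineMap x y t)) (Icc 0 1) :=
    hv.comp (lipschitzWith_lineMap x y).lipschitzOnWith fun t ht ↦ hs.lineMap_mem hx hy ht
  have hftc : ∫ t in (0 : ℝ)..1, deriv (fun t : ℝ ↦ v (lineMap x y t)) t = v y - v x := by
    rw [← uIcc_of_le zero_le_one] at hlip
    simpa using hlip.absolutelyContinuousOnInterval.integral_deriv_eq_sub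
  calc edist (v x) (v y)
      = ‖∫ t in Ioo (0 : ℝ) 1, deriv (fun t : ℝ ↦ v (lineMap x y t)) t‖ₑ := by
        rw [edist_comm, edist_eq_enorm_sub, ← hftc, intervalIntegral.integral_of_le zero_le_one,
          integral_Ioc_eq_integral_Ioo]
    _ ≤ ∫⁻ t in Ioo (0 : ℝ) 1, ‖deriv (fun t : ℝ ↦ v (lineMap x y t)) t‖ₑ :=
        enorm_integral_le_lintegral_enorm _
    _ ≤ ∫⁻ t in Ioo (0 : ℝ) 1, edist x y * lipschitzGradient v K (lineMap x y t) :=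
        setLIntegral_mono' measurableSet_Ioo fun t ht ↦ enorm_deriv_comp_lineMap_le hlip ht
    _ = edist x y * ∫⁻ t in Ioo (0 : ℝ) 1, lipschitzGradient v K (lineMap x y t) :=
        lintegral_const_mul' _ _ (edist_ne_top x y)

variable [MeasurableSpace E] [BorelSpace E]

lemma measurable_lipschitzGradient (v : E → ℝ) (K : ℝ≥0) : Measurable (lipschitzGradient v K) :=
  Measurable.ite (measurableSet_of_differentiableAt ℝ v) (measurable_fderiv ℝ v).enorm
    measurable_const

variable [FiniteDimensional ℝ E] (μ : Measure E) [μ.IsAddHaarMeasure]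

lemma ae_enorm_fderiv_eq_lipschitzGradient {v : E → ℝ} {K : ℝ≥0} {s : Set E}
    (hv : LipschitzOnWith K v s) (hs : IsOpen s) :
    ∀ᵐ z ∂μ.restrict s, ‖fderiv ℝ v z‖ₑ = lipschitzGradient v K z := by
  filter_upwards [hv.ae_differentiableWithinAt hs.measurableSet, ae_restrict_mem hs.measurableSet]
    with z hvz hz
  exact (if_pos (hvz.differentiableAt (hs.mem_nhds hz))).symm

lemma lintegral_comp_lineMap (f : E → ℝ≥0∞) (x : E) {t : ℝ} (ht : t ≠ 0) :
    ∫⁻ y, f (lineMap x y t) ∂μ = .ofReal |(t ^ finrank ℝ E)⁻¹| * ∫⁻ y, f y ∂μ := by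
  have hlineMap (y : E) : lineMap x y t = (x - t • x) + t • y := by
    rw [lineMap_apply_module']
    module
  calc ∫⁻ y, f (lineMap x y t) ∂μ
      = ∫⁻ z, f ((x - t • x) + z) ∂(μ.map (t • ·)) := by
        simp only [hlineMap, (measurableEmbedding_const_smul₀ ht).lintegral_map]
    _ = .ofReal |(t ^ finrank ℝ E)⁻¹| * ∫⁻ y, f y ∂μ := by
        rw [Measure.map_addHaar_smul _ ht, lintegral_smul_measure, lintegral_add_left_eq_self,
          smul_eq_mul]

lemma setLIntegral_comp_lineMap_le {s : Set E} (hs : Convex ℝ s) (hsm : MeasurableSet s)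
    (f : E → ℝ≥0∞) {x : E} (hx : x ∈ s) {t : ℝ} (ht : t ∈ Ioc (0 : ℝ) 1) :
    ∫⁻ y in s, f (lineMap x y t) ∂μ ≤ .ofReal |(t ^ finrank ℝ E)⁻¹| * ∫⁻ y in s, f y ∂μ := by
  calc ∫⁻ y in s, f (lineMap x y t) ∂μ
      = ∫⁻ y in s, s.indicator f (lineMap x y t) ∂μ :=
        setLIntegral_congr_fun hsm fun y hy ↦
          (indicator_of_mem (hs.lineMap_mem hx hy (Ioc_subset_Icc_self ht)) f).symm
    _ ≤ ∫⁻ y, s.indicator f (lineMap x y t) ∂μ := setLIntegral_le_lintegral _ _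
    _ = .ofReal |(t ^ finrank ℝ E)⁻¹| * ∫⁻ y in s, f y ∂μ := by
        rw [lintegral_comp_lineMap μ _ x ht.1.ne', lintegral_indicator hsm]

lemma lintegral_lintegral_comp_lineMap_le_of_half_le {s : Set E} (hs : Convex ℝ s)
    (hsm : MeasurableSet s) (f : E → ℝ≥0∞) {t : ℝ} (ht : t ∈ Icc (1 / 2 : ℝ) 1) :
    ∫⁻ x in s, ∫⁻ y in s, f (lineMap x y t) ∂μ ∂μ
      ≤ 2 ^ finrank ℝ E * μ s * ∫⁻ y in s, f y ∂μ := by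
  have ht₀ : 0 < t := one_half_pos.trans_le ht.1
  have hfactor : ENNReal.ofReal |(t ^ finrank ℝ E)⁻¹| ≤ 2 ^ finrank ℝ E := by
    rw [abs_of_pos (by positivity), ← inv_pow, ENNReal.ofReal_pow (by positivity)]
    gcongr
    exact ENNReal.ofReal_le_of_le_toReal (inv_le_of_inv_le₀ two_pos (by simpa using ht.1))
  calc ∫⁻ x in s, ∫⁻ y in s, f (lineMap x y t) ∂μ ∂μ
      ≤ ∫⁻ x in s, 2 ^ finrank ℝ E * ∫⁻ y in s, f y ∂μ ∂μ :=
        setLIntegral_mono' hsm fun x hx ↦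
          (setLIntegral_comp_lineMap_le μ hs hsm f hx ⟨ht₀, ht.2⟩).trans (by gcongr)
    _ = 2 ^ finrank ℝ E * μ s * ∫⁻ y in s, f y ∂μ := by
        rw [setLIntegral_const, mul_right_comm]

lemma lintegral_lintegral_comp_lineMap_le {s : Set E} (hs : Convex ℝ s) (hsm : MeasurableSet s)
    {f : E → ℝ≥0∞} (hf : Measurable f) {t : ℝ} (ht : t ∈ Icc (0 : ℝ) 1) :
    ∫⁻ x in s, ∫⁻ y in s, f (lineMap x y t) ∂μ ∂μ
      ≤ 2 ^ finrank ℝ E * μ s * ∫⁻ y in s, f y ∂μ := by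
  rcases le_total (1 / 2) t with h | h
  · exact lintegral_lintegral_comp_lineMap_le_of_half_le μ hs hsm f ⟨h, ht.2⟩
  -- The segment from `x` to `y` at time `t` is the one from `y` to `x` at time `1 - t ≥ 1 / 2`.
  · have hmeas : Measurable (Function.uncurry fun x y ↦ f (lineMap x y t)) :=
      hf.comp (continuous_fst.lineMap continuous_snd continuous_const).measurable
    rw [lintegral_lintegral_swap hmeas.aemeasurable]
    simp only [← lineMap_apply_one_sub _ _ t]
    exact lintegral_lintegral_comp_lineMap_le_of_half_le μ hs hsm f
      ⟨by linarith, by linarith [ht.1]⟩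

lemma lintegral_lintegral_lintegral_comp_lineMap_le {s : Set E} (hs : Convex ℝ s)
    (hsm : MeasurableSet s) {f : E → ℝ≥0∞} (hf : Measurable f) :
    ∫⁻ x in s, ∫⁻ y in s, (∫⁻ t in Ioo (0 : ℝ) 1, f (lineMap x y t)) ∂μ ∂μ
      ≤ 2 ^ finrank ℝ E * μ s * ∫⁻ y in s, f y ∂μ := by
  have hmeas : Measurable fun z : (E × ℝ) × E ↦ f (lineMap z.1.1 z.2 z.1.2) :=
    hf.comp (Continuous.lineMap (by fun_prop) (by fun_prop) (by fun_prop)).measurable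
  calc ∫⁻ x in s, ∫⁻ y in s, (∫⁻ t in Ioo (0 : ℝ) 1, f (lineMap x y t)) ∂μ ∂μ
      = ∫⁻ x in s, (∫⁻ t in Ioo (0 : ℝ) 1, (∫⁻ y in s, f (lineMap x y t) ∂μ)) ∂μ :=
        lintegral_congr fun x ↦ lintegral_lintegral_swap <|
          (hmeas.comp (by fun_prop : Measurable fun z : E × ℝ ↦ ((x, z.2), z.1))).aemeasurable
    _ = ∫⁻ t in Ioo (0 : ℝ) 1, (∫⁻ x in s, ∫⁻ y in s, f (lineMap x y t) ∂μ ∂μ) :=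
        lintegral_lintegral_swap hmeas.lintegral_prod_right'.aemeasurable
    _ ≤ ∫⁻ _ in Ioo (0 : ℝ) 1, 2 ^ finrank ℝ E * μ s * ∫⁻ y in s, f y ∂μ :=
        setLIntegral_mono' measurableSet_Ioo fun t ht ↦
          lintegral_lintegral_comp_lineMap_le μ hs hsm hf (Ioo_subset_Icc_self ht)
    _ = 2 ^ finrank ℝ E * μ s * ∫⁻ y in s, f y ∂μ := by simp

end Segment

section Poincare

variable {E : Type*} [NormedAddCommGroup E] [NormedSpace ℝ E] [MeasurableSpace E] [BorelSpace E]
  [FiniteDimensional ℝ E] (μ : Measure E) [μ.IsAddHaarMeasure]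

lemma lintegral_lintegral_edist_rpow_le {F : Type*} [PseudoEMetricSpace F] {q : ℝ} (hq : 1 ≤ q)
    {s : Set E} (hs : Convex ℝ s) (hsm : MeasurableSet s) (hsb : Bornology.IsBounded s)
    {g : E → ℝ≥0∞} (hg : Measurable g) {v : E → F} (hgv : IsUpperGradientOn g v s) :
    ∫⁻ x in s, ∫⁻ y in s, edist (v x) (v y) ^ q ∂μ ∂μ
      ≤ ediam s ^ q * (2 ^ finrank ℝ E * μ s * ∫⁻ y in s, g y ^ q ∂μ) := by
  have hq₀ : 0 ≤ q := by positivity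
  have : IsProbabilityMeasure (volume.restrict (Ioo (0 : ℝ) 1)) := ⟨by simp⟩
  have hpointwise {x y : E} (hx : x ∈ s) (hy : y ∈ s) : edist (v x) (v y) ^ q
      ≤ ediam s ^ q * ∫⁻ t in Ioo (0 : ℝ) 1, g (lineMap x y t) ^ q := by
    have hgm : Measurable fun t : ℝ ↦ g (lineMap x y t) :=
      hg.comp (continuous_const.lineMap continuous_const continuous_id).measurable
    grw [hgv x hx y hy, ENNReal.mul_rpow_of_nonneg _ _ hq₀, edist_le_ediam_of_mem hx hy,
      rpow_lintegral_le_lintegral_rpow hq hgm.aemeasurable]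
  have hconst : ediam s ^ q ≠ ∞ := ENNReal.rpow_ne_top_of_nonneg hq₀ hsb.ediam_ne_top
  calc ∫⁻ x in s, ∫⁻ y in s, edist (v x) (v y) ^ q ∂μ ∂μ
      ≤ ∫⁻ x in s, ∫⁻ y in s,
          ediam s ^ q * (∫⁻ t in Ioo (0 : ℝ) 1, g (lineMap x y t) ^ q) ∂μ ∂μ :=
        setLIntegral_mono' hsm fun x hx ↦ setLIntegral_mono' hsm fun y hy ↦ hpointwise hx hy
    _ = ediam s ^ q * ∫⁻ x in s, ∫⁻ y in s,
          (∫⁻ t in Ioo (0 : ℝ) 1, g (lineMap x y t) ^ q) ∂μ ∂μ := by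
        simp only [lintegral_const_mul' _ _ hconst]
    _ ≤ ediam s ^ q * (2 ^ finrank ℝ E * μ s * ∫⁻ y in s, g y ^ q ∂μ) := by
        grw [lintegral_lintegral_lintegral_comp_lineMap_le μ hs hsm (hg.pow_const q)]

lemma eLpNorm'_le_ediam_mul_eLpNorm'_of_isUpperGradientOn {q : ℝ} (hq : 1 ≤ q) {s : Set E}
    (hs : Convex ℝ s) (hsm : MeasurableSet s) (hsb : Bornology.IsBounded s) {g : E → ℝ≥0∞}
    (hg : Measurable g) {v : E → ℝ} (hgv : IsUpperGradientOn g v s)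
    (hv : MemLp v (.ofReal q) (μ.restrict s)) (h₀ : ∫ x in s, |v x| ^ (q - 2) * v x ∂μ = 0) :
    eLpNorm' v q (μ.restrict s)
      ≤ 2 ^ (finrank ℝ E / q) * ediam s * eLpNorm' g q (μ.restrict s) := by
  have hq₀ : 0 < q := by positivity
  rcases eq_or_ne (μ s) 0 with hs₀ | hs₀
  · simp [Measure.restrict_eq_zero.2 hs₀, eLpNorm'_measure_zero_of_pos hq₀]
  have hs_top : μ s ≠ ∞ := hsb.measure_lt_top.ne
  have : IsFiniteMeasure (μ.restrict s) := ⟨by simpa using hs_top.lt_top⟩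
  have hle (x : E) : ∫⁻ y in s, ‖v y‖ₑ ^ q ∂μ ≤ ∫⁻ y in s, edist (v x) (v y) ^ q ∂μ := by
    have h := ENNReal.rpow_le_rpow (eLpNorm'_le_eLpNorm'_sub_const hq hv h₀ (v x)) hq₀.le
    simpa only [← lintegral_rpow_enorm_eq_rpow_eLpNorm' hq₀, ← edist_eq_enorm_sub,
      edist_comm (v x)] using h
  have hmul : μ s * ∫⁻ y in s, ‖v y‖ₑ ^ q ∂μ
      ≤ μ s * (2 ^ finrank ℝ E * ediam s ^ q * ∫⁻ y in s, g y ^ q ∂μ) :=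
    calc μ s * ∫⁻ y in s, ‖v y‖ₑ ^ q ∂μ
        = ∫⁻ _ in s, ∫⁻ y in s, ‖v y‖ₑ ^ q ∂μ ∂μ := by rw [setLIntegral_const, mul_comm]
      _ ≤ ∫⁻ x in s, ∫⁻ y in s, edist (v x) (v y) ^ q ∂μ ∂μ := lintegral_mono hle
      _ ≤ ediam s ^ q * (2 ^ finrank ℝ E * μ s * ∫⁻ y in s, g y ^ q ∂μ) :=
          lintegral_lintegral_edist_rpow_le μ hq hs hsm hsb hg hgv
      _ = μ s * (2 ^ finrank ℝ E * ediam s ^ q * ∫⁻ y in s, g y ^ q ∂μ) := by ring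
  rw [ENNReal.mul_le_mul_iff_right hs₀ hs_top] at hmul
  have hroot := ENNReal.rpow_le_rpow hmul (inv_nonneg.2 hq₀.le)
  simpa only [eLpNorm'_eq_lintegral_enorm, enorm_eq_self, one_div,
    ENNReal.mul_rpow_of_nonneg _ _ (inv_nonneg.2 hq₀.le), ENNReal.rpow_rpow_inv hq₀.ne',
    ← ENNReal.rpow_natCast_mul, ← div_eq_mul_inv] using hroot

lemma eLpNorm'_le_ediam_mul_eLpNorm'_fderiv {p q : ℝ} (hq : 1 ≤ q) (hqp : q ≤ p) {s : Set E}
    (hs : Convex ℝ s) (hso : IsOpen s) (hsb : Bornology.IsBounded s) {v : E → ℝ} {K : ℝ≥0}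
    (hv : LipschitzOnWith K v s) (h₀ : ∫ x in s, |v x| ^ (q - 2) * v x ∂μ = 0) :
    eLpNorm' v q (μ.restrict s)
      ≤ 2 ^ (finrank ℝ E / q) * ediam s * μ s ^ (1 / q - 1 / p)
        * eLpNorm' (fderiv ℝ v) p (μ.restrict s) := by
  have hholder := eLpNorm'_le_eLpNorm'_mul_rpow_measure_univ (μ := μ.restrict s) (by positivity)
    hqp (measurable_fderiv ℝ v).aestronglyMeasurable
  rw [Measure.restrict_apply_univ] at hholder
  calc eLpNorm' v q (μ.restrict s)
      ≤ 2 ^ (finrank ℝ E / q) * ediam s * eLpNorm' (lipschitzGradient v K) q (μ.restrict s) :=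
        eLpNorm'_le_ediam_mul_eLpNorm'_of_isUpperGradientOn μ hq hs hso.measurableSet hsb
          (measurable_lipschitzGradient v K) (isUpperGradientOn_lipschitzGradient hv hs)
          (memLp_restrict_of_lipschitzOnWith hso.measurableSet hsb hsb.measure_lt_top.ne hv _) h₀
    _ = 2 ^ (finrank ℝ E / q) * ediam s * eLpNorm' (fderiv ℝ v) q (μ.restrict s) := by
        congr 1
        exact (eLpNorm'_congr_enorm_ae (ae_enorm_fderiv_eq_lipschitzGradient μ hv hso)).symm
    _ ≤ 2 ^ (finrank ℝ E / q) * ediam s * μ s ^ (1 / q - 1 / p)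
        * eLpNorm' (fderiv ℝ v) p (μ.restrict s) := by
        grw [hholder]
        exact (by ring : _ = _).le

end Poincare

section Eigenvalue

variable {N : ℕ} {p q : ℝ} {Ω : Set (EuclideanSpace ℝ (Fin N))}

lemma rayleighQuot_eq_rpow_div {v : EuclideanSpace ℝ (Fin N) → ℝ}
    (hv : AEStronglyMeasurable v (volume.restrict Ω)) (hp : 0 < p) (hq : 0 < q) :
    rayleighQuot p q Ω v = ((eLpNorm' (fderiv ℝ v) p (volume.restrict Ω)).toReal
      / (eLpNorm' v q (volume.restrict Ω)).toReal) ^ p := by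
  simp only [rayleighQuot, ← norm_eq_abs]
  rw [integral_norm_rpow_eq_toReal_eLpNorm'_rpow (measurable_fderiv ℝ v).aestronglyMeasurable hp,
    integral_norm_rpow_eq_toReal_eLpNorm'_rpow hv hq, ← rpow_mul ENNReal.toReal_nonneg,
    mul_div_cancel₀ p hq.ne', div_rpow ENNReal.toReal_nonneg ENNReal.toReal_nonneg]

lemma inv_rpow_le_rayleighQuot (hq : 1 ≤ q) (hqp : q ≤ p) (hc : Convex ℝ Ω) (ho : IsOpen Ω)
    (hb : Bornology.IsBounded Ω) {v : EuclideanSpace ℝ (Fin N) → ℝ} {K : ℝ≥0}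
    (hv : LipschitzOnWith K v Ω) {x : EuclideanSpace ℝ (Fin N)} (hx : x ∈ Ω) (hvx : v x ≠ 0)
    (h₀ : ∫ x in Ω, |v x| ^ (q - 2) * v x = 0) :
    (2 ^ (N / q) * diam Ω * volume.real Ω ^ (1 / q - 1 / p))⁻¹ ^ p ≤ rayleighQuot p q Ω v := by
  have hq₀ : 0 < q := by positivity
  have hp₀ : 0 < p := hq₀.trans_le hqp
  have hΩ : volume Ω ≠ ∞ := hb.measure_lt_top.ne
  have hs : 0 ≤ 1 / q - 1 / p := sub_nonneg.2 (one_div_le_one_div_of_le hq₀ hqp)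
  have hgrad := eLpNorm'_fderiv_ne_top_of_lipschitzOnWith (μ := volume) ho hΩ hv hp₀
  have hpoincare := eLpNorm'_le_ediam_mul_eLpNorm'_fderiv volume hq hqp hc ho hb hv h₀
  rw [finrank_euclideanSpace_fin] at hpoincare
  have hbound : (2 : ℝ≥0∞) ^ (N / q) * ediam Ω * volume Ω ^ (1 / q - 1 / p)
      * eLpNorm' (fderiv ℝ v) p (volume.restrict Ω) ≠ ∞ := by
    have := hb.ediam_ne_top
    finiteness
  have hpos : 0 < (eLpNorm' v q (volume.restrict Ω)).toReal :=
    ENNReal.toReal_pos (eLpNorm'_ne_zero_of_continuousOn ho hv.continuousOn hx hvx hq₀.le)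
      (ne_top_of_le_ne_top hbound hpoincare)
  have hreal := ENNReal.toReal_mono hbound hpoincare
  simp only [ENNReal.toReal_mul, ← ENNReal.toReal_rpow, ENNReal.toReal_ofNat] at hreal
  rw [rayleighQuot_eq_rpow_div (hv.continuousOn.aestronglyMeasurable ho.measurableSet) hp₀ hq₀]
  gcongr
  have hconst : 0 < 2 ^ (N / q) * diam Ω * volume.real Ω ^ (1 / q - 1 / p) :=
    pos_of_mul_pos_left (hpos.trans_le hreal) ENNReal.toReal_nonneg
  exact (le_div_iff₀ hpos).2 ((inv_mul_le_iff₀ hconst).2 hreal)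

lemma inv_rpow_le_muPQ [NeZero N] (hq : 1 ≤ q) (hqp : q ≤ p) (hc : Convex ℝ Ω) (ho : IsOpen Ω)
    (hb : Bornology.IsBounded Ω) (hneg : -Ω = Ω) (hne : Ω.Nonempty) :
    (2 ^ (N / q) * diam Ω * volume.real Ω ^ (1 / q - 1 / p))⁻¹ ^ p ≤ muPQ p q Ω := by
  refine le_csInf ?_ ?_
  · obtain ⟨x, hxΩ, hx : x ≠ 0⟩ :=
      (dense_compl_singleton (0 : EuclideanSpace ℝ (Fin N))).inter_open_nonempty Ω ho hne
    obtain ⟨L, -, hLx⟩ := exists_dual_vector ℝ x (norm_ne_zero_iff.2 hx)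
    refine ⟨_, L, _, L.lipschitz.lipschitzOnWith, ⟨x, hxΩ, by simpa [hLx] using hx⟩, ?_, rfl⟩
    exact setIntegral_eq_zero_of_odd (fun _ ↦ by simp) hneg
  · rintro _ ⟨v, K, hv, ⟨x, hx, hvx⟩, h₀, rfl⟩
    exact inv_rpow_le_rayleighQuot hq hqp hc ho hb (hv.mono subset_closure) hx hvx h₀

end Eigenvalue

section ThinBall

lemma exists_submodule_ne_bot_ne_top {K V : Type*} [DivisionRing K] [AddCommGroup V] [Module K V]
    (h : 1 < finrank K V) : ∃ S : Submodule K V, S ≠ ⊥ ∧ S ≠ ⊤ := by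
  have : Nontrivial V := nontrivial_of_finrank_pos (one_pos.trans h)
  have hsimple : ¬ IsSimpleModule K V := fun hV ↦
    h.ne' (isSimpleModule_iff_finrank_eq_one.1 hV)
  by_contra! hS
  exact hsimple ((isSimpleModule_iff ..).2 ⟨fun S ↦ or_iff_not_imp_left.2 (hS S)⟩)

variable {E : Type*} [NormedAddCommGroup E] [NormedSpace ℝ E] {S : Submodule ℝ E} {r ε : ℝ}

/-- The part of the ball of radius `r` around the origin within distance `ε` of the subspace `S`:
a symmetric convex set whose diameter does not depend on `ε`, while its volume vanishes as
`ε → 0`. -/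
def thinBall (S : Submodule ℝ E) (r ε : ℝ) : Set E := ball 0 r ∩ thickening ε (S : Set E)

lemma isOpen_thinBall : IsOpen (thinBall S r ε) := isOpen_ball.inter isOpen_thickening

lemma isBounded_thinBall : Bornology.IsBounded (thinBall S r ε) :=
  isBounded_ball.subset inter_subset_left

lemma convex_thinBall : Convex ℝ (thinBall S r ε) :=
  (convex_ball 0 r).inter (S.convex.thickening ε)

lemma neg_thinBall : -thinBall S r ε = thinBall S r ε := by
  simp [thinBall, neg_thickening]

lemma ball_inter_subset_thinBall (hε : 0 < ε) : ball 0 r ∩ (S : Set E) ⊆ thinBall S r ε :=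
  inter_subset_inter_right _ (self_subset_thickening hε _)

lemma nonempty_thinBall (hr : 0 < r) (hε : 0 < ε) : (thinBall S r ε).Nonempty :=
  ⟨0, ball_inter_subset_thinBall hε ⟨mem_ball_self hr, S.zero_mem⟩⟩

lemma diam_thinBall (hS : S ≠ ⊥) (hr : 0 ≤ r) (hε : 0 < ε) : diam (thinBall S r ε) = 2 * r := by
  have : Nontrivial S := Submodule.nontrivial_iff_ne_bot.2 hS
  refine le_antisymm ((diam_mono inter_subset_left isBounded_ball).trans (diam_ball hr)) ?_
  calc 2 * r = diam ((↑) '' ball (0 : S) r : Set E) := by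
        rw [isometry_subtype_coe.diam_image, diam_ball_eq 0 hr]
    _ ≤ diam (thinBall S r ε) := by
        refine diam_mono ?_ isBounded_thinBall
        rintro _ ⟨y, hy, rfl⟩
        exact ball_inter_subset_thinBall hε ⟨by simpa using hy, y.2⟩

lemma tendsto_measureReal_thinBall [MeasurableSpace E] [BorelSpace E] [FiniteDimensional ℝ E]
    (μ : Measure E) [μ.IsAddHaarMeasure] (hS : S ≠ ⊤) (hr : 0 < r) :
    Tendsto (fun ε ↦ μ.real (thinBall S r ε)) (𝓝[>] 0) (𝓝[>] 0) := by
  refine tendsto_nhdsWithin_iff.2 ⟨?_, ?_⟩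
  · have : IsFiniteMeasure (μ.restrict (ball 0 r)) := ⟨by simpa using measure_ball_lt_top⟩
    have hS₀ : μ.restrict (ball 0 r) S = 0 :=
      Measure.absolutelyContinuous_of_le Measure.restrict_le_self (Measure.addHaar_submodule μ S hS)
    have h := tendsto_measure_thickening_of_isClosed (μ := μ.restrict (ball 0 r)) (s := S)
      ⟨1, one_pos, measure_ne_top _ _⟩ S.closed_of_finiteDimensional
    simp only [hS₀, Measure.restrict_apply isOpen_thickening.measurableSet, inter_comm] at h
    exact (ENNReal.tendsto_toReal ENNReal.zero_ne_top).comp h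
  · filter_upwards [self_mem_nhdsWithin] with ε hε
    exact ENNReal.toReal_pos (isOpen_thinBall.measure_pos μ (nonempty_thinBall hr hε)).ne'
      isBounded_thinBall.measure_lt_top.ne

end ThinBall

theorem sup_muPQ_diam_eq_top_general {N : ℕ} (hN : 2 ≤ N) {p q : ℝ} (hq : 1 ≤ q) (hqp : q < p)
    {c : ℝ} (hc : 0 < c) (M : ℝ) : ∃ Ω : Set (EuclideanSpace ℝ (Fin N)),
      IsOpen Ω ∧ Bornology.IsBounded Ω ∧ Convex ℝ Ω ∧ Ω.Nonempty ∧
      diam Ω = c ∧ M < muPQ p q Ω := by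
  have hq₀ : 0 < q := by positivity
  have hp₀ : 0 < p := hq₀.trans hqp
  have : NeZero N := ⟨by positivity⟩
  have hs : 0 < 1 / q - 1 / p := sub_pos.2 (one_div_lt_one_div_of_lt hq₀ hqp)
  obtain ⟨S, hS_bot, hS_top⟩ :=
    exists_submodule_ne_bot_ne_top (K := ℝ) (V := EuclideanSpace ℝ (Fin N))
      (by rwa [finrank_euclideanSpace_fin])
  have hlim := (tendsto_inv_mul_rpow_rpow_nhdsGT_zero (A := 2 ^ (N / q) * c) (by positivity) hs
    hp₀).comp (tendsto_measureReal_thinBall volume hS_top (half_pos hc))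
  obtain ⟨ε, hMε, hε : 0 < ε⟩ :=
    ((hlim.eventually_gt_atTop M).and self_mem_nhdsWithin).exists
  have hdiam : diam (thinBall S (c / 2) ε) = c := by
    rw [diam_thinBall hS_bot (half_pos hc).le hε, mul_div_cancel₀ c two_ne_zero]
  have hne : (thinBall S (c / 2) ε).Nonempty := nonempty_thinBall (half_pos hc) hε
  have hle := inv_rpow_le_muPQ hq hqp.le convex_thinBall isOpen_thinBall isBounded_thinBall
    neg_thinBall hne
  rw [hdiam] at hle
  exact ⟨_, isOpen_thinBall, isBounded_thinBall, convex_thinBall, hne, hdiam, hMε.trans_le hle⟩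

/-- Section 4.2. Let `1 < q < p`. For every `c > 0`, the supremum of
`μ_{p,q}(Ω)` over open bounded convex sets `Ω ⊂ ℝ^N` with `diam Ω ≥ c` is `+∞`:
for every `M > 0` there is an open bounded convex `Ω` with `diam Ω = c` and
`μ_{p,q}(Ω) > M`. -/
theorem sup_muPQ_diam_eq_top {N : ℕ} (hN : 2 ≤ N) (p q : ℝ) (hq : 1 < q) (hqp : q < p)
    (c : ℝ) (hc : 0 < c) :
    ∀ M : ℝ, 0 < M → ∃ Ω : Set (EuclideanSpace ℝ (Fin N)),
      IsOpen Ω ∧ Bornology.IsBounded Ω ∧ Convex ℝ Ω ∧ Ω.Nonempty ∧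
      diam Ω = c ∧ M < muPQ p q Ω := by
  exact fun M _ ↦ sup_muPQ_diam_eq_top_general hN hq.le hqp hc M
end
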